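/- Let (A, 𝔪, k) be a local complete intersection of codimension c, let M be a finitely generated A-module, and let t ∈ {1, …, c}. Suppose that for every finitely generated A-module N of complexity t there exist an odd number q and an even number n > dim A − depth M such that Ext^{n}_A(M,N) = Ext^{n+q}_A(M,N) = ⋯ = Ext^{n+(c−t)q}_A(M,N) = 0. Then cx M < t. -/

import Mathlib

open CategoryTheory Opposite Filter IsLocalRing

universe u

namespace ComplexityTest

variable (A : Type u) [CommRing A] [IsLocalRing A]

structure MinFreeRes (M : Type u) [AddCommGroup M] [Module A M] : Type u where
  b : ℕ → ℕ
  d : (n : ℕ) → ((Fin (b (n + 1)) → A) →ₗ[A] (Fin (b n) → A))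
  aug : (Fin (b 0) → A) →ₗ[A] M
  aug_surjective : Function.Surjective aug
  exact_zero : Function.Exact (d 0) aug
  exact_succ : ∀ n, Function.Exact (d (n + 1)) (d n)
  minimal : ∀ n x i, d n x i ∈ maximalIdeal A

variable (M : Type u) [AddCommGroup M] [Module A M]

def HasComplexityLE (t : ℕ) : Prop :=
  ∃ (R : MinFreeRes A M) (a : ℝ), ∀ᶠ n : ℕ in atTop, (R.b n : ℝ) ≤ a * (n : ℝ) ^ ((t : ℤ) - 1)

noncomputable def complexity : ℕ∞ :=
  sInf {c : ℕ∞ | ∃ t : ℕ, c = t ∧ HasComplexityLE A M t}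

def HasProjDimLE (t : ℕ) : Prop :=
  ∃ R : MinFreeRes A M, ∀ i, t < i → R.b i = 0

noncomputable def projDim : ℕ∞ :=
  sInf {c : ℕ∞ | ∃ t : ℕ, c = t ∧ HasProjDimLE A M t}

def HasFiniteProjDim : Prop :=
  ∃ t : ℕ, HasProjDimLE A M t

def IsSyzygyOf (S : Type u) [AddCommGroup S] [Module A S] : ℕ → Prop
  | 0 => Nonempty (S ≃ₗ[A] M)
  | 1 => ∃ R : MinFreeRes A M, Nonempty (S ≃ₗ[A] (LinearMap.ker R.aug))
  | (n + 2) => ∃ R : MinFreeRes A M, Nonempty (S ≃ₗ[A] (LinearMap.ker (R.d n)))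

variable {A M} in
def IsSES {K S : Type u} [AddCommGroup K] [Module A K] [AddCommGroup S] [Module A S]
    (f : M →ₗ[A] K) (g : K →ₗ[A] S) : Prop :=
  Function.Injective f ∧ Function.Exact f g ∧ Function.Surjective g

noncomputable def extModule (n : ℕ) (N : Type u) [AddCommGroup N] [Module A N] :
    ModuleCat A :=
  ((_root_.Ext A (ModuleCat.{u} A) n).obj (op (ModuleCat.of A M))).obj (ModuleCat.of A N)

def extVanish (n : ℕ) (N : Type u) [AddCommGroup N] [Module A N] : Prop :=
  Subsingleton (extModule A M n N)

/-- The `n`-th Tor module `Tor^A_n(M, N)`. -/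
noncomputable def torModule (n : ℕ) (N : Type u) [AddCommGroup N] [Module A N] :
    ModuleCat A :=
  ((Tor (ModuleCat.{u} A) n).obj (ModuleCat.of A M)).obj (ModuleCat.of A N)

/-- The vanishing `Tor^A_n(M, N) = 0`. -/
def torVanish (n : ℕ) (N : Type u) [AddCommGroup N] [Module A N] : Prop :=
  Subsingleton (torModule A M n N)

noncomputable def depth : ℕ∞ :=
  sInf {c : ℕ∞ | ∃ i : ℕ, c = i ∧ ¬ extVanish A (ResidueField A) i M}

variable {A}

/-- The category of modules of *free reducible complexity* over the local ring `A`.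
It is defined inductively: every finitely generated module of finite projective
dimension has free reducible complexity, and a finitely generated module `M` of finite
positive complexity has free reducible complexity provided there is a short exact
sequence `0 → M → K → Ω^n_A(M) → 0` (necessarily induced by a cohomology element
`η ∈ Ext^{n+1}_A(M,M)`) where `K` is a finitely generated module of free reducible
complexity with `cx K = cx M - 1`. -/
inductive HasFreeRedCxCat : ModuleCat.{u} A → Prop
  | of_finite_projDim (M : ModuleCat.{u} A) (hfg : Module.Finite A M)
      (h : HasFiniteProjDim A M) : HasFreeRedCxCat M
  | step (M K S : ModuleCat.{u} A) (n : ℕ)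
      (hfg : Module.Finite A M) (hKfg : Module.Finite A K)
      (hpos : 0 < complexity A M) (hfin : complexity A M ≠ ⊤)
      (hsyz : IsSyzygyOf A M S n)
      (f : M →ₗ[A] K) (g : K →ₗ[A] S) (hses : IsSES f g)
      (hcx : complexity A K = complexity A M - 1)
      (hK : HasFreeRedCxCat K) : HasFreeRedCxCat M

/-- The category of modules of *reducible complexity* over the local ring `A`: as for
free reducible complexity, but where in addition the reductions are required to
preserve depth. -/
inductive HasRedCxCat : ModuleCat.{u} A → Prop
  | of_finite_projDim (M : ModuleCat.{u} A) (hfg : Module.Finite A M)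
      (h : HasFiniteProjDim A M) : HasRedCxCat M
  | step (M K S : ModuleCat.{u} A) (n : ℕ)
      (hfg : Module.Finite A M) (hKfg : Module.Finite A K)
      (hpos : 0 < complexity A M) (hfin : complexity A M ≠ ⊤)
      (hsyz : IsSyzygyOf A M S n)
      (f : M →ₗ[A] K) (g : K →ₗ[A] S) (hses : IsSES f g)
      (hcx : complexity A K = complexity A M - 1)
      (hdepth : depth A K = depth A M)
      (hK : HasRedCxCat K) : HasRedCxCat M

variable (A)

/-- `M` has free reducible complexity. -/
def HasFreeRedCx (M : Type u) [AddCommGroup M] [Module A M] : Prop :=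
  HasFreeRedCxCat (ModuleCat.of A M)

/-- `M` has reducible complexity. -/
def HasRedCx (M : Type u) [AddCommGroup M] [Module A M] : Prop :=
  HasRedCxCat (ModuleCat.of A M)

/-- A Noetherian local ring is Gorenstein if it has finite injective dimension over
itself; by Bass' characterization, this is equivalent to the vanishing of
`Ext^i_A(k, A)` for all sufficiently large `i`. -/
def IsGorenstein : Prop :=
  ∃ n : ℕ, ∀ i : ℕ, n < i → extVanish A (ResidueField A) i A

end ComplexityTest

open ComplexityTest

namespace ComplexityTest

/-- A regular local ring: a Noetherian local ring whose maximal ideal can be generated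
by `dim A` elements. -/
def IsRegularLocalRing (Q : Type u) [CommRing Q] [IsLocalRing Q] : Prop :=
  IsNoetherianRing Q ∧
    ∃ (n : ℕ) (x : Fin n → Q), Ideal.span (Set.range x) = IsLocalRing.maximalIdeal Q ∧
      (n : WithBot ℕ∞) = ringKrullDim Q

variable (A : Type u) [CommRing A] [IsLocalRing A]

/-- The `𝔪`-adic completion of the local ring `A`. -/
abbrev Completion : Type u := AdicCompletion (IsLocalRing.maximalIdeal A) A

/-- The local ring `A` is a complete intersection: its `𝔪`-adic completion is the
residue ring of a regular local ring modulo an ideal generated by a regular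
sequence. -/
def IsCompleteIntersection : Prop :=
  ∃ (Q : Type u) (_ : CommRing Q),
    ∃ (_ : IsLocalRing Q),
      IsRegularLocalRing Q ∧
        ∃ g : Q →+* Completion A,
          Function.Surjective g ∧
            ∃ rs : List Q, RingTheory.Sequence.IsRegular Q rs ∧
              RingHom.ker g = Ideal.span {x | x ∈ rs}

/-- The embedding dimension of the local ring `A`, i.e. `dim_k 𝔪/𝔪²`. -/
noncomputable def embDim : ℕ :=
  Module.finrank (IsLocalRing.ResidueField A) (IsLocalRing.CotangentSpace A)

/-- The local ring `A` has codimension `c`, i.e. `dim_k (𝔪/𝔪²) - dim A = c`. -/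
def HasCodim (c : ℕ) : Prop :=
  ∃ d : ℕ, ringKrullDim A = (d : WithBot ℕ∞) ∧ embDim A = d + c

end ComplexityTest

universe v

section Part0
open CategoryTheory Opposite Filter IsLocalRing

namespace CxT

section HB
open DirectSum

variable {R : Type*} [CommRing R] {c : ℕ} {H : ℕ → Type*} [∀ n, AddCommGroup (H n)]
  [∀ n, Module R (H n)]

/-- total operator -/
noncomputable def totOp (T : Fin c → ∀ n, H n →ₗ[R] H (n + 2)) (i : Fin c) :
    Module.End R (⨁ n, H n) :=
  DirectSum.toModule R ℕ (⨁ n, H n) (fun n => (DirectSum.lof R ℕ H (n + 2)).comp (T i n))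

lemma totOp_lof (T : Fin c → ∀ n, H n →ₗ[R] H (n + 2)) (i : Fin c) (n : ℕ) (x : H n) :
    totOp T i (lof R ℕ H n x) = lof R ℕ H (n + 2) (T i n x) := by
  simp [totOp]

lemma totOp_apply_add_two (T : Fin c → ∀ n, H n →ₗ[R] H (n + 2)) (i : Fin c) (x : ⨁ n, H n)
    (n : ℕ) : (totOp T i x) (n + 2) = T i n (x n) := by
  induction x using DirectSum.induction_on with
  | zero => simp
  | of m y =>
    have := totOp_lof T i m y
    rw [DirectSum.lof_eq_of, DirectSum.lof_eq_of] at this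
    rw [this]
    by_cases h : m = n
    · subst h; simp
    · rw [DirectSum.of_eq_of_ne _ _ _ (by omega), DirectSum.of_eq_of_ne _ _ _ (by omega)]; simp
  | add x y hx hy => simp [hx, hy]

lemma totOp_apply_lt (T : Fin c → ∀ n, H n →ₗ[R] H (n + 2)) (i : Fin c) (x : ⨁ n, H n)
    (n : ℕ) (hn : n < 2) : (totOp T i x) n = 0 := by
  induction x using DirectSum.induction_on with
  | zero => simp
  | of m y =>
    have := totOp_lof T i m y
    rw [DirectSum.lof_eq_of, DirectSum.lof_eq_of] at this
    rw [this]
    rw [DirectSum.of_eq_of_ne _ _ _ (by omega)]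
  | add x y hx hy => simp [hx, hy]

/-- commuting hypothesis -/
def OpComm (T : Fin c → ∀ n, H n →ₗ[R] H (n + 2)) : Prop :=
  ∀ i j n x, T i (n + 2) (T j n x) = T j (n + 2) (T i n x)

lemma totOp_comm {T : Fin c → ∀ n, H n →ₗ[R] H (n + 2)} (hT : OpComm T) (i j : Fin c) :
    totOp T i * totOp T j = totOp T j * totOp T i := by
  apply DirectSum.linearMap_ext
  intro n
  ext1 x
  simp only [LinearMap.comp_apply, Module.End.mul_apply, totOp_lof]
  rw [hT]

lemma exists_rho {T : Fin c → ∀ n, H n →ₗ[R] H (n + 2)} (hT : OpComm T) :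
    ∃ ρ : MvPolynomial (Fin c) R →ₐ[R] Module.End R (⨁ n, H n), ∀ i,
      ρ (MvPolynomial.X i) = totOp T i := by
  classical
  let s : Set (Module.End R (⨁ n, H n)) := Set.range (totOp T)
  have hcomm : ∀ a ∈ s, ∀ b ∈ s, a * b = b * a := by
    rintro _ ⟨i, rfl⟩ _ ⟨j, rfl⟩
    exact totOp_comm hT i j
  letI : CommRing (Algebra.adjoin R s) := Algebra.adjoinCommRingOfComm R hcomm
  let f : MvPolynomial (Fin c) R →ₐ[R] (Algebra.adjoin R s) :=
    MvPolynomial.aeval (fun i => (⟨totOp T i, Algebra.subset_adjoin ⟨i, rfl⟩⟩ : Algebra.adjoin R s))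
  refine ⟨(Algebra.adjoin R s).val.comp f, fun i => ?_⟩
  simp [f]

noncomputable def rho {T : Fin c → ∀ n, H n →ₗ[R] H (n + 2)} (hT : OpComm T) :
    MvPolynomial (Fin c) R →ₐ[R] Module.End R (⨁ n, H n) := (exists_rho hT).choose

lemma rho_X {T : Fin c → ∀ n, H n →ₗ[R] H (n + 2)} (hT : OpComm T) (i : Fin c) :
    rho hT (MvPolynomial.X i) = totOp T i := (exists_rho hT).choose_spec i

lemma rho_C {T : Fin c → ∀ n, H n →ₗ[R] H (n + 2)} (hT : OpComm T) (r : R) (x : ⨁ n, H n) :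
    rho hT (MvPolynomial.C r) x = r • x := by
  have := (rho hT).commutes r
  rw [MvPolynomial.algebraMap_eq] at this
  rw [this]; simp

/-- An `R`-submodule stable under all operators is stable under all polynomials. -/
lemma rho_mem {T : Fin c → ∀ n, H n →ₗ[R] H (n + 2)} (hT : OpComm T)
    (U : Submodule R (⨁ n, H n)) (hU : ∀ i, ∀ x ∈ U, totOp T i x ∈ U)
    (p : MvPolynomial (Fin c) R) : ∀ x ∈ U, rho hT p x ∈ U := by
  induction p using MvPolynomial.induction_on with
  | C a => intro x hx; rw [rho_C]; exact U.smul_mem _ hx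
  | add p q hp hq => intro x hx; rw [map_add]; exact U.add_mem (hp x hx) (hq x hx)
  | mul_X p i hp =>
    intro x hx
    rw [map_mul, rho_X]
    exact hp _ (hU i x hx)

/-- the module structure over polynomial ring -/
@[reducible] noncomputable def rhoModule {T : Fin c → ∀ n, H n →ₗ[R] H (n + 2)} (hT : OpComm T) :
    Module (MvPolynomial (Fin c) R) (⨁ n, H n) :=
  Module.compHom _ (rho hT).toRingHom

/-- eventual generation -/
def EvGen (T : Fin c → ∀ n, H n →ₗ[R] H (n + 2)) : Prop :=
  ∃ n0, ∀ n, n0 ≤ n → ∀ x : H (n + 2), ∃ y : Fin c → H n, x = ∑ i, T i n (y i)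

lemma noeth_of_evGen [IsNoetherianRing R] [∀ n, Module.Finite R (H n)]
    {T : Fin c → ∀ n, H n →ₗ[R] H (n + 2)} (hT : OpComm T) (hg : EvGen T) :
    @IsNoetherian (MvPolynomial (Fin c) R) (⨁ n, H n) _ _ (rhoModule hT) := by
  letI := rhoModule hT
  have key : ∀ (p : MvPolynomial (Fin c) R) (x : ⨁ n, H n), p • x = rho hT p x := fun _ _ => rfl
  obtain ⟨n0, hn0⟩ := hg
  choose S hS using fun n => (Module.Finite.fg_top (R := R) (M := H n))
  let G : Set (⨁ n, H n) := ⋃ n ∈ Finset.range (n0 + 2), (lof R ℕ H n) '' (S n : Set (H n))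
  have hGfin : G.Finite := by
    apply Set.Finite.biUnion (Finset.finite_toSet _)
    intro n _
    exact (S n).finite_toSet.image _
  have hsp : ∀ n, ∀ x : H n, lof R ℕ H n x ∈ Submodule.span (MvPolynomial (Fin c) R) G := by
    intro n
    induction n using Nat.strong_induction_on with
    | _ n ih =>
      intro x
      by_cases hn : n < n0 + 2
      · have hx : x ∈ Submodule.span R (S n : Set (H n)) := by rw [hS]; trivial
        induction hx using Submodule.span_induction with
        | mem y hy =>
          apply Submodule.subset_span
          simp only [G, Set.mem_iUnion]
          exact ⟨n, by simpa using hn, y, hy, rfl⟩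
        | zero => simp
        | add y z _ _ hy hz => rw [map_add]; exact Submodule.add_mem _ hy hz
        | smul r y _ hy =>
          rw [map_smul]
          have := Submodule.smul_mem _ (MvPolynomial.C r : MvPolynomial (Fin c) R) hy
          rwa [key, rho_C] at this
      · obtain ⟨m, rfl⟩ : ∃ m, n = m + 2 := ⟨n - 2, by omega⟩
        obtain ⟨y, rfl⟩ := hn0 m (by omega) x
        rw [map_sum]
        apply Submodule.sum_mem
        intro i _
        have := Submodule.smul_mem _ (MvPolynomial.X i : MvPolynomial (Fin c) R) (ih m (by omega) (y i))
        rwa [key, rho_X, totOp_lof] at this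
  have : Module.Finite (MvPolynomial (Fin c) R) (⨁ n, H n) := by
    refine ⟨⟨hGfin.toFinset, ?_⟩⟩
    rw [Set.Finite.coe_toFinset, eq_top_iff]
    intro x _
    induction x using DirectSum.induction_on with
    | zero => simp
    | of n y => exact hsp n y
    | add x y hx hy => exact Submodule.add_mem _ (hx trivial) (hy trivial)
  infer_instance

/-- Hilbert basis: stable families in a Noetherian total module are eventually generated. -/
lemma stable_evGen {T : Fin c → ∀ n, H n →ₗ[R] H (n + 2)} (hT : OpComm T)
    (hN : @IsNoetherian (MvPolynomial (Fin c) R) (⨁ n, H n) _ _ (rhoModule hT))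
    (W : ∀ n, Submodule R (H n)) (hW : ∀ i n, ∀ x ∈ W n, T i n x ∈ W (n + 2)) :
    ∃ n1, ∀ n, n1 ≤ n → ∀ x ∈ W (n + 2), ∃ y : Fin c → H n, (∀ i, y i ∈ W n) ∧
      x = ∑ i, T i n (y i) := by
  letI := rhoModule hT
  have key : ∀ (p : MvPolynomial (Fin c) R) (x : ⨁ n, H n), p • x = rho hT p x := fun _ _ => rfl
  let V : ℕ →o Submodule (MvPolynomial (Fin c) R) (⨁ n, H n) :=
    { toFun := fun m => Submodule.span _ {z | ∃ n, n < m ∧ ∃ w ∈ W n, z = lof R ℕ H n w}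
      monotone' := by
        intro a b hab
        apply Submodule.span_mono
        rintro z ⟨n, hn, w, hw, rfl⟩
        exact ⟨n, by omega, w, hw, rfl⟩ }
  obtain ⟨m0, hm0⟩ := monotone_stabilizes_iff_noetherian.mpr hN V
  let Z : ∀ n, Submodule R (H (n + 2)) := fun n =>
    { carrier := {x | ∃ y : Fin c → H n, (∀ i, y i ∈ W n) ∧ x = ∑ i, T i n (y i)}
      zero_mem' := ⟨0, by simp, by simp⟩
      add_mem' := by
        rintro _ _ ⟨y, hy, rfl⟩ ⟨z, hz, rfl⟩
        exact ⟨y + z, fun i => (W n).add_mem (hy i) (hz i), by simp [Finset.sum_add_distrib]⟩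
      smul_mem' := by
        rintro r _ ⟨y, hy, rfl⟩
        exact ⟨r • y, fun i => (W n).smul_mem _ (hy i), by simp [Finset.smul_sum]⟩ }
  let U : Submodule R (⨁ n, H n) :=
    { carrier := {x | (∀ n, x n ∈ W n) ∧ ∀ n, m0 ≤ n + 2 → x (n + 2) ∈ Z n}
      zero_mem' := ⟨fun n => by simp, fun n _ => by simp⟩
      add_mem' := by
        rintro x y ⟨h1, h2⟩ ⟨h3, h4⟩
        exact ⟨fun n => (W n).add_mem (h1 n) (h3 n), fun n hn => (Z n).add_mem (h2 n hn) (h4 n hn)⟩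
      smul_mem' := by
        rintro r x ⟨h1, h2⟩
        exact ⟨fun n => (W n).smul_mem _ (h1 n), fun n hn => (Z n).smul_mem _ (h2 n hn)⟩ }
  have hU : ∀ i, ∀ x ∈ U, totOp T i x ∈ U := by
    rintro i x ⟨h1, h2⟩
    refine ⟨fun n => ?_, fun n hn => ?_⟩
    · by_cases hn : n < 2
      · rw [totOp_apply_lt T i x n hn]; exact zero_mem _
      · obtain ⟨m, rfl⟩ : ∃ m, n = m + 2 := ⟨n - 2, by omega⟩
        rw [totOp_apply_add_two]; exact hW _ _ _ (h1 m)
    · rw [totOp_apply_add_two]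
      classical
      refine ⟨Pi.single i (x n), fun j => ?_, ?_⟩
      · by_cases hj : j = i
        · subst hj; simpa using h1 n
        · simp [Pi.single_eq_of_ne hj]
      · rw [Finset.sum_eq_single i]
        · simp
        · intro j _ hj; simp [Pi.single_eq_of_ne hj]
        · simp
  let U' : Submodule (MvPolynomial (Fin c) R) (⨁ n, H n) :=
    { carrier := U
      zero_mem' := U.zero_mem
      add_mem' := U.add_mem
      smul_mem' := fun p x hx => rho_mem hT U hU p x hx }
  have hVU : V m0 ≤ U' := by
    apply Submodule.span_le.mpr
    rintro z ⟨n, hn, w, hw, rfl⟩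
    refine ⟨fun k => ?_, fun k hk => ?_⟩
    · by_cases h : k = n
      · subst h; rw [DirectSum.lof_apply]; exact hw
      · rw [DirectSum.lof_eq_of, DirectSum.of_eq_of_ne _ _ _ h]; exact zero_mem _
    · rw [DirectSum.lof_eq_of, DirectSum.of_eq_of_ne _ _ _ (by omega)]; exact zero_mem _
  refine ⟨m0, fun n hn x hx => ?_⟩
  have h1 : lof R ℕ H (n + 2) x ∈ V (n + 3) :=
    Submodule.subset_span ⟨n + 2, by omega, x, hx, rfl⟩
  rw [← hm0 (n + 3) (by omega)] at h1
  have h2 := (hVU h1).2 n (by omega)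
  rw [DirectSum.lof_apply] at h2
  exact h2

end HB
end CxT
end Part0

section Part1
open CategoryTheory Opposite Filter IsLocalRing

namespace CxT

section Avoid
open MvPolynomial

lemma homog_avoid {R : Type*} [CommRing R] {c : ℕ} (n : ℕ) :
    ∀ (s : Finset (Ideal (MvPolynomial (Fin c) R))), s.card ≤ n →
    (∀ p ∈ s, p.IsPrime) → (∀ p ∈ s, ∃ i, (X i : MvPolynomial (Fin c) R) ∉ p) →
    s.Nonempty →
    ∃ (e : ℕ) (θ : MvPolynomial (Fin c) R), 1 ≤ e ∧ θ.IsHomogeneous e ∧ ∀ p ∈ s, θ ∉ p := by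
  classical
  induction n with
  | zero =>
    intro s hs _ _ hne
    exact absurd (Finset.card_pos.mpr hne) (by omega)
  | succ n ih =>
    intro s hs hp hX hne
    by_cases hex : ∃ p ∈ s, ∃ q ∈ s, p ≠ q ∧ ∀ (e : ℕ) (g : MvPolynomial (Fin c) R),
        g.IsHomogeneous e → g ∈ p → g ∈ q
    · obtain ⟨p, hps, q, hqs, hpq, hall⟩ := hex
      obtain ⟨e, θ, he, hθ, hav⟩ := ih (s.erase p) (by rw [Finset.card_erase_of_mem hps]; omega)
        (fun r hr => hp r (Finset.mem_of_mem_erase hr)) (fun r hr => hX r (Finset.mem_of_mem_erase hr))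
        ⟨q, Finset.mem_erase.mpr ⟨hpq.symm, hqs⟩⟩
      refine ⟨e, θ, he, hθ, fun r hr => ?_⟩
      by_cases hrp : r = p
      · subst hrp
        intro hmem
        exact hav q (Finset.mem_erase.mpr ⟨hpq.symm, hqs⟩) (hall e θ hθ hmem)
      · exact hav r (Finset.mem_erase.mpr ⟨hrp, hr⟩)
    · push Not at hex
      obtain ⟨p, hps⟩ := hne
      obtain ⟨i, hi⟩ := hX p hps
      by_cases hne' : (s.erase p).Nonempty
      · obtain ⟨a, θ', ha, hθ', hav⟩ := ih (s.erase p)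
          (by rw [Finset.card_erase_of_mem hps]; omega)
          (fun r hr => hp r (Finset.mem_of_mem_erase hr))
          (fun r hr => hX r (Finset.mem_of_mem_erase hr)) hne'
        by_cases hθp : θ' ∈ p
        · have hg : ∀ q, ∃ (e : ℕ) (g : MvPolynomial (Fin c) R), q ∈ s.erase p →
              (g.IsHomogeneous e ∧ g ∈ q ∧ g ∉ p) := by
            intro q
            by_cases hq : q ∈ s.erase p
            · obtain ⟨e, g, h1, h2, h3⟩ := hex q (Finset.mem_of_mem_erase hq) p hps
                (Finset.ne_of_mem_erase hq)
              exact ⟨e, g, fun _ => ⟨h1, h2, h3⟩⟩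
            · exact ⟨0, 0, fun h => absurd h hq⟩
          choose eg g hg using hg
          let b := (∑ q ∈ s.erase p, eg q) + 1
          let G : MvPolynomial (Fin c) R := (∏ q ∈ s.erase p, g q) * X i
          have hG : G.IsHomogeneous b :=
            (IsHomogeneous.prod _ _ _ (fun q hq => (hg q hq).1)).mul (isHomogeneous_X _ i)
          have hpp := hp p hps
          have hGp : G ∉ p := by
            intro hmem
            rcases hpp.mem_or_mem hmem with h | h
            · obtain ⟨q, hq, hq'⟩ := (hpp.prod_mem_iff).mp h
              exact (hg q hq).2.2 hq'
            · exact hi h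
          have hGq : ∀ q ∈ s.erase p, G ∈ q := by
            intro q hq
            apply Ideal.mul_mem_right
            exact Ideal.mem_of_dvd _ (Finset.dvd_prod_of_mem g hq) (hg q hq).2.1
          refine ⟨a * b, θ' ^ b + G ^ a, Nat.mul_pos ha (by omega), ?_, ?_⟩
          · exact (hθ'.pow b).add (by rw [mul_comm]; exact hG.pow a)
          · intro q hq
            by_cases hqp : q = p
            · subst hqp
              intro hmem
              have h1 : θ' ^ b ∈ q := Ideal.pow_mem_of_mem _ hθp _ (by omega)
              have h2 : G ^ a ∈ q := (Ideal.add_mem_iff_right _ h1).mp hmem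
              exact hGp (hpp.mem_of_pow_mem _ h2)
            · have hq' : q ∈ s.erase p := Finset.mem_erase.mpr ⟨hqp, hq⟩
              intro hmem
              have h1 : G ^ a ∈ q := Ideal.pow_mem_of_mem _ (hGq q hq') _ (by omega)
              have h2 : θ' ^ b ∈ q := (Ideal.add_mem_iff_left _ h1).mp hmem
              exact hav q hq' ((hp q hq).mem_of_pow_mem _ h2)
        · refine ⟨a, θ', ha, hθ', fun q hq => ?_⟩
          by_cases hqp : q = p
          · subst hqp; exact hθp
          · exact hav q (Finset.mem_erase.mpr ⟨hqp, hq⟩)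
      · refine ⟨1, X i, le_rfl, isHomogeneous_X _ i, fun q hq => ?_⟩
        by_cases hqp : q = p
        · subst hqp; exact hi
        · exact absurd ⟨q, Finset.mem_erase.mpr ⟨hqp, hq⟩⟩ hne'

end Avoid

section Filt
open DirectSum MvPolynomial

variable {R : Type*} [CommRing R] {c : ℕ} {H : ℕ → Type*} [∀ n, AddCommGroup (H n)]
  [∀ n, Module R (H n)]

/-- homogeneous polynomials shift degree -/
lemma rho_homog {T : Fin c → ∀ n, H n →ₗ[R] H (n + 2)} (hT : OpComm T)
    (e : ℕ) (p : MvPolynomial (Fin c) R) (hp : p.IsHomogeneous e) (n : ℕ) (x : H n) :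
    ∃ y : H (n + 2 * e), rho hT p (lof R ℕ H n x) = lof R ℕ H (n + 2 * e) y := by
  classical
  have mono : ∀ (e : ℕ) (s : Fin c →₀ ℕ), s.degree = e → ∀ n (x : H n),
      ∃ y : H (n + 2 * e), rho hT (monomial s 1) (lof R ℕ H n x) = lof R ℕ H (n + 2 * e) y := by
    intro e
    induction e with
    | zero =>
      intro s hs n x
      have : s = 0 := by rwa [Finsupp.degree_eq_zero_iff] at hs
      subst this
      exact ⟨x, by rw [show (monomial (0 : Fin c →₀ ℕ) (1 : R)) = C 1 from rfl, rho_C, one_smul]; rfl⟩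
    | succ e ih =>
      intro s hs n x
      have hne : s ≠ 0 := by rintro rfl; simp at hs
      obtain ⟨i, hi⟩ : ∃ i, s i ≠ 0 := by
        by_contra h
        push Not at h
        exact hne (Finsupp.ext h)
      have hs' : s = Finsupp.single i 1 + (s - Finsupp.single i 1) := by
        rw [add_tsub_cancel_of_le]
        exact Finsupp.single_le_iff.mpr (Nat.one_le_iff_ne_zero.mpr hi)
      have hdeg : (s - Finsupp.single i 1).degree = e := by
        have := congrArg Finsupp.degree hs'
        rw [map_add, hs, Finsupp.degree_single] at this
        omega
      obtain ⟨y, hy⟩ := ih _ hdeg n x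
      refine ⟨T i _ y, ?_⟩
      have : (monomial s (1 : R)) = X i * monomial (s - Finsupp.single i 1) 1 := by
        conv_lhs => rw [hs']
        rw [X, monomial_mul, one_mul]
      rw [this, map_mul, Module.End.mul_apply, hy, rho_X, totOp_lof]
      rfl
  let V : Submodule R (⨁ n, H n) := LinearMap.range (lof R ℕ H (n + 2 * e))
  suffices rho hT p (lof R ℕ H n x) ∈ V by
    obtain ⟨y, hy⟩ := this
    exact ⟨y, hy.symm⟩
  rw [p.as_sum, map_sum, LinearMap.sum_apply]
  apply Submodule.sum_mem
  intro s hs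
  have hs' : s.degree = e := by
    have := hp (mem_support_iff.mp hs)
    rw [Finsupp.degree_eq_weight_one (R := ℕ)]; exact this
  obtain ⟨y, hy⟩ := mono e s hs' n x
  have : monomial s (coeff s p) = C (coeff s p) * monomial s 1 := by simp [C_mul_monomial]
  rw [this, map_mul, Module.End.mul_apply, hy, rho_C]
  exact V.smul_mem _ ⟨y, rfl⟩

/-- maps commuting with operators commute with polynomials -/
lemma rho_comm_map {H' : ℕ → Type*} [∀ n, AddCommGroup (H' n)] [∀ n, Module R (H' n)]
    {T : Fin c → ∀ n, H n →ₗ[R] H (n + 2)} (hT : OpComm T)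
    {T' : Fin c → ∀ n, H' n →ₗ[R] H' (n + 2)} (hT' : OpComm T')
    (Φ : (⨁ n, H n) →ₗ[R] (⨁ n, H' n))
    (hΦ : ∀ i x, Φ (totOp T i x) = totOp T' i (Φ x)) (p : MvPolynomial (Fin c) R) :
    ∀ x, Φ (rho hT p x) = rho hT' p (Φ x) := by
  induction p using MvPolynomial.induction_on with
  | C a => intro x; rw [rho_C, rho_C, map_smul]
  | add p q hp hq => intro x; simp [map_add, hp, hq]
  | mul_X p i hp => intro x; rw [map_mul, map_mul, rho_X, rho_X, Module.End.mul_apply,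
      Module.End.mul_apply, hp, hΦ]

lemma exists_filterRegular [IsNoetherianRing R]
    {T : Fin c → ∀ n, H n →ₗ[R] H (n + 2)} (hT : OpComm T)
    (hN : @IsNoetherian (MvPolynomial (Fin c) R) (⨁ n, H n) _ _ (rhoModule hT)) :
    ∃ (e : ℕ) (θ : MvPolynomial (Fin c) R) (n0 : ℕ), 1 ≤ e ∧ θ.IsHomogeneous e ∧
      ∀ n, n0 ≤ n → ∀ x : H n, rho hT θ (lof R ℕ H n x) = 0 → x = 0 := by
  classical
  letI := rhoModule hT
  let S := MvPolynomial (Fin c) R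
  have key : ∀ (p : S) (x : ⨁ n, H n), p • x = rho hT p x := fun _ _ => rfl
  have hfin : Module.Finite S (⨁ n, H n) := inferInstance
  let s : Finset (Ideal S) := ((associatedPrimes.finite S (⨁ n, H n)).toFinset).filter
    (fun p => ∃ i, (X i : S) ∉ p)
  have main : ∃ (e : ℕ) (θ : S), 1 ≤ e ∧ θ.IsHomogeneous e ∧ ∀ p ∈ s, θ ∉ p := by
    by_cases hne : s.Nonempty
    · apply homog_avoid s.card s le_rfl _ _ hne
      · intro p hp
        have h1 : p ∈ associatedPrimes S (⨁ n, H n) := by simpa using (Finset.mem_filter.mp hp).1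
        exact IsAssociatedPrime.isPrime h1
      · intro p hp
        exact (Finset.mem_filter.mp hp).2
    · exact ⟨1, 0, le_rfl, isHomogeneous_zero _ _ _, fun p hp => absurd ⟨p, hp⟩ hne⟩
  obtain ⟨e, θ, he, hθ, hav⟩ := main
  let K : Submodule S (⨁ n, H n) := LinearMap.ker (LinearMap.lsmul S (⨁ n, H n) θ)
  have hK : ∀ x, x ∈ K ↔ θ • x = 0 := fun x => Iff.rfl
  let J : Ideal S := Ideal.span (Set.range (X : Fin c → S))
  have hJ : J ≤ (Module.annihilator S K).radical := by
    rw [Ideal.radical_eq_sInf, le_sInf_iff]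
    rintro p ⟨hp1, hp2⟩
    obtain ⟨q, hq, hqp⟩ := Ideal.exists_minimalPrimes_le hp1
    have hqA := Module.associatedPrimes.minimalPrimes_annihilator_subset_associatedPrimes S K hq
    have hθq : θ ∈ q := by
      have : θ ∈ Module.annihilator S K := by
        rw [Module.mem_annihilator]
        rintro ⟨x, hx⟩
        exact Subtype.ext ((hK x).mp hx)
      exact hq.1.2 this
    have hqA' : q ∈ associatedPrimes S (⨁ n, H n) :=
      associatedPrimes.subset_of_injective (f := K.subtype) K.injective_subtype hqA
    have : ∀ i, (X i : S) ∈ q := by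
      by_contra hcon
      push Not at hcon
      exact hav q (Finset.mem_filter.mpr ⟨by simpa using hqA', hcon⟩) hθq
    refine le_trans ?_ hqp
    rw [Ideal.span_le]
    rintro _ ⟨i, rfl⟩
    exact this i
  obtain ⟨k, hk⟩ := Ideal.exists_pow_le_of_le_radical_of_fg hJ (IsNoetherian.noetherian J)
  let W : ∀ n, Submodule R (H n) := fun n =>
    { carrier := {x | θ • (lof R ℕ H n x) = 0}
      zero_mem' := by simp
      add_mem' := by
        intro a b ha hb
        simp only [Set.mem_setOf_eq] at *
        rw [map_add, smul_add, ha, hb, add_zero]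
      smul_mem' := by
        intro r a ha
        simp only [Set.mem_setOf_eq, key] at *
        rw [map_smul, map_smul, ha, smul_zero] }
  have hWX : ∀ i n (x : H n), lof R ℕ H (n + 2) (T i n x) = (X i : S) • lof R ℕ H n x := by
    intro i n x
    rw [key, rho_X, totOp_lof]
  obtain ⟨n1, hn1⟩ := stable_evGen hT hN W (by
    intro i n x hx
    show θ • (lof R ℕ H (n + 2) (T i n x)) = 0
    rw [hWX, smul_comm, show θ • (lof R ℕ H n x) = 0 from hx, smul_zero])
  have step : ∀ m, ∀ n, n1 ≤ n → ∀ x ∈ W (n + 2 * m), lof R ℕ H (n + 2 * m) x ∈ (J ^ m • K) := by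
    intro m
    induction m with
    | zero => intro n hn x hx; simpa using (hK _).mpr hx
    | succ m ih =>
      intro n hn x hx
      obtain ⟨y, hy, hxy⟩ := hn1 (n + 2 * m) (by omega) x hx
      rw [pow_succ', Submodule.mul_smul]
      have : lof R ℕ H (n + 2 * (m + 1)) x = ∑ i, (X i : S) • lof R ℕ H (n + 2 * m) (y i) := by
        have h1 : lof R ℕ H (n + 2 * (m + 1)) x = lof R ℕ H (n + 2 * m + 2) (∑ i, T i (n + 2 * m) (y i)) := by
          rw [← hxy]; rfl
        rw [h1, map_sum]
        exact Finset.sum_congr rfl (fun i _ => hWX i _ _)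
      rw [this]
      apply Submodule.sum_mem
      intro i _
      exact Submodule.smul_mem_smul (Ideal.subset_span ⟨i, rfl⟩) (ih n hn (y i) (hy i))
  refine ⟨e, θ, n1 + 2 * k, he, hθ, fun n hn x hx => ?_⟩
  obtain ⟨m, rfl⟩ : ∃ m, n = m + 2 * k := ⟨n - 2 * k, by omega⟩
  have h1 := step k m (by omega) x hx
  have h2 : J ^ k • K = ⊥ := by
    rw [eq_bot_iff, Submodule.smul_le]
    intro r hr z hz
    have := Module.mem_annihilator.mp (hk hr) ⟨z, hz⟩
    simpa using congrArg Subtype.val this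
  rw [h2, Submodule.mem_bot] at h1
  have := congrArg (fun z => z (m + 2 * k)) h1
  simpa [DirectSum.lof_apply] using this

end Filt
end CxT
end Part1

section Part2
open CategoryTheory Opposite Filter IsLocalRing

namespace CxT

section Act
variable {R : Type u} [CommRing R] {Y : Type v} [AddCommGroup Y] [Module R Y]
variable {α β γ : Type} [Fintype α] [Fintype β] [Fintype γ]

/-- pull back cochains along a matrix -/
def act (D : Matrix α β R) : (α → Y) →ₗ[R] (β → Y) where
  toFun u := fun j => ∑ i, D i j • u i
  map_add' u v := by ext j; simp [Finset.sum_add_distrib]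
  map_smul' r u := by
    ext j; simp only [Pi.smul_apply, RingHom.id_apply, Finset.smul_sum]
    exact Finset.sum_congr rfl (fun i _ => smul_comm _ _ _)

omit [Fintype β] in
lemma act_apply (D : Matrix α β R) (u : α → Y) (j : β) : act D u j = ∑ i, D i j • u i := rfl

omit [Fintype γ] in
lemma act_mul (D : Matrix α β R) (E : Matrix β γ R) (u : α → Y) :
    act (D * E) u = act E (act D u) := by
  ext j
  simp only [act_apply, Matrix.mul_apply, Finset.sum_smul, Finset.smul_sum]
  rw [Finset.sum_comm]
  refine Finset.sum_congr rfl fun b _ => Finset.sum_congr rfl fun a _ => ?_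
  rw [smul_smul, mul_comm]

omit [Fintype β] in
lemma act_add (D E : Matrix α β R) (u : α → Y) : act (D + E) u = act D u + act E u := by
  ext j; simp [act_apply, add_smul, Finset.sum_add_distrib]

omit [Fintype β] in
lemma act_sub (D E : Matrix α β R) (u : α → Y) : act (D - E) u = act D u - act E u := by
  ext j; simp [act_apply, sub_smul, Finset.sum_sub_distrib]

omit [Fintype β] in
lemma act_neg (D : Matrix α β R) (u : α → Y) : act (-D) u = - act D u := by
  ext j; simp [act_apply]

omit [Fintype β] in
lemma act_zero_mat (u : α → Y) : act (0 : Matrix α β R) u = 0 := by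
  ext j; simp [act_apply]

omit [Fintype β] in
lemma act_kill (I : Ideal R) (hI : ∀ a ∈ I, ∀ y : Y, a • y = 0) (D : Matrix α β R)
    (hD : ∀ i j, D i j ∈ I) (u : α → Y) : act D u = 0 := by
  ext j; exact Finset.sum_eq_zero (fun i _ => hI _ (hD i j) _)

omit [Fintype β] in
lemma act_congr (I : Ideal R) (hI : ∀ a ∈ I, ∀ y : Y, a • y = 0) (D E : Matrix α β R)
    (hD : ∀ i j, D i j - E i j ∈ I) (u : α → Y) : act D u = act E u := by
  rw [← sub_eq_zero, ← act_sub]; exact act_kill I hI _ hD u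

lemma act_one [DecidableEq α] (u : α → Y) : act (1 : Matrix α α R) u = u := by
  ext j; simp [act_apply, Matrix.one_apply]

/-- post-composition commutes -/
lemma act_map {Y' : Type*} [AddCommGroup Y'] [Module R Y'] (f : Y →ₗ[R] Y') (D : Matrix α β R)
    (u : α → Y) : act D (fun i => f (u i)) = fun j => f (act D u j) := by
  ext j; simp [act_apply]

end Act

section Coh
variable {R : Type u} [CommRing R] {ι : ℕ → Type} [∀ n, Fintype (ι n)]
  (D : ∀ n, Matrix (ι n) (ι (n + 1)) R) (Y : Type v) [AddCommGroup Y] [Module R Y]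

/-- cocycles -/
def Zc (n : ℕ) : Submodule R (ι n → Y) := LinearMap.ker (act (Y := Y) (D n))

/-- coboundaries -/
def Bc : (n : ℕ) → Submodule R (ι n → Y)
  | 0 => ⊥
  | (n + 1) => LinearMap.range (act (Y := Y) (D n))

/-- cohomology -/
def Coh (n : ℕ) : Type v := (Zc D Y n) ⧸ (Submodule.comap (Zc D Y n).subtype (Bc D Y n))

instance (n : ℕ) : AddCommGroup (Coh D Y n) :=
  inferInstanceAs (AddCommGroup ((Zc D Y n) ⧸ (Submodule.comap (Zc D Y n).subtype (Bc D Y n))))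

instance (n : ℕ) : Module R (Coh D Y n) :=
  inferInstanceAs (Module R ((Zc D Y n) ⧸ (Submodule.comap (Zc D Y n).subtype (Bc D Y n))))

/-- the quotient map -/
def cohMk (n : ℕ) : Zc D Y n →ₗ[R] Coh D Y n :=
  (Submodule.comap (Zc D Y n).subtype (Bc D Y n)).mkQ

variable {D Y}

lemma mem_Zc {n : ℕ} {u : ι n → Y} : u ∈ Zc D Y n ↔ act (D n) u = 0 := Iff.rfl

lemma mem_Bc_succ {n : ℕ} {u : ι (n + 1) → Y} : u ∈ Bc D Y (n + 1) ↔ ∃ w, act (D n) w = u := Iff.rfl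

/-- class of a cocycle -/
def cls {n : ℕ} (u : ι n → Y) (hu : u ∈ Zc D Y n) : Coh D Y n :=
  cohMk D Y n ⟨u, hu⟩

lemma cls_surj {n : ℕ} (x : Coh D Y n) : ∃ u hu, x = cls u hu := by
  obtain ⟨⟨u, hu⟩, rfl⟩ := Submodule.Quotient.mk_surjective _ x
  exact ⟨u, hu, rfl⟩

lemma cls_eq_zero {n : ℕ} {u : ι n → Y} {hu : u ∈ Zc D Y n} : cls u hu = 0 ↔ u ∈ Bc D Y n := by
  exact Submodule.Quotient.mk_eq_zero _

lemma cls_eq {n : ℕ} {u v : ι n → Y} {hu : u ∈ Zc D Y n} {hv : v ∈ Zc D Y n} :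
    cls u hu = cls v hv ↔ u - v ∈ Bc D Y n := by
  exact Submodule.Quotient.eq _

lemma cls_add {n : ℕ} {u v : ι n → Y} (hu : u ∈ Zc D Y n) (hv : v ∈ Zc D Y n) :
    cls (u + v) (add_mem hu hv) = cls u hu + cls v hv := rfl

lemma cls_sum {n : ℕ} {κ : Type*} (s : Finset κ) (u : κ → ι n → Y) (hu : ∀ k, u k ∈ Zc D Y n) :
    cls (∑ k ∈ s, u k) (Submodule.sum_mem _ (fun k _ => hu k)) = ∑ k ∈ s, cls (u k) (hu k) := by
  unfold cls
  rw [← map_sum]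
  congr 1
  ext1; simp

lemma cls_smul {n : ℕ} (r : R) {u : ι n → Y} (hu : u ∈ Zc D Y n) :
    cls (r • u) (Submodule.smul_mem _ r hu) = r • cls u hu := rfl

/-- induced maps on cohomology -/
def cohMap {κ : ℕ → Type} [∀ n, Fintype (κ n)]
    {E : ∀ n, Matrix (κ n) (κ (n + 1)) R} {Y' : Type*} [AddCommGroup Y'] [Module R Y']
    {n m : ℕ} (f : (ι n → Y) →ₗ[R] (κ m → Y'))
    (hZ : ∀ u ∈ Zc D Y n, f u ∈ Zc E Y' m) (hB : ∀ u ∈ Zc D Y n, u ∈ Bc D Y n → f u ∈ Bc E Y' m) :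
    Coh D Y n →ₗ[R] Coh E Y' m :=
  Submodule.mapQ _ _ (f.restrict hZ) (by
    rintro ⟨u, hu⟩ hu'
    exact hB u hu hu')

lemma cohMap_cls {κ : ℕ → Type} [∀ n, Fintype (κ n)]
    {E : ∀ n, Matrix (κ n) (κ (n + 1)) R} {Y' : Type*} [AddCommGroup Y'] [Module R Y']
    {n m : ℕ} (f : (ι n → Y) →ₗ[R] (κ m → Y'))
    (hZ : ∀ u ∈ Zc D Y n, f u ∈ Zc E Y' m) (hB : ∀ u ∈ Zc D Y n, u ∈ Bc D Y n → f u ∈ Bc E Y' m)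
    (u : ι n → Y) (hu : u ∈ Zc D Y n) :
    cohMap f hZ hB (cls u hu) = cls (f u) (hZ u hu) := rfl

/-- A degree 2 operator family commuting with the differential when acting on `Y`. -/
def Commutes (D : ∀ n, Matrix (ι n) (ι (n + 1)) R) (Y : Type v) [AddCommGroup Y] [Module R Y]
    (t : ∀ n, Matrix (ι n) (ι (n + 2)) R) : Prop :=
  ∀ n (w : ι n → Y), act (t (n + 1)) (act (D n) w) = act (D (n + 2)) (act (t n) w)

def opT (t : ∀ n, Matrix (ι n) (ι (n + 2)) R) (ht : Commutes D Y t) (n : ℕ) :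
    Coh D Y n →ₗ[R] Coh D Y (n + 2) :=
  cohMap (act (t n)) (by
    intro u hu
    rw [mem_Zc] at *
    rw [← ht, hu, map_zero]) (by
    intro u _ hu
    cases n with
    | zero => 
      have : u = 0 := hu
      subst this; simp
    | succ n => 
      obtain ⟨w, rfl⟩ := hu
      exact ⟨act (t n) w, (ht n w).symm⟩)

lemma opT_cls (t : ∀ n, Matrix (ι n) (ι (n + 2)) R) (ht : Commutes D Y t) (n : ℕ)
    (u : ι n → Y) (hu : u ∈ Zc D Y n) (hu') :
    opT t ht n (cls u hu) = cls (act (t n) u) hu' := rfl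

lemma Commutes.mem {t : ∀ n, Matrix (ι n) (ι (n + 2)) R} (ht : Commutes D Y t) {n : ℕ}
    {u : ι n → Y} (hu : u ∈ Zc D Y n) : act (t n) u ∈ Zc D Y (n + 2) := by
  rw [mem_Zc] at *
  rw [← ht, hu, map_zero]

instance cohFinite [IsNoetherianRing R] [Module.Finite R Y] (n : ℕ) :
    Module.Finite R (Coh D Y n) := by
  have : IsNoetherian R (ι n → Y) := inferInstance
  exact Module.Finite.of_surjective (cohMk D Y n) (Submodule.mkQ_surjective _)

end Coh

section Rel
variable {Q : Type u} [CommRing Q] {I : Ideal Q}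

/-- `b` is a lift of `φ a`. -/
def Rel (φ : I →ₗ[Q] (Q ⧸ I)) (a b : Q) : Prop := ∃ h : a ∈ I, Ideal.Quotient.mk I b = φ ⟨a, h⟩

variable {φ : I →ₗ[Q] (Q ⧸ I)}

lemma Rel.exists {a : Q} (h : a ∈ I) : ∃ b, Rel φ a b := by
  obtain ⟨b, hb⟩ := Ideal.Quotient.mk_surjective (φ ⟨a, h⟩)
  exact ⟨b, h, hb⟩

lemma Rel.zero : Rel φ 0 0 := ⟨I.zero_mem, by
  rw [map_zero]; exact (map_zero φ).symm⟩

lemma Rel.add {a b a' b' : Q} (h : Rel φ a b) (h' : Rel φ a' b') : Rel φ (a + a') (b + b') := by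
  obtain ⟨h1, h2⟩ := h; obtain ⟨h3, h4⟩ := h'
  refine ⟨I.add_mem h1 h3, ?_⟩
  rw [map_add, h2, h4, ← map_add]; rfl

lemma Rel.smul {a b : Q} (r : Q) (h : Rel φ a b) : Rel φ (r * a) (r * b) := by
  obtain ⟨h1, h2⟩ := h
  refine ⟨I.mul_mem_left r h1, ?_⟩
  rw [map_mul, h2]
  have : (⟨r * a, I.mul_mem_left r h1⟩ : I) = r • ⟨a, h1⟩ := rfl
  rw [this, map_smul]; rfl

lemma Rel.neg {a b : Q} (h : Rel φ a b) : Rel φ (-a) (-b) := by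
  simpa using h.smul (-1)

lemma Rel.sub {a b a' b' : Q} (h : Rel φ a b) (h' : Rel φ a' b') : Rel φ (a - a') (b - b') := by
  simpa [sub_eq_add_neg] using h.add h'.neg

lemma Rel.sum {κ : Type*} (s : Finset κ) {a b : κ → Q} (h : ∀ k, Rel φ (a k) (b k)) :
    Rel φ (∑ k ∈ s, a k) (∑ k ∈ s, b k) := by
  classical
  induction s using Finset.induction_on with
  | empty => simpa using Rel.zero
  | insert k s hk ih => rw [Finset.sum_insert hk, Finset.sum_insert hk]; exact (h k).add ih

lemma Rel.unique {a b b' : Q} (h : Rel φ a b) (h' : Rel φ a b') : b - b' ∈ I := by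
  rw [← Ideal.Quotient.eq]
  obtain ⟨h1, h2⟩ := h; obtain ⟨h3, h4⟩ := h'
  rw [h2, h4]

variable {α β γ δ : Type} [Fintype α] [Fintype β] [Fintype γ] [Fintype δ]

def MRel (φ : I →ₗ[Q] (Q ⧸ I)) (E T : Matrix α β Q) : Prop := ∀ i j, Rel φ (E i j) (T i j)

omit [Fintype α] [Fintype β] in
lemma MRel.exists {E : Matrix α β Q} (h : ∀ i j, E i j ∈ I) : ∃ T, MRel φ E T := by
  choose T hT using fun i j => Rel.exists (φ := φ) (h i j)
  exact ⟨T, hT⟩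

omit [Fintype α] [Fintype β] in
lemma MRel.add {E T E' T' : Matrix α β Q} (h : MRel φ E T) (h' : MRel φ E' T') :
    MRel φ (E + E') (T + T') := fun i j => (h i j).add (h' i j)

omit [Fintype α] [Fintype β] in
lemma MRel.sub {E T E' T' : Matrix α β Q} (h : MRel φ E T) (h' : MRel φ E' T') :
    MRel φ (E - E') (T - T') := fun i j => (h i j).sub (h' i j)

omit [Fintype α] [Fintype γ] in
lemma MRel.mul_left {E T : Matrix β γ Q} (D : Matrix α β Q) (h : MRel φ E T) :
    MRel φ (D * E) (D * T) := fun i j => by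
  simp only [Matrix.mul_apply]
  exact Rel.sum _ (fun k => (h k j).smul _)

omit [Fintype α] [Fintype γ] in
lemma MRel.mul_right {E T : Matrix α β Q} (D : Matrix β γ Q) (h : MRel φ E T) :
    MRel φ (E * D) (T * D) := fun i j => by
  simp only [Matrix.mul_apply]
  refine Rel.sum _ (fun k => ?_)
  rw [mul_comm, mul_comm (T i k)]
  exact (h i k).smul _

omit [Fintype α] [Fintype β] in
lemma MRel.unique {E T T' : Matrix α β Q} (h : MRel φ E T) (h' : MRel φ E T') :
    ∀ i j, T i j - T' i j ∈ I := fun i j => (h i j).unique (h' i j)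

/-- commutation of operators with differentials -/
lemma rel_comm (D : Matrix α β Q) (E : Matrix β γ Q) (F : Matrix γ δ Q)
    {s : Matrix α γ Q} {t : Matrix β δ Q} (hs : MRel φ (D * E) s) (ht : MRel φ (E * F) t) :
    ∀ i j, (D * t) i j - (s * F) i j ∈ I := by
  have h1 := ht.mul_left D
  have h2 := hs.mul_right F
  rw [Matrix.mul_assoc] at h2
  exact h1.unique h2

/-- naturality -/
lemma rel_nat {α' β' γ' : Type} [Fintype α'] [Fintype β'] [Fintype γ']
    {F0 : Matrix α β Q} {F1 : Matrix β γ Q} {G0 : Matrix α' β' Q} {G1 : Matrix β' γ' Q}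
    {p0 : Matrix α α' Q} {p1 : Matrix β β' Q} {p2 : Matrix γ γ' Q}
    (h0 : ∀ i j, (p0 * G0) i j - (F0 * p1) i j ∈ I)
    (h1 : ∀ i j, (p1 * G1) i j - (F1 * p2) i j ∈ I)
    {tF : Matrix α γ Q} {tG : Matrix α' γ' Q} (hF : MRel φ (F0 * F1) tF) (hG : MRel φ (G0 * G1) tG) :
    ∃ (k0 : Matrix α β' Q) (k1 : Matrix β γ' Q), ∀ i j,
      (p0 * tG - tF * p2) i j - (k0 * G1 + F0 * k1) i j ∈ I := by
  obtain ⟨k0, hk0⟩ := MRel.exists (φ := φ) (E := p0 * G0 - F0 * p1) h0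
  obtain ⟨k1, hk1⟩ := MRel.exists (φ := φ) (E := p1 * G1 - F1 * p2) h1
  refine ⟨k0, k1, ?_⟩
  have e1 := (hG.mul_left p0).sub (hF.mul_right p2)
  have e2 := (hk0.mul_right G1).add (hk1.mul_left F0)
  have : p0 * (G0 * G1) - F0 * F1 * p2 = (p0 * G0 - F0 * p1) * G1 + F0 * (p1 * G1 - F1 * p2) := by
    rw [Matrix.sub_mul, Matrix.mul_sub]
    simp only [Matrix.mul_assoc]
    abel
  rw [this] at e1
  exact e1.unique e2

end Rel
end CxT
end Part2

section Part3
open CategoryTheory Opposite Filter IsLocalRing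

namespace CxT

section FG
variable {Q : Type u} [CommRing Q]

def IsCx (I : Ideal Q) {ι : ℕ → Type} [∀ n, Fintype (ι n)]
    (D : ∀ n, Matrix (ι n) (ι (n + 1)) Q) : Prop :=
  ∀ n i j, (D n * D (n + 1)) i j ∈ I

def IsEx (I : Ideal Q) {ι : ℕ → Type} [∀ n, Fintype (ι n)]
    (D : ∀ n, Matrix (ι n) (ι (n + 1)) Q) : Prop :=
  ∀ n (x : ι (n + 1) → Q), (∀ i, (D n).mulVec x i ∈ I) →
    ∃ y : ι (n + 2) → Q, ∀ i, x i - (D (n + 1)).mulVec y i ∈ I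

def FGProp (I : Ideal Q) {c : ℕ} (φ : Fin c → (I →ₗ[Q] (Q ⧸ I))) : Prop :=
  ∀ (ι : ℕ → Type) [∀ n, Fintype (ι n)] [∀ n, DecidableEq (ι n)]
    (D : ∀ n, Matrix (ι n) (ι (n + 1)) Q), IsCx I D → IsEx I D →
    ∀ (t : Fin c → ∀ n, Matrix (ι n) (ι (n + 2)) Q),
      (∀ i n, MRel (φ i) (D n * D (n + 1)) (t i n)) →
    ∀ (Y : Type u) [AddCommGroup Y] [Module Q Y] [Module.Finite Q Y],
      (∀ a ∈ I, ∀ y : Y, a • y = 0) →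
    ∃ n0, ∀ n, n0 ≤ n → ∀ u ∈ Zc D Y (n + 2), ∃ v : Fin c → ι n → Y,
      (∀ i, v i ∈ Zc D Y n) ∧ u - ∑ i, act (t i n) (v i) ∈ Bc D Y (n + 2)

variable {I : Ideal Q} {ι : ℕ → Type} [∀ n, Fintype (ι n)]
    {D : ∀ n, Matrix (ι n) (ι (n + 1)) Q} {c : ℕ} {φ : Fin c → (I →ₗ[Q] (Q ⧸ I))}
    {t : Fin c → ∀ n, Matrix (ι n) (ι (n + 2)) Q}
    {Y : Type v} [AddCommGroup Y] [Module Q Y]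

lemma commutes_of_rel (ht : ∀ i n, MRel (φ i) (D n * D (n + 1)) (t i n))
    (hY : ∀ a ∈ I, ∀ y : Y, a • y = 0) (i : Fin c) : Commutes D Y (t i) := by
  intro n w
  rw [← act_mul, ← act_mul]
  exact act_congr I hY _ _ (rel_comm (D n) (D (n + 1)) (D (n + 2)) (ht i n) (ht i (n + 1))) w

lemma opComm_of_rel (ht : ∀ i n, MRel (φ i) (D n * D (n + 1)) (t i n))
    (hY : ∀ a ∈ I, ∀ y : Y, a • y = 0) :
    OpComm (fun i n => opT (t i) (commutes_of_rel ht hY i) n) := by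
  intro i j n x
  obtain ⟨u, hu, rfl⟩ := cls_surj x
  have hci := commutes_of_rel ht hY i
  have hcj := commutes_of_rel ht hY j
  show opT (t i) _ (n + 2) (opT (t j) _ n (cls u hu)) = opT (t j) _ (n + 2) (opT (t i) _ n (cls u hu))
  rw [opT_cls _ _ _ _ _ (hcj.mem hu), opT_cls _ _ _ _ _ (hci.mem hu),
    opT_cls _ _ _ _ _ (hci.mem (hcj.mem hu)), opT_cls _ _ _ _ _ (hcj.mem (hci.mem hu)), cls_eq]
  have e0 : ∀ m i' j', (t j m * D (m + 2)) i' j' - (D m * t j (m + 1)) i' j' ∈ I := by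
    intro m i' j'
    have := rel_comm (D m) (D (m + 1)) (D (m + 2)) (ht j m) (ht j (m + 1)) i' j'
    rw [← neg_mem_iff, neg_sub] ; exact this
  obtain ⟨k0, k1, hk⟩ := rel_nat (φ := φ i) (F0 := D n) (F1 := D (n + 1)) (G0 := D (n + 2))
    (G1 := D (n + 3)) (p0 := t j n) (p1 := t j (n + 1)) (p2 := t j (n + 2)) (e0 n) (e0 (n + 1))
    (ht i n) (ht i (n + 2))
  have := act_congr I hY _ _ hk u
  rw [act_sub, act_mul, act_mul, act_add, act_mul, act_mul, (mem_Zc.mp hu), map_zero, add_zero] at this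
  exact ⟨_, this.symm⟩

lemma exists_lin {L M N : Type*} [AddCommGroup L] [AddCommGroup M] [AddCommGroup N] [Module Q L]
    [Module Q M] [Module Q N] (p : L →ₗ[Q] M) (hp : Function.Surjective p) (g : L →ₗ[Q] N)
    (h : ∀ x, p x = 0 → g x = 0) : ∃ f : M →ₗ[Q] N, ∀ x, f (p x) = g x := by
  let e := p.quotKerEquivOfSurjective hp
  refine ⟨((LinearMap.ker p).liftQ g (fun x hx => h x hx)).comp e.symm.toLinearMap, fun x => ?_⟩
  have : e.symm (p x) = Submodule.Quotient.mk x := by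
    rw [LinearEquiv.symm_apply_eq]; rfl
  show (LinearMap.ker p).liftQ g (fun x hx => h x hx) (e.symm (p x)) = g x
  rw [this]; rfl

lemma phi_step (I' : Ideal Q) {c : ℕ} (φ' : Fin c → (I' →ₗ[Q] (Q ⧸ I'))) (f : Q)
    (hf : ∀ a, f * a ∈ I' → a ∈ I') (I : Ideal Q) (hI : I = I' ⊔ Ideal.span {f}) :
    (∃ φ : Fin c → (I →ₗ[Q] (Q ⧸ I)), ∀ i a b, Rel (φ' i) a b → Rel (φ i) a b) ∧
    (∃ φ : I →ₗ[Q] (Q ⧸ I), ∀ a r, a ∈ I' → Rel φ (a + f * r) r) := by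
  have hle : I' ≤ I := hI ▸ le_sup_left
  have hfI : f ∈ I := hI ▸ (le_sup_right (a := I') (Ideal.mem_span_singleton_self f))
  let p : (I' × Q) →ₗ[Q] I :=
    { toFun := fun x => ⟨x.1 + f * x.2, I.add_mem (hle x.1.2) (I.mul_mem_right _ hfI)⟩
      map_add' := fun x y => by ext; simp; ring
      map_smul' := fun r x => by ext; simp; ring }
  have hp : Function.Surjective p := by
    rintro ⟨x, hx⟩
    have hx' := hx
    rw [hI, Submodule.mem_sup] at hx'
    obtain ⟨a, ha, b, hb, rfl⟩ := hx'
    obtain ⟨r, rfl⟩ := Ideal.mem_span_singleton'.mp hb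
    exact ⟨(⟨a, ha⟩, r), by ext; simp [p, mul_comm]⟩
  have hker : ∀ x, p x = 0 → x.2 ∈ I' := by
    rintro ⟨⟨a, ha⟩, r⟩ hx
    have h1 : a + f * r = 0 := congrArg Subtype.val hx
    apply hf
    rw [show f * r = -a by linear_combination h1]
    exact neg_mem ha
  constructor
  · have : ∀ i, ∃ φ : I →ₗ[Q] (Q ⧸ I), ∀ a b, Rel (φ' i) a b → Rel φ a b := by
      intro i
      obtain ⟨φ, hφ⟩ := exists_lin p hp
        ((Submodule.mapQ I' I LinearMap.id (by simpa using hle)).comp ((φ' i).comp (LinearMap.fst Q I' Q))) (by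
          rintro ⟨⟨a, ha⟩, r⟩ hx
          have hr : r ∈ I' := hker _ hx
          have h1 : a + f * r = 0 := congrArg Subtype.val hx
          have h2 : (⟨a, ha⟩ : I') = (-f) • ⟨r, hr⟩ := by
            ext; simp; linear_combination h1
          simp only [LinearMap.comp_apply, LinearMap.fst_apply]
          rw [h2, map_smul, map_smul]
          obtain ⟨s, hs⟩ := Ideal.Quotient.mk_surjective (φ' i ⟨r, hr⟩)
          rw [← hs]
          show (-f) • (Ideal.Quotient.mk I s) = 0
          have : (-f) • (Ideal.Quotient.mk I s) = Ideal.Quotient.mk I (-f * s) := rfl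
          rw [this, Ideal.Quotient.eq_zero_iff_mem]
          exact I.mul_mem_right _ (neg_mem hfI))
      refine ⟨φ, ?_⟩
      rintro a b ⟨h1, h2⟩
      refine ⟨hle h1, ?_⟩
      have := hφ (⟨a, h1⟩, 0)
      have h3 : p (⟨a, h1⟩, 0) = ⟨a, hle h1⟩ := by ext; simp [p]
      rw [h3] at this
      rw [this]
      simp only [LinearMap.comp_apply, LinearMap.fst_apply]
      rw [← h2]; rfl
    choose φ hφ using this
    exact ⟨φ, hφ⟩
  · obtain ⟨φ, hφ⟩ := exists_lin p hp ((Submodule.mkQ I).comp (LinearMap.snd Q I' Q)) (by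
      intro x hx
      have := hle (hker x hx)
      exact Ideal.Quotient.eq_zero_iff_mem.mpr this)
    refine ⟨φ, fun a r ha => ⟨I.add_mem (hle ha) (I.mul_mem_right _ hfI), ?_⟩⟩
    have := hφ (⟨a, ha⟩, r)
    exact this.symm

lemma act_fromCols_one_zero {α β : Type} [Fintype α] [Fintype β] [DecidableEq α] (u : α → Y) :
    act (Matrix.fromCols (1 : Matrix α α Q) (0 : Matrix α β Q)) u = Sum.elim u 0 := by
  ext j
  cases j with
  | inl j => simp [act_apply, Matrix.one_apply]
  | inr j => simp [act_apply]

set_option maxHeartbeats 2000000 in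
lemma fg_step [IsNoetherianRing Q] (I' : Ideal Q) {c : ℕ} (φ' : Fin c → (I' →ₗ[Q] (Q ⧸ I')))
    (hFG : FGProp I' φ') (f : Q)
    (hf : ∀ a, f * a ∈ I' → a ∈ I') (I : Ideal Q) (hI : I = I' ⊔ Ideal.span {f}) :
    ∃ φ : Fin (c + 1) → (I →ₗ[Q] (Q ⧸ I)), FGProp I φ := by
  classical
  obtain ⟨⟨φ1, hφ1⟩, ⟨φ0, hφ0⟩⟩ := phi_step I' φ' f hf I hI
  have hle : I' ≤ I := hI ▸ le_sup_left
  have hfI : f ∈ I := hI ▸ (le_sup_right (a := I') (Ideal.mem_span_singleton_self f))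
  have hdec : ∀ x ∈ I, ∃ r, x - f * r ∈ I' := by
    intro x hx
    rw [hI, Submodule.mem_sup] at hx
    obtain ⟨a, ha, b, hb, rfl⟩ := hx
    obtain ⟨r, rfl⟩ := Ideal.mem_span_singleton'.mp hb
    exact ⟨r, by rw [mul_comm f r, add_sub_cancel_right]; exact ha⟩
  refine ⟨Fin.cons φ0 φ1, ?_⟩
  intro ι _ _ D hcx hex t ht Y _ _ _ hY
  have hY' : ∀ a ∈ I', ∀ y : Y, a • y = 0 := fun a ha => hY a (hle ha)
  have hr : ∀ n, ∃ r : Matrix (ι n) (ι (n + 2)) Q, ∀ i j,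
      (D n * D (n + 1)) i j - f * r i j ∈ I' := by
    intro n
    choose r hr using fun i j => hdec _ (hcx n i j)
    exact ⟨r, hr⟩
  choose r hr using hr
  have hr0 : ∀ n, MRel φ0 (D n * D (n + 1)) (r n) := by
    intro n i j
    have := hφ0 _ (r n i j) (hr n i j)
    rwa [sub_add_cancel] at this
  -- the complex G
  let κ : ℕ → Type := fun n => ι (n + 1) ⊕ ι n
  let G : ∀ n, Matrix (κ n) (κ (n + 1)) Q := fun n =>
    Matrix.fromBlocks (D (n + 1)) (f • 1) (-(r n)) (-(D n))
  have hGcx : IsCx I' G := by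
    intro n i j
    have e : G n * G (n + 1) = Matrix.fromBlocks
        (D (n + 1) * D (n + 2) + (f • (1 : Matrix (ι (n + 1)) (ι (n + 1)) Q)) * (-(r (n + 1))))
        (D (n + 1) * (f • (1 : Matrix (ι (n + 2)) (ι (n + 2)) Q)) + (f • (1 : Matrix (ι (n + 1)) (ι (n + 1)) Q)) * (-(D (n + 1))))
        (-(r n) * D (n + 2) + (-(D n)) * (-(r (n + 1))))
        (-(r n) * (f • (1 : Matrix (ι (n + 2)) (ι (n + 2)) Q)) + (-(D n)) * (-(D (n + 1)))) :=
      Matrix.fromBlocks_multiply _ _ _ _ _ _ _ _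
    rw [e]
    rcases i with i | i <;> rcases j with j | j
    · rw [Matrix.fromBlocks_apply₁₁]
      have := hr (n + 1) i j
      simpa [Matrix.add_apply, sub_eq_add_neg] using this
    · rw [Matrix.fromBlocks_apply₁₂]
      simp
    · rw [Matrix.fromBlocks_apply₂₁]
      apply hf
      have e1 : (f * ((-(r n) * D (n + 2) + (-(D n)) * (-(r (n + 1)))) i j)) =
          (∑ k, ((D n * D (n + 1)) i k - f * r n i k) * D (n + 2) k j)
          - ∑ k, D n i k * ((D (n + 1) * D (n + 2)) k j - f * r (n + 1) k j) := by
        have e2 : ((D n * D (n + 1)) * D (n + 2)) i j = (D n * (D (n + 1) * D (n + 2))) i j := by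
          rw [Matrix.mul_assoc]
        rw [Matrix.mul_apply, Matrix.mul_apply (N := D (n + 1) * D (n + 2))] at e2
        simp only [sub_mul, mul_sub, Finset.sum_sub_distrib]
        rw [e2]
        simp only [Matrix.add_apply, Matrix.neg_mul, Matrix.mul_neg, neg_neg, Matrix.neg_apply]
        rw [Matrix.mul_apply, Matrix.mul_apply]
        rw [mul_add, mul_neg, Finset.mul_sum, Finset.mul_sum]
        have e3 : ∀ k, f * (D n i k * r (n + 1) k j) = D n i k * (f * r (n + 1) k j) := fun k => by ring
        have e4 : ∀ k, f * (r n i k * D (n + 2) k j) = f * r n i k * D (n + 2) k j := fun k => by ring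
        simp only [e3, e4]
        ring
      rw [e1]
      exact I'.sub_mem (Ideal.sum_mem _ fun k _ => I'.mul_mem_right _ (hr n i k))
        (Ideal.sum_mem _ fun k _ => I'.mul_mem_left _ (hr (n + 1) k j))
    · rw [Matrix.fromBlocks_apply₂₂]
      have := hr n i j
      simpa [Matrix.add_apply, sub_eq_add_neg, add_comm] using this
  have hmv : ∀ n (x : ι (n + 2) → Q) (y : ι (n + 1) → Q), (G n).mulVec (Sum.elim x y) =
      Sum.elim ((D (n + 1)).mulVec x + f • y) (-(r n).mulVec x - (D n).mulVec y) := by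
    intro n x y
    show (Matrix.fromBlocks _ _ _ _).mulVec (Sum.elim x y) = _
    rw [Matrix.fromBlocks_mulVec]
    simp [Matrix.smul_mulVec, Matrix.neg_mulVec, sub_eq_add_neg, Function.comp_def]
  have hGex : IsEx I' G := by
    intro n z hz
    obtain ⟨x, y, rfl⟩ : ∃ x y, z = Sum.elim x y := ⟨z ∘ Sum.inl, z ∘ Sum.inr, (Sum.elim_comp_inl_inr z).symm⟩
    rw [hmv] at hz
    have h1 : ∀ i, (D (n + 1)).mulVec x i + f * y i ∈ I' := fun i => hz (Sum.inl i)
    obtain ⟨w, hw⟩ := hex (n + 1) x (by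
      intro i
      have := hle (h1 i)
      exact (I.add_mem_iff_left (I.mul_mem_right _ hfI)).mp this)
    choose s hs using fun i => hdec _ (hw i)
    refine ⟨Sum.elim w s, ?_⟩
    rw [hmv]
    have hx' : ∀ i, x i - ((D (n + 2)).mulVec w i + f * s i) ∈ I' := by
      intro i; have := hs i; rwa [sub_sub] at this
    rintro (i | i)
    · exact hx' i
    · show y i - (-(r (n + 1)).mulVec w i - (D (n + 1)).mulVec s i) ∈ I'
      apply hf
      -- compare with G n ∘ G (n+1)
      have h2 : (G n).mulVec ((G (n + 1)).mulVec (Sum.elim w s)) (Sum.inl i) ∈ I' := by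
        rw [Matrix.mulVec_mulVec]
        exact Ideal.sum_mem _ fun k _ => I'.mul_mem_right _ (hGcx n _ k)
      rw [hmv, hmv] at h2
      have h3 : (D (n + 1)).mulVec (x - ((D (n + 2)).mulVec w + f • s)) i ∈ I' :=
        Ideal.sum_mem _ fun k _ => I'.mul_mem_left _ (hx' k)
      rw [Matrix.mulVec_sub] at h3
      have h4 := I'.sub_mem (I'.sub_mem (h1 i) h2) h3
      convert h4 using 1
      simp only [Sum.elim_inl, Pi.sub_apply, Pi.add_apply, Pi.smul_apply, Pi.neg_apply, smul_eq_mul]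
      ring
  have ht' : ∀ i : Fin c, ∀ n, ∃ T, MRel (φ' i) (G n * G (n + 1)) T :=
    fun i n => MRel.exists (hGcx n)
  choose t' ht' using ht'
  have hcomm := opComm_of_rel (Y := Y) ht' hY'
  have hev : EvGen (fun i n => opT (D := G) (Y := Y) (t' i) (commutes_of_rel ht' hY' i) n) := by
    obtain ⟨n0, hn0⟩ := hFG κ G hGcx hGex t' ht' Y hY'
    refine ⟨n0, fun n hn x => ?_⟩
    obtain ⟨u, hu, rfl⟩ := cls_surj x
    obtain ⟨v, hv, hvu⟩ := hn0 n hn u hu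
    refine ⟨fun i => cls (v i) (hv i), ?_⟩
    have : ∀ i, opT (D := G) (Y := Y) (t' i) (commutes_of_rel ht' hY' i) n (cls (v i) (hv i)) =
        cls (act (t' i n) (v i)) ((commutes_of_rel ht' hY' i).mem (hv i)) := fun i => rfl
    simp only [this]
    rw [← cls_sum, cls_eq]
    exact hvu
  have hnoeth := noeth_of_evGen hcomm hev
  -- pull back
  have hpb : ∀ n (u : ι (n + 1) → Y), u ∈ Zc D Y (n + 1) → (Sum.elim u 0 : κ n → Y) ∈ Zc G Y n := by
    intro n u hu
    rw [mem_Zc] at *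
    ext j
    rcases j with j | j
    · simpa [act_apply, G, κ, Fintype.sum_sum_type] using congrFun hu j
    · simp only [act_apply, G, κ, Fintype.sum_sum_type]
      simp only [Sum.elim_inl, Matrix.fromBlocks_apply₁₂, Sum.elim_inr, Pi.zero_apply, smul_zero, Finset.sum_const_zero, add_zero]
      exact Finset.sum_eq_zero fun i _ => hY _ (by
        rw [Matrix.smul_apply, smul_eq_mul]; exact I.mul_mem_right _ hfI) _
  have hnat : ∀ i : Fin c, ∀ n (u : ι (n + 1) → Y), u ∈ Zc D Y (n + 1) →
      ∃ w, act (t' i n) (Sum.elim u 0 : κ n → Y) - (Sum.elim (act (t i.succ (n + 1)) u) 0 : κ (n + 2) → Y)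
        = act (G (n + 1)) w := by
    intro i n u hu
    have e0 : ∀ m i' j', ((Matrix.fromCols (1 : Matrix (ι (m + 1)) (ι (m + 1)) Q) (0 : Matrix (ι (m + 1)) (ι m) Q) : Matrix (ι (m + 1)) (κ m) Q) * G m) i' j' -
        (D (m + 1) * (Matrix.fromCols (1 : Matrix (ι (m + 2)) (ι (m + 2)) Q) (0 : Matrix (ι (m + 2)) (ι (m + 1)) Q) : Matrix (ι (m + 2)) (κ (m + 1)) Q)) i' j' ∈ I := by
      intro m i' j'
      have e1 : ((Matrix.fromCols (1 : Matrix (ι (m + 1)) (ι (m + 1)) Q) (0 : Matrix (ι (m + 1)) (ι m) Q) : Matrix (ι (m + 1)) (κ m) Q) * G m) = Matrix.fromCols (D (m + 1)) (f • 1) := by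
        show Matrix.fromCols _ _ * Matrix.fromBlocks _ _ _ _ = _
        rw [Matrix.fromCols_mul_fromBlocks]; simp
      have e2 : (D (m + 1) * (Matrix.fromCols (1 : Matrix (ι (m + 2)) (ι (m + 2)) Q) (0 : Matrix (ι (m + 2)) (ι (m + 1)) Q) : Matrix (ι (m + 2)) (κ (m + 1)) Q)) = Matrix.fromCols (D (m + 1)) 0 := by
        rw [Matrix.mul_fromCols]; simp
      rw [e1, e2]
      rcases j' with j' | j'
      · simp
      · simp only [Matrix.fromCols_apply_inr, Matrix.smul_apply, Matrix.zero_apply, sub_zero, smul_eq_mul]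
        exact I.mul_mem_right _ hfI
    have hG' : MRel (φ1 i) (G n * G (n + 1)) (t' i n) := fun a b => hφ1 i _ _ (ht' i n a b)
    have hF' : MRel (φ1 i) (D (n + 1) * D (n + 2)) (t i.succ (n + 1)) := by
      have := ht i.succ (n + 1)
      rwa [Fin.cons_succ] at this
    obtain ⟨k0, k1, hk⟩ := rel_nat (φ := φ1 i) (e0 n) (e0 (n + 1)) hF' hG'
    have := act_congr I hY _ _ hk u
    rw [act_sub, act_mul, act_mul, act_add, act_mul, act_mul, (mem_Zc.mp hu), map_zero, add_zero,
      act_fromCols_one_zero, act_fromCols_one_zero] at this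
    exact ⟨_, this⟩
  let W : ∀ n, Submodule Q (Coh G Y n) := fun n =>
    { carrier := {x | ∃ u, ∃ hu : u ∈ Zc D Y (n + 1), x = cls (Sum.elim u 0 : κ n → Y) (hpb n u hu)}
      zero_mem' := ⟨0, zero_mem _, by
        symm; rw [cls_eq_zero]
        have : (Sum.elim 0 0 : κ n → Y) = 0 := by ext j; rcases j with j | j <;> rfl
        rw [this]; exact zero_mem _⟩
      add_mem' := by
        rintro _ _ ⟨u, hu, rfl⟩ ⟨v, hv, rfl⟩
        refine ⟨u + v, add_mem hu hv, ?_⟩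
        rw [← cls_add]
        congr 1
        ext j; rcases j with j | j <;> simp
      smul_mem' := by
        rintro a _ ⟨u, hu, rfl⟩
        refine ⟨a • u, Submodule.smul_mem _ a hu, ?_⟩
        rw [← cls_smul]
        congr 1
        ext j; rcases j with j | j <;> simp }
  have htc := fun i => commutes_of_rel (Y := Y) ht hY i
  obtain ⟨n1, hn1⟩ := stable_evGen hcomm hnoeth W (by
    rintro i n _ ⟨u, hu, rfl⟩
    refine ⟨act (t i.succ (n + 1)) u, (htc i.succ).mem hu, ?_⟩
    rw [opT_cls _ _ _ _ _ ((commutes_of_rel ht' hY' i).mem (hpb n u hu)), cls_eq]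
    obtain ⟨w, hw⟩ := hnat i n u hu
    exact ⟨w, hw.symm⟩)
  refine ⟨n1 + 1, fun n hn u hu => ?_⟩
  obtain ⟨n, rfl⟩ : ∃ m, n = m + 1 := ⟨n - 1, by omega⟩
  obtain ⟨y, hy, hsum⟩ := hn1 n (by omega) (cls (Sum.elim u 0 : κ (n + 2) → Y) (hpb (n + 2) u hu)) ⟨u, hu, rfl⟩
  choose v hv hyv using hy
  have h1 : ∀ i, opT (D := G) (Y := Y) (t' i) (commutes_of_rel ht' hY' i) n (y i) =
      cls (Sum.elim (act (t i.succ (n + 1)) (v i)) 0 : κ (n + 2) → Y)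
        (hpb (n + 2) _ ((htc i.succ).mem (hv i))) := by
    intro i
    rw [hyv i, opT_cls _ _ _ _ _ ((commutes_of_rel ht' hY' i).mem (hpb n _ (hv i))), cls_eq]
    obtain ⟨w, hw⟩ := hnat i n (v i) (hv i)
    exact ⟨w, hw.symm⟩
  simp only [h1] at hsum
  rw [← cls_sum, cls_eq] at hsum
  obtain ⟨w, hw⟩ := hsum
  obtain ⟨a, b, rfl⟩ : ∃ (a : ι (n + 2) → Y) (b : ι (n + 1) → Y), w = Sum.elim a b :=
    ⟨w ∘ Sum.inl, w ∘ Sum.inr, (Sum.elim_comp_inl_inr w).symm⟩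
  have hb : act (D (n + 1)) b = 0 := by
    ext j
    have := congrFun hw (Sum.inr j)
    simp only [act_apply, G, κ, Fintype.sum_sum_type, Sum.elim_inl, Sum.elim_inr,
      Matrix.fromBlocks_apply₁₂, Matrix.fromBlocks_apply₂₂] at this
    rw [Finset.sum_eq_zero (fun i _ => hY _ (by
        rw [Matrix.smul_apply, smul_eq_mul]; exact I.mul_mem_right _ hfI) _)] at this
    simp at this
    simpa [act_apply] using this
  have ha : u - ∑ i : Fin c, act (t i.succ (n + 1)) (v i) = act (D (n + 2)) a - act (r (n + 1)) b := by
    ext j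
    have := congrFun hw (Sum.inl j)
    simp only [act_apply, G, κ, Fintype.sum_sum_type, Sum.elim_inl, Sum.elim_inr,
      Matrix.fromBlocks_apply₁₁, Matrix.fromBlocks_apply₂₁] at this
    simp [act_apply] at this ⊢
    rw [← this]; abel
  have hrt : act (r (n + 1)) b = act (t 0 (n + 1)) b := by
    apply act_congr I hY
    have := ht 0 (n + 1)
    rw [Fin.cons_zero] at this
    exact (hr0 (n + 1)).unique this
  refine ⟨Fin.cons (-b) v, ?_, ?_⟩
  · intro i
    refine Fin.cases ?_ ?_ i
    · rw [Fin.cons_zero]; exact neg_mem hb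
    · intro i; rw [Fin.cons_succ]; exact hv i
  · rw [Fin.sum_univ_succ]
    simp only [Fin.cons_zero, Fin.cons_succ]
    refine ⟨a, ?_⟩
    rw [map_neg, ← hrt]
    have : act (D (n + 2)) a = u - ∑ i : Fin c, act (t i.succ (n + 1)) (v i) + act (r (n + 1)) b := by
      rw [ha]; abel
    rw [this]; abel

end FG
end CxT
end Part3

section Part4
open CategoryTheory Opposite Filter IsLocalRing

namespace CxT

section Pkg

lemma fg_list {Q : Type u} [CommRing Q] [IsNoetherianRing Q]
    (hbase : ∀ φ : Fin 0 → ((⊥ : Ideal Q) →ₗ[Q] (Q ⧸ (⊥ : Ideal Q))), FGProp (⊥ : Ideal Q) φ) (rs : List Q) :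
    RingTheory.Sequence.IsWeaklyRegular Q rs →
    ∃ (c : ℕ) (φ : Fin c → (Ideal.ofList rs →ₗ[Q] (Q ⧸ Ideal.ofList rs))), FGProp (Ideal.ofList rs) φ := by
  induction rs using List.reverseRecOn with
  | nil =>
    intro _
    rw [Ideal.ofList_nil]
    exact ⟨0, Fin.elim0, hbase _⟩
  | append_singleton rs f ih =>
    intro h
    rw [RingTheory.Sequence.isWeaklyRegular_append_iff, RingTheory.Sequence.isWeaklyRegular_singleton_iff] at h
    obtain ⟨c, φ, hφ⟩ := ih h.1
    have hf : ∀ a, f * a ∈ Ideal.ofList rs → a ∈ Ideal.ofList rs := by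
      intro a ha
      have h2 := h.2
      rw [smul_eq_mul, Ideal.mul_top] at h2
      have := @h2 (Submodule.Quotient.mk a) 0 (by
        simp only [smul_zero]
        rw [← Submodule.Quotient.mk_smul, Submodule.Quotient.mk_eq_zero]
        exact ha)
      exact (Submodule.Quotient.mk_eq_zero _).mp this
    obtain ⟨φ2, h2⟩ := fg_step _ φ hφ f hf (Ideal.ofList (rs ++ [f])) (by
      rw [Ideal.ofList_append, Ideal.ofList_singleton])
    exact ⟨c + 1, φ2, h2⟩

structure OpPkg (B : Type u) [CommRing B] (c : ℕ) where
  τ : ∀ {α β γ : Type} [Fintype β], Fin c → Matrix α β B → Matrix β γ B → Matrix α γ B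
  comm : ∀ {α β γ δ : Type} [Fintype α] [Fintype β] [Fintype γ] [Fintype δ] (i : Fin c)
    (D : Matrix α β B) (E : Matrix β γ B) (F : Matrix γ δ B), D * E = 0 → E * F = 0 →
    D * τ i E F = τ i D E * F
  nat : ∀ {α β γ α' β' γ' : Type} [Fintype α] [Fintype β] [Fintype γ] [Fintype α'] [Fintype β']
    [Fintype γ'] (i : Fin c)
    (F0 : Matrix α β B) (F1 : Matrix β γ B) (G0 : Matrix α' β' B) (G1 : Matrix β' γ' B)
    (p0 : Matrix α α' B) (p1 : Matrix β β' B) (p2 : Matrix γ γ' B),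
    F0 * F1 = 0 → G0 * G1 = 0 → p0 * G0 = F0 * p1 → p1 * G1 = F1 * p2 →
    ∃ (k0 : Matrix α β' B) (k1 : Matrix β γ' B),
      p0 * τ i G0 G1 - τ i F0 F1 * p2 = k0 * G1 + F0 * k1
  fg : ∀ (ι : ℕ → Type) [∀ n, Fintype (ι n)] [∀ n, DecidableEq (ι n)]
    (D : ∀ n, Matrix (ι n) (ι (n + 1)) B), (∀ n, D n * D (n + 1) = 0) →
    (∀ n (x : ι (n + 1) → B), (D n).mulVec x = 0 → ∃ y, x = (D (n + 1)).mulVec y) →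
    ∀ (Y : Type u) [AddCommGroup Y] [Module B Y] [Module.Finite B Y],
    ∃ n0, ∀ n, n0 ≤ n → ∀ u ∈ Zc D Y (n + 2), ∃ v : Fin c → ι n → Y,
      (∀ i, v i ∈ Zc D Y n) ∧ u - ∑ i, act (τ i (D n) (D (n + 1))) (v i) ∈ Bc D Y (n + 2)

set_option maxHeartbeats 1000000 in
lemma exists_pkg {Q B : Type u} [CommRing Q] [CommRing B] (g : Q →+* B) (hg : Function.Surjective g)
    (I : Ideal Q) (hI : RingHom.ker g = I) {c : ℕ} (φ : Fin c → (I →ₗ[Q] (Q ⧸ I)))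
    (hFG : FGProp I φ) : Nonempty (OpPkg B c) := by
  classical
  have hmem : ∀ x, x ∈ I ↔ g x = 0 := fun x => by rw [← hI, RingHom.mem_ker]
  let σ : B → Q := Function.surjInv hg
  have hσ : ∀ b, g (σ b) = b := Function.surjInv_eq hg
  have hσm : ∀ {α β : Type} (D : Matrix α β B), (D.map σ).map g = D := by
    intro α β D; ext a b; simp [hσ]
  let τ : ∀ {α β γ : Type} [Fintype β], Fin c → Matrix α β B → Matrix β γ B → Matrix α γ B :=
    fun {α β γ} _ i D E => Matrix.of fun a b =>
      if h : ((D.map σ) * (E.map σ)) a b ∈ I then g (Rel.exists (φ := φ i) h).choose else 0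
  have hmap : ∀ {α β γ : Type} [Fintype β] (D : Matrix α β Q) (E : Matrix β γ Q),
      (D * E).map g = D.map g * E.map g := fun D E => Matrix.map_mul
  have hin : ∀ {α β γ : Type} [Fintype β] (D : Matrix α β B) (E : Matrix β γ B), D * E = 0 →
      ∀ a b, ((D.map σ) * (E.map σ)) a b ∈ I := by
    intro α β γ _ D E h a b
    rw [hmem]
    have := congrFun (congrFun (hmap (D.map σ) (E.map σ)) a) b
    rw [hσm, hσm, h] at this
    exact this
  have hτ : ∀ {α β γ : Type} [Fintype β] (i : Fin c) (D : Matrix α β B) (E : Matrix β γ B),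
      D * E = 0 → ∃ T : Matrix α γ Q, MRel (φ i) ((D.map σ) * (E.map σ)) T ∧ T.map g = τ i D E := by
    intro α β γ _ i D E h
    have hi := hin D E h
    refine ⟨Matrix.of fun a b => (Rel.exists (φ := φ i) (hi a b)).choose, ?_, ?_⟩
    · intro a b
      exact (Rel.exists (φ := φ i) (hi a b)).choose_spec
    · ext a b
      simp only [Matrix.map_apply, Matrix.of_apply, τ]
      rw [dif_pos (hi a b)]
  have hzero : ∀ {α β : Type} (D E : Matrix α β Q), (∀ i j, D i j - E i j ∈ I) →
      D.map g = E.map g := by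
    intro α β D E h
    ext a b
    have := (hmem _).mp (h a b)
    rw [map_sub, sub_eq_zero] at this
    exact this
  refine ⟨{ τ := τ, comm := ?_, nat := ?_, fg := ?_ }⟩
  · intro α β γ δ _ _ _ _ i D E F h1 h2
    obtain ⟨T1, hT1, hT1'⟩ := hτ i D E h1
    obtain ⟨T2, hT2, hT2'⟩ := hτ i E F h2
    have := hzero _ _ (rel_comm (D.map σ) (E.map σ) (F.map σ) hT1 hT2)
    rw [hmap, hmap, hσm, hσm, hT1', hT2'] at this
    exact this
  · intro α β γ α' β' γ' _ _ _ _ _ _ i F0 F1 G0 G1 p0 p1 p2 hF hG h0 h1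
    obtain ⟨TF, hTF, hTF'⟩ := hτ i F0 F1 hF
    obtain ⟨TG, hTG, hTG'⟩ := hτ i G0 G1 hG
    have aux : ∀ {α β β' γ : Type} [Fintype β] [Fintype β'] (P : Matrix α β B) (Q : Matrix β γ B)
        (P' : Matrix α β' B) (Q' : Matrix β' γ B), P * Q = P' * Q' → ∀ a b,
        (P.map σ * Q.map σ) a b - (P'.map σ * Q'.map σ) a b ∈ I := by
      intro α β β' γ _ _ P Q P' Q' h a b
      rw [hmem, map_sub]
      have e1 := congrFun (congrFun (hmap (P.map σ) (Q.map σ)) a) b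
      have e2 := congrFun (congrFun (hmap (P'.map σ) (Q'.map σ)) a) b
      rw [hσm, hσm] at e1 e2
      rw [Matrix.map_apply] at e1 e2
      rw [e1, e2, h, sub_self]
    obtain ⟨k0, k1, hk⟩ := rel_nat (aux _ _ _ _ h0) (aux _ _ _ _ h1) hTF hTG
    refine ⟨k0.map g, k1.map g, ?_⟩
    have := hzero _ _ hk
    rw [Matrix.map_sub, Matrix.map_add, hmap, hmap, hmap, hmap, hσm, hσm, hσm, hσm, hTF', hTG'] at this
    · exact this
    · intros; simp
    · intros; simp
  · intro ι _ _ D hcx hex Y _ _ _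
    letI : Module Q Y := Module.compHom Y g
    have hsm : ∀ (q : Q) (y : Y), q • y = g q • y := fun _ _ => rfl
    letI : Module.Finite Q Y := by
      obtain ⟨s, hs⟩ := (Module.Finite.fg_top : (⊤ : Submodule B Y).FG)
      refine ⟨⟨s, ?_⟩⟩
      rw [eq_top_iff]
      intro y _
      have hy : y ∈ Submodule.span B (s : Set Y) := by rw [hs]; trivial
      induction hy using Submodule.span_induction with
      | mem x hx => exact Submodule.subset_span hx
      | zero => exact zero_mem _
      | add x y _ _ hx hy => exact add_mem (hx trivial) (hy trivial)
      | smul r x _ hx =>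
        obtain ⟨q, rfl⟩ := hg r
        rw [← hsm]; exact Submodule.smul_mem _ _ (hx trivial)
    choose T hT hT' using fun (i : Fin c) (n : ℕ) => hτ i (D n) (D (n + 1)) (hcx n)
    have hact : ∀ {α β : Type} [Fintype α] [Fintype β] (E : Matrix α β Q) (u : α → Y),
        act E u = act (E.map g) u := by
      intro α β _ _ E u; ext j; simp [act_apply, hsm]
    obtain ⟨n0, hn0⟩ := hFG ι (fun n => (D n).map σ) (fun n => hin _ _ (hcx n)) (by
      intro n x hx
      have hmv : ∀ {α β : Type} [Fintype β] (E : Matrix α β B) (x : β → Q) i,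
          g ((E.map σ).mulVec x i) = E.mulVec (fun j => g (x j)) i := by
        intro α β _ E x i; simp [Matrix.mulVec, dotProduct, hσ]
      obtain ⟨y, hy⟩ := hex n (fun j => g (x j)) (by
        ext i; rw [← hmv]; exact (hmem _).mp (hx i))
      refine ⟨fun j => σ (y j), fun i => ?_⟩
      rw [hmem, map_sub, hmv]
      simp only [hσ]
      rw [← hy, sub_self]) T hT Y (by
      intro a ha y
      rw [hsm, (hmem a).mp ha, zero_smul])
    refine ⟨n0, fun n hn u hu => ?_⟩
    obtain ⟨v, hv, hvu⟩ := hn0 n hn u (by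
      rw [mem_Zc, hact, hσm]; exact hu)
    refine ⟨v, fun i => ?_, ?_⟩
    · have := hv i
      rw [mem_Zc, hact, hσm] at this
      exact this
    · obtain ⟨w, hw⟩ := hvu
      refine ⟨w, ?_⟩
      rw [hact, hσm] at hw
      rw [hw]
      congr 1
      refine Finset.sum_congr rfl fun i _ => ?_
      rw [hact, hT']

end Pkg
end CxT
end Part4

section Part5
open CategoryTheory Opposite Filter IsLocalRing
namespace CxT

section Bridge
variable {R : Type u} [CommRing R] {ι : ℕ → Type} [∀ n, Fintype (ι n)]

/-- the chain complex of free modules given by matrices -/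
noncomputable def mcx (D : ∀ n, Matrix (ι n) (ι (n + 1)) R) (hD : ∀ n, D n * D (n + 1) = 0) :
    ChainComplex (ModuleCat.{u} R) ℕ :=
  ChainComplex.of (fun n => ModuleCat.of R (ι n → R)) (fun n => ModuleCat.ofHom (D n).mulVecLin)
    (fun n => by
      rw [← ModuleCat.ofHom_comp, ← Matrix.mulVecLin_mul, hD]
      ext; simp)

lemma mcx_d (D : ∀ n, Matrix (ι n) (ι (n + 1)) R) (hD : ∀ n, D n * D (n + 1) = 0) (n : ℕ) :
    (mcx D hD).d (n + 1) n = ModuleCat.ofHom (D n).mulVecLin := by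
  simp [mcx, ChainComplex.of_d]

lemma mcx_exactAt (D : ∀ n, Matrix (ι n) (ι (n + 1)) R) (hD : ∀ n, D n * D (n + 1) = 0)
    (hex : ∀ n x, (D n).mulVec x = 0 → ∃ y, x = (D (n + 1)).mulVec y) (n : ℕ) :
    (mcx D hD).ExactAt (n + 1) := by
  rw [HomologicalComplex.exactAt_iff' _ (n + 1 + 1) (n + 1) n (by simp) (by simp)]
  rw [ShortComplex.moduleCat_exact_iff]
  intro x hx
  simp only [HomologicalComplex.sc', HomologicalComplex.shortComplexFunctor', mcx_d] at hx ⊢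
  obtain ⟨y, hy⟩ := hex n x hx
  exact ⟨y, hy.symm⟩

lemma mcx_projective (D : ∀ n, Matrix (ι n) (ι (n + 1)) R) (hD : ∀ n, D n * D (n + 1) = 0) (n : ℕ) :
    Projective ((mcx D hD).X n) := by
  change Projective (ModuleCat.of R (ι n → R))
  rw [← IsProjective.iff_projective]
  infer_instance

lemma mcx_eps (D : ∀ n, Matrix (ι n) (ι (n + 1)) R) (hD : ∀ n, D n * D (n + 1) = 0)
    {X : Type u} [AddCommGroup X] [Module R X] (ε : (ι 0 → R) →ₗ[R] X)
    (h0 : Function.Exact (D 0).mulVecLin ε) :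
    (mcx D hD).d 1 0 ≫ (ModuleCat.ofHom ε : (mcx D hD).X 0 ⟶ ModuleCat.of R X) = 0 := by
  rw [mcx_d]
  ext x
  exact congrFun h0.comp_eq_zero x

/-- matrices give projective resolutions -/
noncomputable def mres (D : ∀ n, Matrix (ι n) (ι (n + 1)) R) (hD : ∀ n, D n * D (n + 1) = 0)
    (hex : ∀ n x, (D n).mulVec x = 0 → ∃ y, x = (D (n + 1)).mulVec y)
    {X : Type u} [AddCommGroup X] [Module R X] (ε : (ι 0 → R) →ₗ[R] X)
    (hs : Function.Surjective ε) (h0 : Function.Exact (D 0).mulVecLin ε) :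
    ProjectiveResolution (ModuleCat.of R X) where
  complex := mcx D hD
  projective n := mcx_projective D hD n
  π := (ChainComplex.toSingle₀Equiv _ _).symm ⟨ModuleCat.ofHom ε, mcx_eps D hD ε h0⟩
  quasiIso := ⟨fun n => by
    cases n with
    | zero =>
      rw [ChainComplex.quasiIsoAt₀_iff, ShortComplex.quasiIso_iff_of_zeros']
      · refine (ShortComplex.exact_and_epi_g_iff_of_iso (S₂ := ShortComplex.mk ((mcx D hD).d 1 0)
          (ModuleCat.ofHom ε : (mcx D hD).X 0 ⟶ ModuleCat.of R X) (mcx_eps D hD ε h0)) ?_).2 ⟨?_, ?_⟩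
        · refine ShortComplex.isoMk (Iso.refl _) (Iso.refl _) (Iso.refl _) ?_ ?_
          · exact (Category.id_comp _).trans (Category.comp_id _).symm
          · refine (Category.id_comp _).trans ?_
            refine Eq.trans ?_ (Category.comp_id _).symm
            exact (ChainComplex.toSingle₀Equiv_symm_apply_f_zero (C := mcx D hD)
              (ModuleCat.ofHom ε : (mcx D hD).X 0 ⟶ ModuleCat.of R X) (mcx_eps D hD ε h0)).symm
        · rw [ShortComplex.moduleCat_exact_iff]
          intro x hx
          obtain ⟨y, hy⟩ := (h0 x).1 hx
          refine ⟨y, ?_⟩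
          simp only [mcx_d]
          exact hy
        · exact (ModuleCat.epi_iff_surjective _).2 hs
      all_goals rfl
    | succ n =>
      rw [quasiIsoAt_iff_exactAt']
      · exact mcx_exactAt D hD hex n
      · exact ChainComplex.exactAt_succ_single_obj _ _⟩

/-- cochains as linear maps -/
noncomputable def cochainLin {α : Type} [Fintype α] {Y : Type u} [AddCommGroup Y] [Module R Y]
    (u : α → Y) : (α → R) →ₗ[R] Y := ∑ i, (LinearMap.proj i).smulRight (u i)

lemma cochainLin_apply {α : Type} [Fintype α] {Y : Type u} [AddCommGroup Y] [Module R Y]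
    (u : α → Y) (x : α → R) : cochainLin u x = ∑ i, x i • u i := by
  simp [cochainLin]

lemma exists_cochain {α : Type} [Fintype α] {Y : Type u} [AddCommGroup Y] [Module R Y]
    (f : (α → R) →ₗ[R] Y) : ∃ u : α → Y, f = cochainLin u := by
  classical
  refine ⟨fun i => f (Pi.single i 1), ?_⟩
  apply LinearMap.pi_ext'
  intro i; ext
  simp [cochainLin_apply, Pi.single_apply]

lemma cochainLin_inj {α : Type} [Fintype α] {Y : Type u} [AddCommGroup Y] [Module R Y]
    {u v : α → Y} (h : (cochainLin u : (α → R) →ₗ[R] Y) = cochainLin v) : u = v := by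
  classical
  ext i
  have := LinearMap.congr_fun h (Pi.single i 1)
  simpa [cochainLin_apply, Pi.single_apply] using this

lemma cochainLin_zero {α : Type} [Fintype α] {Y : Type u} [AddCommGroup Y] [Module R Y] :
    (cochainLin (0 : α → Y) : (α → R) →ₗ[R] Y) = 0 := by
  refine LinearMap.ext fun x => ?_
  simp [cochainLin_apply]

lemma cochainLin_act {α β : Type} [Fintype α] [Fintype β] {Y : Type u} [AddCommGroup Y] [Module R Y]
    (D : Matrix α β R) (u : α → Y) : cochainLin (act D u) = cochainLin u ∘ₗ D.mulVecLin := by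
  ext1 x
  simp only [LinearMap.comp_apply, cochainLin_apply, act_apply, Matrix.mulVecLin_apply, Matrix.mulVec,
    dotProduct, Finset.smul_sum, Finset.sum_smul]
  rw [Finset.sum_comm]
  refine Finset.sum_congr rfl fun i _ => Finset.sum_congr rfl fun j _ => ?_
  simp [smul_smul, mul_comm]

variable (D : ∀ n, Matrix (ι n) (ι (n + 1)) R) (hD : ∀ n, D n * D (n + 1) = 0)
    (hex : ∀ n x, (D n).mulVec x = 0 → ∃ y, x = (D (n + 1)).mulVec y)
    {X : Type u} [AddCommGroup X] [Module R X] (ε : (ι 0 → R) →ₗ[R] X)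
    (hs : Function.Surjective ε) (h0 : Function.Exact (D 0).mulVecLin ε)
    (Y : Type u) [AddCommGroup Y] [Module R Y]

include hD hex hs h0 in
lemma bridge (n : ℕ) : Subsingleton (Abelian.Ext (ModuleCat.of R X) (ModuleCat.of R Y) (n + 1)) ↔
    Zc D Y (n + 1) ≤ Bc D Y (n + 1) := by
  let P := mres D hD hex ε hs h0
  constructor
  · intro h u hu
    have hf : P.complex.d (n + 2) (n + 1) ≫
        (ModuleCat.ofHom (cochainLin u) : P.complex.X (n + 1) ⟶ ModuleCat.of R Y) = 0 := by
      change (mcx D hD).d (n + 2) (n + 1) ≫ _ = _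
      rw [mcx_d]
      erw [← ModuleCat.ofHom_comp]
      rw [← cochainLin_act, mem_Zc.1 hu]
      ext x
      change cochainLin _ _ = 0
      simp [cochainLin_apply]
    obtain ⟨g, hg⟩ := (P.extMk_eq_zero_iff _ (n + 2) rfl hf n rfl).1 (Subsingleton.elim _ _)
    obtain ⟨w, hw⟩ := exists_cochain (g.hom : (ι n → R) →ₗ[R] Y)
    refine mem_Bc_succ.2 ⟨w, cochainLin_inj (R := R) ?_⟩
    rw [cochainLin_act, ← hw]
    have := congrArg ModuleCat.Hom.hom hg
    change (((mcx D hD).d (n + 1) n) ≫ _).hom = _ at this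
    rw [mcx_d] at this
    exact this
  · intro h
    refine ⟨fun a b => ?_⟩
    suffices ∀ a : Abelian.Ext (ModuleCat.of R X) (ModuleCat.of R Y) (n + 1), a = 0 by
      rw [this a, this b]
    intro a
    obtain ⟨f, hf, rfl⟩ := P.extMk_surjective a (n + 2) rfl
    obtain ⟨u, hu⟩ := exists_cochain (f.hom : (ι (n + 1) → R) →ₗ[R] Y)
    have hu' : u ∈ Zc D Y (n + 1) := by
      rw [mem_Zc]
      refine cochainLin_inj (R := R) ?_
      rw [cochainLin_act, ← hu]
      have := congrArg ModuleCat.Hom.hom hf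
      change (((mcx D hD).d (n + 2) (n + 1)) ≫ _).hom = _ at this
      rw [mcx_d] at this
      refine this.trans ?_
      exact cochainLin_zero.symm
    obtain ⟨w, hw⟩ := mem_Bc_succ.1 (h hu')
    refine (P.extMk_eq_zero_iff _ (n + 2) rfl hf n rfl).2 ⟨ModuleCat.ofHom (cochainLin w), ?_⟩
    change (mcx D hD).d (n + 1) n ≫ _ = _
    rw [mcx_d]
    refine ModuleCat.hom_ext ?_
    refine Eq.trans ?_ hu.symm
    rw [← hw, cochainLin_act]
    rfl

include hD hex hs h0 in
lemma bridge0 (n : ℕ)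
   (h : Subsingleton (((_root_.Ext R (ModuleCat.{u} R) n).obj (op (ModuleCat.of R X))).obj (ModuleCat.of R Y))) :
    Zc D Y n ≤ Bc D Y n := by
  let P := mres D hD hex ε hs h0
  intro u hu
  have h1 := (ModuleCat.isZero_iff_subsingleton (R := R)).2 h
  have h2 := h1.of_iso (P.isoExt n (ModuleCat.of R Y)).symm
  rw [← HomologicalComplex.exactAt_iff_isZero_homology] at h2
  have hf : P.complex.d (n + 1) n ≫
        (ModuleCat.ofHom (cochainLin u) : P.complex.X n ⟶ ModuleCat.of R Y) = 0 := by
      change (mcx D hD).d (n + 1) n ≫ _ = _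
      rw [mcx_d]
      erw [← ModuleCat.ofHom_comp]
      rw [← cochainLin_act, mem_Zc.1 hu]
      ext x
      change cochainLin _ _ = 0
      simp [cochainLin_apply]
  cases n with
  | zero =>
    rw [HomologicalComplex.exactAt_iff' _ 0 0 1 (by simp) (by simp)] at h2
    rw [ShortComplex.moduleCat_exact_iff] at h2
    obtain ⟨g, hg⟩ := h2 (ModuleCat.ofHom (cochainLin u) : P.complex.X 0 ⟶ ModuleCat.of R Y) hf
    have hd : (P.complex.linearYonedaObj R (ModuleCat.of R Y)).d 0 0 = 0 :=
      HomologicalComplex.shape _ _ _ (by simp)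
    have hg' : ((P.complex.linearYonedaObj R (ModuleCat.of R Y)).d 0 0).hom g =
      (ModuleCat.ofHom (cochainLin u) : P.complex.X 0 ⟶ ModuleCat.of R Y) := hg
    rw [hd] at hg'
    have := congrArg ModuleCat.Hom.hom hg'
    have h3 : (cochainLin u : (ι 0 → R) →ₗ[R] Y) = cochainLin 0 :=
      this.symm.trans cochainLin_zero.symm
    change u ∈ (⊥ : Submodule R (ι 0 → Y))
    rw [cochainLin_inj h3]
    exact Submodule.zero_mem _
  | succ n =>
    rw [HomologicalComplex.exactAt_iff' _ n (n + 1) (n + 2) (by simp) (by simp)] at h2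
    rw [ShortComplex.moduleCat_exact_iff] at h2
    obtain ⟨g, hg⟩ := h2 (ModuleCat.ofHom (cochainLin u) : P.complex.X (n+1) ⟶ ModuleCat.of R Y) hf
    obtain ⟨w, hw⟩ := exists_cochain ((g : P.complex.X n ⟶ ModuleCat.of R Y).hom : (ι n → R) →ₗ[R] Y)
    refine mem_Bc_succ.2 ⟨w, cochainLin_inj (R := R) ?_⟩
    rw [cochainLin_act, ← hw]
    have := congrArg ModuleCat.Hom.hom hg
    change (((mcx D hD).d (n + 1) n) ≫ _).hom = _ at this
    rw [mcx_d] at this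
    exact this

end Bridge
end CxT
end Part5

section Part6
open CategoryTheory Opposite Filter IsLocalRing
namespace CxT

section ZOne
variable {R : Type u} [CommRing R]

/-- vanishing of Ext -/
def EV (R : Type u) [CommRing R] (X Y : Type u) [AddCommGroup X] [Module R X] [AddCommGroup Y]
    [Module R Y] (n : ℕ) : Prop :=
  Subsingleton (Abelian.Ext (ModuleCat.of R X) (ModuleCat.of R Y) n)

variable {N₁ N₂ N₃ Y : Type u} [AddCommGroup N₁] [Module R N₁] [AddCommGroup N₂] [Module R N₂]
  [AddCommGroup N₃] [Module R N₃] [AddCommGroup Y] [Module R Y]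

lemma mkShortExact (f : N₁ →ₗ[R] N₂) (g : N₂ →ₗ[R] N₃) (hf : Function.Injective f)
    (hg : Function.Surjective g) (hfg : Function.Exact f g) :
    (ShortComplex.mk (ModuleCat.ofHom f) (ModuleCat.ofHom g)
      (by ext x; exact congrFun hfg.comp_eq_zero x)).ShortExact := by
  refine { exact := ?_, mono_f := ?_, epi_g := ?_ }
  · rw [ShortComplex.moduleCat_exact_iff]
    intro x hx
    exact (hfg x).1 hx
  · exact (ModuleCat.mono_iff_injective _).2 hf
  · exact (ModuleCat.epi_iff_surjective _).2 hg

lemma ev_mid (f : N₁ →ₗ[R] N₂) (g : N₂ →ₗ[R] N₃) (hf : Function.Injective f)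
    (hg : Function.Surjective g) (hfg : Function.Exact f g) (n : ℕ) (h1 : EV R N₁ Y n)
    (h3 : EV R N₃ Y n) : EV R N₂ Y n := by
  have hS := mkShortExact f g hf hg hfg
  unfold EV at *
  refine ⟨fun a b => ?_⟩
  suffices ∀ a : Abelian.Ext (ModuleCat.of R N₂) (ModuleCat.of R Y) n, a = 0 by
    rw [this a, this b]
  intro a
  obtain ⟨x, hx⟩ := Abelian.Ext.contravariant_sequence_exact₂ hS (ModuleCat.of R Y) a
    (Subsingleton.elim _ _)
  rw [← hx, show x = 0 from Subsingleton.elim _ _]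
  simp

lemma ev_congr (e : N₁ ≃ₗ[R] N₂) (n : ℕ) (h : EV R N₁ Y n) : EV R N₂ Y n := by
  refine ev_mid (N₃ := PUnit) (e : N₁ →ₗ[R] N₂) 0 e.injective (fun x => ⟨0, rfl⟩) ?_ n h ?_
  · intro x
    exact ⟨fun _ => e.surjective x, fun _ => rfl⟩
  · have := (ModuleCat.isZero_of_subsingleton (ModuleCat.of R PUnit)).hasProjectiveDimensionLT_zero
    refine ⟨fun a b => ?_⟩
    exact (Abelian.Ext.eq_zero_of_hasProjectiveDimensionLT a 0 (Nat.zero_le _)).trans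
      (Abelian.Ext.eq_zero_of_hasProjectiveDimensionLT b 0 (Nat.zero_le _)).symm

lemma ev_smul (x : R) (g : N₁ →ₗ[R] N₃) (hx : Function.Injective (fun y : N₁ => x • y))
    (hg : Function.Surjective g) (hfg : Function.Exact (fun y : N₁ => x • y) g) (n : ℕ)
    (h : EV R N₃ Y (n + 1)) (a : Abelian.Ext (ModuleCat.of R N₁) (ModuleCat.of R Y) n) :
    ∃ b, x • b = a := by
  have hS := mkShortExact (x • (LinearMap.id : N₁ →ₗ[R] N₁)) g hx hg hfg
  unfold EV at *
  obtain ⟨b, hb⟩ := Abelian.Ext.contravariant_sequence_exact₁ hS (ModuleCat.of R Y) a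
    (n₁ := n + 1) (by omega) (Subsingleton.elim _ _)
  refine ⟨b, ?_⟩
  rw [← hb]
  dsimp
  have : ModuleCat.ofHom (x • (LinearMap.id : N₁ →ₗ[R] N₁)) = x • 𝟙 (ModuleCat.of R N₁) := rfl
  rw [this, Abelian.Ext.mk₀_smul, Abelian.Ext.smul_comp, Abelian.Ext.mk₀_id_comp]

theorem zOne [IsLocalRing R] [IsNoetherianRing R] [Module.Finite R Y] (d : ℕ)
    (h : ∀ n > d, EV R (ResidueField R) Y n) (X : Type u) [AddCommGroup X] [Module R X]
    [hX : Module.Finite R X] : ∀ n > d, EV R X Y n := by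
  suffices H : ∀ (I : Ideal R) (X : Type u) [AddCommGroup X] [Module R X] [Module.Finite R X],
      (∀ a ∈ I, ∀ x : X, a • x = 0) → ∀ n > d, EV R X Y n from
    H ⊥ X (by simp)
  intro I
  induction I using IsNoetherian.induction with
  | hgt I ih =>
  intro X _ _ hX hI
  refine IsNoetherianRing.induction_on_isQuotientEquivQuotientPrime R hX
    (motive := fun X _ _ _ => (∀ a ∈ I, ∀ x : X, a • x = 0) → ∀ n > d, EV R X Y n)
    ?_ ?_ ?_ hI
  · intro N _ _ _ _ _ n _
    have := (ModuleCat.isZero_of_subsingleton (ModuleCat.of R N)).hasProjectiveDimensionLT_zero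
    refine ⟨fun a b => ?_⟩
    exact (Abelian.Ext.eq_zero_of_hasProjectiveDimensionLT a 0 (Nat.zero_le _)).trans
      (Abelian.Ext.eq_zero_of_hasProjectiveDimensionLT b 0 (Nat.zero_le _)).symm
  · intro N _ _ _ p e hI n hn
    refine ev_congr e.symm n ?_
    have hp := p.2
    have hIp : I ≤ p.1 := by
      intro a ha
      have := hI a ha (e.symm (Ideal.Quotient.mk _ 1))
      rw [← map_smul, LinearEquiv.map_eq_zero_iff] at this
      rw [← Ideal.Quotient.eq_zero_iff_mem, ← this]
      simp [Algebra.smul_def]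
    by_cases hm : p.1 = maximalIdeal R
    · rw [hm]
      exact h n hn
    · have hlt : p.1 < maximalIdeal R := lt_of_le_of_ne (le_maximalIdeal hp.ne_top) hm
      obtain ⟨x, hxm, hxp⟩ := SetLike.exists_of_lt hlt
      let J : Ideal R := p.1 ⊔ Ideal.span {x}
      have hJ : I < J := lt_of_le_of_lt hIp (by
        refine lt_of_le_of_ne le_sup_left fun h => hxp ?_
        rw [h]
        exact (le_sup_right : _ ≤ J) (Ideal.subset_span rfl))
      have hEV : ∀ n > d, EV R (R ⧸ J) Y n := ih J hJ (R ⧸ J) (by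
        intro a ha y
        obtain ⟨y, rfl⟩ := Ideal.Quotient.mk_surjective y
        rw [Algebra.smul_def, Ideal.Quotient.algebraMap_eq, ← map_mul]
        exact Ideal.Quotient.eq_zero_iff_mem.2 (Ideal.mul_mem_right _ _ ha))
      let g : (R ⧸ p.1) →ₗ[R] (R ⧸ J) := (Ideal.Quotient.factorₐ R (le_sup_left : p.1 ≤ J)).toLinearMap
      have hsm := ev_smul (Y := Y) x g (by
          intro a b hab
          obtain ⟨a, rfl⟩ := Ideal.Quotient.mk_surjective a
          obtain ⟨b, rfl⟩ := Ideal.Quotient.mk_surjective b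
          simp only [Algebra.smul_def, Ideal.Quotient.algebraMap_eq, ← map_mul] at hab
          rw [Ideal.Quotient.eq] at hab ⊢
          rw [← mul_sub] at hab
          exact (hp.mem_or_mem hab).resolve_left hxp)
        (by
          intro y
          obtain ⟨y, rfl⟩ := Ideal.Quotient.mk_surjective y
          exact ⟨Ideal.Quotient.mk _ y, rfl⟩)
        (by
          intro y
          obtain ⟨y, rfl⟩ := Ideal.Quotient.mk_surjective y
          change Ideal.Quotient.mk J y = 0 ↔ _
          rw [Ideal.Quotient.eq_zero_iff_mem]
          constructor
          · intro hy
            obtain ⟨q, hq, z, hz, rfl⟩ := Submodule.mem_sup.1 hy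
            obtain ⟨w, rfl⟩ := Ideal.mem_span_singleton.1 hz
            refine ⟨Ideal.Quotient.mk _ w, ?_⟩
            simp only [Algebra.smul_def, Ideal.Quotient.algebraMap_eq, ← map_mul]
            rw [Ideal.Quotient.eq]
            simpa using p.1.neg_mem hq
          · rintro ⟨w, hw⟩
            obtain ⟨w, rfl⟩ := Ideal.Quotient.mk_surjective w
            simp only [Algebra.smul_def, Ideal.Quotient.algebraMap_eq, ← map_mul] at hw
            rw [Ideal.Quotient.eq] at hw
            have := J.sub_mem (J.mul_mem_right w ((le_sup_right : _ ≤ J) (Ideal.subset_span (Set.mem_singleton x))))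
              ((le_sup_left : _ ≤ J) hw)
            simpa using this)
        n (hEV _ (by omega))
      have hfin : Module.Finite R (Abelian.Ext (ModuleCat.of R (R ⧸ p.1)) (ModuleCat.of R Y) n) :=
        inferInstance
      have htop : (⊤ : Submodule R (Abelian.Ext (ModuleCat.of R (R ⧸ p.1)) (ModuleCat.of R Y) n)) = ⊥ := by
        refine Submodule.eq_bot_of_le_smul_of_le_jacobson_bot (maximalIdeal R) ⊤ hfin.1 ?_
          (IsLocalRing.jacobson_eq_maximalIdeal ⊥ bot_ne_top).ge
        intro a _
        obtain ⟨b, rfl⟩ := hsm a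
        exact Submodule.smul_mem_smul hxm trivial
      refine ⟨fun a b => ?_⟩
      have ha : a ∈ (⊤ : Submodule R _) := trivial
      have hb : b ∈ (⊤ : Submodule R _) := trivial
      rw [htop, Submodule.mem_bot] at ha hb
      rw [ha, hb]
  · intro N₁ _ _ _ N₂ _ _ _ N₃ _ _ _ f g hf hg hfg h1 h3 hI n hn
    refine ev_mid f g hf hg hfg n (h1 ?_ n hn) (h3 ?_ n hn)
    · intro a ha y
      apply hf
      rw [map_smul, hI a ha, map_zero]
    · intro a ha y
      obtain ⟨y, rfl⟩ := hg y
      rw [← map_smul, hI a ha, map_zero]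
end ZOne
end CxT
end Part6

section Part7
open CategoryTheory Opposite Filter IsLocalRing
namespace CxT

section Reg

/-- ideals generated by regular sequences -/
inductive RChain {Q : Type u} [CommRing Q] : Ideal Q → Prop
  | bot : RChain ⊥
  | step (I : Ideal Q) (x : Q) (h : RChain I) (hx : ∀ a, x * a ∈ I → a ∈ I) :
      RChain (I ⊔ Ideal.span {x})

lemma RChain.comap {Q : Type u} [CommRing Q] (y : Q) (hy : ∀ a, y * a = 0 → a = 0)
    {I : Ideal (Q ⧸ Ideal.span {y})} (h : RChain I) :
    RChain (I.comap (Ideal.Quotient.mk (Ideal.span {y}))) := by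
  induction h with
  | bot =>
    have := RChain.step (⊥ : Ideal Q) y RChain.bot (by simpa using hy)
    rw [bot_sup_eq] at this
    rwa [← RingHom.ker_eq_comap_bot, Ideal.mk_ker]
  | step I x h hx ih =>
    obtain ⟨x, rfl⟩ := Ideal.Quotient.mk_surjective x
    have := RChain.step _ x ih (by
      intro a ha
      rw [Ideal.mem_comap, map_mul] at ha
      exact hx _ ha)
    convert this using 1
    ext a
    rw [Ideal.mem_comap, Submodule.mem_sup, Submodule.mem_sup]
    constructor
    · rintro ⟨b, hb, z, hz, e⟩
      obtain ⟨w, rfl⟩ := Ideal.mem_span_singleton.1 hz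
      obtain ⟨w, rfl⟩ := Ideal.Quotient.mk_surjective w
      refine ⟨a - x * w, ?_, x * w, Ideal.mem_span_singleton.2 ⟨w, rfl⟩, by ring⟩
      rw [Ideal.mem_comap, map_sub, map_mul, ← e]
      simpa using hb
    · rintro ⟨b, hb, z, hz, rfl⟩
      obtain ⟨w, rfl⟩ := Ideal.mem_span_singleton.1 hz
      exact ⟨_, hb, _, Ideal.mem_span_singleton.2 ⟨Ideal.Quotient.mk _ w, rfl⟩, by simp⟩

lemma wb_cancel (n : ℕ) (k : WithBot ℕ∞) (h : (n : WithBot ℕ∞) + 1 ≤ k + 1) :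
    (n : WithBot ℕ∞) ≤ k := by
  induction k using WithBot.recBotCoe with
  | bot =>
    rw [WithBot.bot_add] at h
    have := le_bot_iff.1 h
    exact absurd this (by exact_mod_cast WithBot.coe_ne_bot (a := ((n + 1 : ℕ) : ℕ∞)))
  | coe k =>
    induction k using ENat.recTopCoe with
    | top => exact le_top
    | coe k =>
      have : n + 1 ≤ k + 1 := by exact_mod_cast h
      have : n ≤ k := by omega
      exact_mod_cast this

theorem regular_chain (n : ℕ) : ∀ (Q : Type u) [CommRing Q] [IsLocalRing Q] [IsNoetherianRing Q]
    (s : Finset Q), s.card ≤ n → Ideal.span (s : Set Q) = maximalIdeal Q →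
    (n : WithBot ℕ∞) ≤ ringKrullDim Q → IsDomain Q ∧ RChain (maximalIdeal Q) := by
  classical
  induction n with
  | zero =>
    intro Q _ _ _ s hs hspan _
    have : s = ∅ := Finset.card_eq_zero.1 (by omega)
    subst this
    have hm : maximalIdeal Q = ⊥ := by rw [← hspan]; simp
    have hf := isField_iff_maximalIdeal_eq.2 hm
    refine ⟨hf.isDomain, ?_⟩
    rw [hm]; exact RChain.bot
  | succ n ih =>
    intro Q _ _ _ s hs hspan hdim
    have hmin : maximalIdeal Q ∉ minimalPrimes Q := by
      intro h
      have h0 : (maximalIdeal Q).height = 0 := by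
        exact Ideal.height_eq_zero_iff.2 h
      have := maximalIdeal_height_eq_ringKrullDim (R := Q)
      rw [h0] at this
      rw [← this] at hdim
      have : ((n + 1 : ℕ) : ℕ∞) ≤ 0 := by exact_mod_cast hdim
      simp at this
    have hleast : ∀ p ∈ minimalPrimes Q, ¬ maximalIdeal Q ≤ p := by
      intro p hp h
      have := le_antisymm h (le_maximalIdeal hp.1.1.ne_top)
      rw [← this] at hp
      exact hmin hp
    have hsq : ¬ maximalIdeal Q ≤ maximalIdeal Q ^ 2 := by
      intro h
      have h0 : maximalIdeal Q = ⊥ := by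
        refine Submodule.eq_bot_of_le_smul_of_le_jacobson_bot (maximalIdeal Q) _
          (IsNoetherian.noetherian _) ?_ (IsLocalRing.jacobson_eq_maximalIdeal ⊥ bot_ne_top).ge
        rwa [smul_eq_mul, ← pow_two]
      obtain ⟨p, hp, hpm⟩ := Ideal.exists_minimalPrimes_le (bot_le : ⊥ ≤ maximalIdeal Q)
      exact hleast p hp (h0 ▸ bot_le)
    have hfin := minimalPrimes.finite_of_isNoetherianRing Q
    obtain ⟨y, hym, hy⟩ : ∃ y ∈ maximalIdeal Q, ∀ i ∈ insert (maximalIdeal Q ^ 2) hfin.toFinset,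
        y ∉ (i : Ideal Q) := by
      by_contra hcon
      push Not at hcon
      have := (Ideal.subset_union_prime (s := insert (maximalIdeal Q ^ 2) hfin.toFinset)
        (f := fun i => i) (I := maximalIdeal Q) (maximalIdeal Q ^ 2) (maximalIdeal Q ^ 2) (by
          intro i hi h1 _
          rcases Finset.mem_insert.1 hi with h | h
          · exact absurd h h1
          · exact ((Set.Finite.mem_toFinset _).1 h).1.1)).1 (by
          intro y hy
          obtain ⟨i, hi, hyi⟩ := hcon y hy
          exact Set.mem_biUnion (x := i) hi hyi)
      obtain ⟨i, hi, hle⟩ := this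
      rcases Finset.mem_insert.1 hi with h | h
      · exact hsq (h ▸ hle)
      · exact hleast i ((Set.Finite.mem_toFinset _).1 h) hle
    have hy2 : y ∉ maximalIdeal Q ^ 2 := hy _ (Finset.mem_insert_self _ _)
    have hyp : ∀ p ∈ minimalPrimes Q, y ∉ p := fun p hp =>
      hy p (Finset.mem_insert_of_mem ((Set.Finite.mem_toFinset _).2 hp))
    obtain ⟨a, ha⟩ : ∃ a : Q → Q, ∑ x ∈ s, a x * x = y := by
      rw [← hspan] at hym
      obtain ⟨a, -, ha⟩ := Submodule.mem_span_finset.1 hym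
      exact ⟨a, by simpa using ha⟩
    have hsm : ∀ x ∈ s, x ∈ maximalIdeal Q := fun x hx => by
      rw [← hspan]; exact Ideal.subset_span hx
    obtain ⟨x0, hx0, hu⟩ : ∃ x0 ∈ s, IsUnit (a x0) := by
      by_contra hcon
      push Not at hcon
      apply hy2
      rw [← ha, pow_two]
      exact Ideal.sum_mem _ fun x hx => Ideal.mul_mem_mul ((mem_maximalIdeal _).2 (hcon x hx)) (hsm x hx)
    have hyne : Ideal.span {y} ≠ ⊤ := by
      intro h
      have : (⊤ : Ideal Q) ≤ maximalIdeal Q := h ▸ (Ideal.span_singleton_le_iff_mem _).2 hym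
      exact (maximalIdeal.isMaximal Q).ne_top (top_le_iff.1 this)
    have : Nontrivial (Q ⧸ Ideal.span {y}) := Ideal.Quotient.nontrivial_iff.2 hyne
    have hloc : IsLocalRing (Q ⧸ Ideal.span {y}) :=
      IsLocalRing.of_surjective' (Ideal.Quotient.mk _) Ideal.Quotient.mk_surjective
    have hmax : (maximalIdeal Q).map (Ideal.Quotient.mk (Ideal.span {y})) = maximalIdeal _ :=
      IsLocalRing.map_maximalIdeal_of_surjective _ Ideal.Quotient.mk_surjective
    have hmc : (maximalIdeal (Q ⧸ Ideal.span {y})).comap (Ideal.Quotient.mk (Ideal.span {y})) = maximalIdeal Q := by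
      have := Ideal.comap_isMaximal_of_surjective (Ideal.Quotient.mk (Ideal.span {y}))
        Ideal.Quotient.mk_surjective (K := maximalIdeal (Q ⧸ Ideal.span {y}))
      exact IsLocalRing.eq_maximalIdeal this
    have hgen : Ideal.span (((s.erase x0).image (Ideal.Quotient.mk (Ideal.span {y})) : Finset _) : Set (Q ⧸ Ideal.span {y}))
        = maximalIdeal _ := by
      rw [Finset.coe_image, ← Ideal.map_span, ← hmax, ← hspan]
      refine le_antisymm (Ideal.map_mono (Ideal.span_mono (by simp))) ?_
      rw [Ideal.map_le_iff_le_comap, Ideal.span_le]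
      intro x hx
      by_cases hxx : x = x0
      · subst hxx
        have e : a x * x = y - ∑ z ∈ s.erase x, a z * z := by
          rw [← ha, ← Finset.add_sum_erase s _ hx0]; ring
        obtain ⟨u, hu⟩ := hu
        have : x = ↑u⁻¹ * (y - ∑ z ∈ s.erase x, a z * z) := by
          rw [← e, ← hu, ← mul_assoc]; simp
        generalize s.erase x = s' at *
        rw [SetLike.mem_coe, Ideal.mem_comap, this, map_mul, map_sub,
          Ideal.Quotient.eq_zero_iff_mem.2 (Ideal.mem_span_singleton_self y), zero_sub]
        refine Ideal.mul_mem_left _ _ (Submodule.neg_mem _ (Ideal.mem_map_of_mem _ ?_))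
        exact Ideal.sum_mem _ fun z hz => Ideal.mul_mem_left _ _ (Ideal.subset_span hz)
      · exact Ideal.mem_map_of_mem _ (Ideal.subset_span (by simp [hxx]; exact hx))
    have hd : (n : WithBot ℕ∞) ≤ ringKrullDim (Q ⧸ Ideal.span {y}) := by
      have := ringKrullDim_le_ringKrullDim_quotient_add_card ({y} : Finset Q) (by
        rw [ringJacobson_eq_maximalIdeal]; simpa using hym)
      have h2 := hdim.trans this
      rw [Finset.coe_singleton] at h2
      simp only [Finset.card_singleton, Nat.cast_add, Nat.cast_one] at h2
      generalize ringKrullDim (Q ⧸ Ideal.span {y}) = k at h2 ⊢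
      exact (wb_cancel n k) h2
    obtain ⟨hdom, hch⟩ := ih (Q ⧸ Ideal.span {y}) _ (Finset.card_image_le.trans (by
      rw [Finset.card_erase_of_mem hx0]; omega)) hgen hd
    have hprime : (Ideal.span {y}).IsPrime := (Ideal.Quotient.isDomain_iff_prime _).1 hdom
    obtain ⟨p, hp, hpy⟩ := Ideal.exists_minimalPrimes_le (bot_le : ⊥ ≤ Ideal.span {y})
    have hp0 : p = ⊥ := by
      refine Submodule.eq_bot_of_le_smul_of_le_jacobson_bot (maximalIdeal Q) _
          (IsNoetherian.noetherian _) ?_ (IsLocalRing.jacobson_eq_maximalIdeal ⊥ bot_ne_top).ge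
      intro b hb
      obtain ⟨c, rfl⟩ := Ideal.mem_span_singleton.1 (hpy hb)
      exact Submodule.smul_mem_smul hym ((hp.1.1.mem_or_mem hb).resolve_left (hyp p hp))
    have hQ : IsDomain Q := by
      have := hp.1.1
      rw [hp0] at this
      exact (IsDomain.of_bot_isPrime Q)
    refine ⟨hQ, ?_⟩
    have hy0 : y ≠ 0 := fun h => hyp p hp (h ▸ p.zero_mem)
    have := RChain.comap y (fun a ha => (mul_eq_zero.1 ha).resolve_left hy0) hch
    rwa [hmc] at this

lemma ev_of_subs {R : Type u} [CommRing R] {X Y : Type u} [AddCommGroup X] [Module R X]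
    [AddCommGroup Y] [Module R Y] [Module.Projective R X] (n : ℕ) : EV R X Y (n + 1) := by
  have : Projective (ModuleCat.of R X) := by
    rw [← IsProjective.iff_projective]; infer_instance
  refine ⟨fun a b => ?_⟩
  exact (Abelian.Ext.eq_zero_of_hasProjectiveDimensionLT a 1 (by omega)).trans
      (Abelian.Ext.eq_zero_of_hasProjectiveDimensionLT b 1 (by omega)).symm

lemma ev_third {R : Type u} [CommRing R] {N₁ N₂ N₃ Y : Type u} [AddCommGroup N₁] [Module R N₁]
    [AddCommGroup N₂] [Module R N₂]
    [AddCommGroup N₃] [Module R N₃] [AddCommGroup Y] [Module R Y]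
    (f : N₁ →ₗ[R] N₂) (g : N₂ →ₗ[R] N₃) (hf : Function.Injective f)
    (hg : Function.Surjective g) (hfg : Function.Exact f g) (n : ℕ) (h1 : EV R N₁ Y n)
    (h3 : EV R N₂ Y (n + 1)) : EV R N₃ Y (n + 1) := by
  have hS := mkShortExact f g hf hg hfg
  unfold EV at *
  refine ⟨fun a b => ?_⟩
  suffices ∀ a : Abelian.Ext (ModuleCat.of R N₃) (ModuleCat.of R Y) (n + 1), a = 0 by
    rw [this a, this b]
  intro a
  obtain ⟨x, hx⟩ := Abelian.Ext.contravariant_sequence_exact₃ hS (ModuleCat.of R Y) a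
    (Subsingleton.elim _ _) (n₀ := n) (by omega)
  rw [← hx, show x = 0 from Subsingleton.elim _ _]
  simp

theorem ev_chain {Q : Type u} [CommRing Q] {I : Ideal Q} (h : RChain I) :
    ∃ d : ℕ, ∀ (Y : Type u) [AddCommGroup Y] [Module Q Y], ∀ n > d, EV Q (Q ⧸ I) Y n := by
  induction h with
  | bot =>
    refine ⟨0, fun Y _ _ n hn => ?_⟩
    obtain ⟨n, rfl⟩ : ∃ m, n = m + 1 := ⟨n - 1, by omega⟩
    exact ev_congr (Submodule.quotEquivOfEqBot (⊥ : Ideal Q) rfl).symm _ (ev_of_subs n)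
  | step I x h hx ih =>
    obtain ⟨d, hd⟩ := ih
    refine ⟨d + 1, fun Y _ _ n hn => ?_⟩
    obtain ⟨n, rfl⟩ : ∃ m, n = m + 1 := ⟨n - 1, by omega⟩
    set J := I ⊔ Ideal.span {x} with hJ
    let g : (Q ⧸ I) →ₗ[Q] (Q ⧸ J) := (Ideal.Quotient.factorₐ Q (le_sup_left : I ≤ J)).toLinearMap
    refine ev_third (x • (LinearMap.id : (Q ⧸ I) →ₗ[Q] (Q ⧸ I))) g ?_ ?_ ?_ n (hd Y n (by omega))
      (hd Y (n + 1) (by omega))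
    · intro a b hab
      obtain ⟨a, rfl⟩ := Ideal.Quotient.mk_surjective a
      obtain ⟨b, rfl⟩ := Ideal.Quotient.mk_surjective b
      change Ideal.Quotient.mk I (x * a) = Ideal.Quotient.mk I (x * b) at hab
      rw [Ideal.Quotient.eq] at hab ⊢
      rw [← mul_sub] at hab
      exact hx _ hab
    · intro y
      obtain ⟨y, rfl⟩ := Ideal.Quotient.mk_surjective y
      exact ⟨Ideal.Quotient.mk _ y, rfl⟩
    · intro y
      obtain ⟨y, rfl⟩ := Ideal.Quotient.mk_surjective y
      change Ideal.Quotient.mk J y = 0 ↔ _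
      rw [Ideal.Quotient.eq_zero_iff_mem]
      constructor
      · intro hy
        obtain ⟨q, hq, z, hz, rfl⟩ := Submodule.mem_sup.1 hy
        obtain ⟨w, rfl⟩ := Ideal.mem_span_singleton.1 hz
        refine ⟨Ideal.Quotient.mk _ w, ?_⟩
        change Ideal.Quotient.mk I (x * w) = Ideal.Quotient.mk I (q + x * w)
        rw [Ideal.Quotient.eq]
        simpa using I.neg_mem hq
      · rintro ⟨w, hw⟩
        obtain ⟨w, rfl⟩ := Ideal.Quotient.mk_surjective w
        change Ideal.Quotient.mk I (x * w) = Ideal.Quotient.mk I y at hw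
        rw [Ideal.Quotient.eq] at hw
        have := J.sub_mem (J.mul_mem_right w
          ((le_sup_right : _ ≤ J) (Ideal.subset_span (Set.mem_singleton x))))
          ((le_sup_left : _ ≤ J) hw)
        simpa using this

theorem coh_zero_of_ev {R : Type u} [CommRing R] {ι : ℕ → Type} [∀ n, Fintype (ι n)]
    (D : ∀ n, Matrix (ι n) (ι (n + 1)) R) (hD : ∀ n, D n * D (n + 1) = 0)
    (hex : ∀ n x, (D n).mulVec x = 0 → ∃ y, x = (D (n + 1)).mulVec y)
    (Y : Type u) [AddCommGroup Y] [Module R Y] (n : ℕ)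
    (h : EV R ((ι 0 → R) ⧸ LinearMap.range (D 0).mulVecLin) Y (n + 1)) :
    Zc D Y (n + 1) ≤ Bc D Y (n + 1) := by
  refine (bridge D hD hex (Submodule.mkQ _) (Submodule.mkQ_surjective _) ?_ Y n).1 h
  intro x
  rw [Submodule.mkQ_apply, Submodule.Quotient.mk_eq_zero]; rfl

theorem reg_fg (Q : Type u) [CommRing Q] [IsLocalRing Q]
    (hQ : ComplexityTest.IsRegularLocalRing Q) (φ : Fin 0 → ((⊥ : Ideal Q) →ₗ[Q] (Q ⧸ (⊥ : Ideal Q)))) :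
    FGProp ⊥ φ := by
  classical
  obtain ⟨hN, n, x, hx, hn⟩ := hQ
  obtain ⟨-, hch⟩ := regular_chain n Q (Finset.univ.image x) (Finset.card_image_le.trans (by simp))
    (by rw [← hx]; simp) hn.le
  obtain ⟨d, hd⟩ := ev_chain hch
  intro ι _ _ D hcx hex t _ Y _ _ _ _
  refine ⟨d + 1, fun n hn u hu => ⟨fun i => i.elim0, fun i => i.elim0, ?_⟩⟩
  have := coh_zero_of_ev D (fun n => by ext i j; simpa using hcx n i j)
    (by
      intro n x h0
      obtain ⟨y, hy⟩ := hex n x (by simp [h0])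
      exact ⟨y, funext fun i => sub_eq_zero.1 (by simpa using hy i)⟩) Y (n + 1)
    (zOne d (fun n hn => hd Y n hn) _ _ (by omega))
  simpa using this hu

theorem ci_pkg (A : Type u) [CommRing A] [IsLocalRing A]
    (hA : ComplexityTest.IsCompleteIntersection A) :
    ∃ c, Nonempty (OpPkg (ComplexityTest.Completion A) c) := by
  obtain ⟨Q, _, _, hQ, g, hg, rs, hrs, hker⟩ := hA
  have := hQ.1
  obtain ⟨c, φ, hφ⟩ := fg_list (reg_fg Q hQ) rs hrs.toIsWeaklyRegular
  exact ⟨c, exists_pkg g hg (Ideal.ofList rs) hker φ hφ⟩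

end Reg
end CxT
end Part7

section Part8
open CategoryTheory Opposite Filter IsLocalRing
namespace CxT

section Seq

lemma seq_up {T : ℕ → Type v} (R : ∀ j, T j → T (j + 1) → Prop)
    (up : ∀ j a b, R j a b → ∃ c, R (j + 1) b c) (a : T 0) (b : T 1) (h : R 0 a b) :
    ∃ v : ∀ j, T j, v 0 = a ∧ v 1 = b ∧ ∀ j, R j (v j) (v (j + 1)) := by
  choose f hf using up
  let g : ∀ j, { p : T j × T (j + 1) // R j p.1 p.2 } := fun j =>
    Nat.rec ⟨(a, b), h⟩ (fun j p => ⟨(p.1.2, f j p.1.1 p.1.2 p.2), hf _ _ _ _⟩) j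
  exact ⟨fun j => (g j).1.1, rfl, rfl, fun j => (g j).2⟩

lemma seq_mid (δ : ℕ) : ∀ {T : ℕ → Type v} (R : ∀ j, T j → T (j + 1) → Prop)
    (_ : ∀ j a b, R j a b → ∃ c, R (j + 1) b c)
    (_ : ∀ j < δ, ∀ a b, R (j + 1) a b → ∃ c, R j c a)
    (a : T δ) (b : T (δ + 1)) (_ : R δ a b),
    ∃ v : ∀ j, T j, v δ = a ∧ v (δ + 1) = b ∧ ∀ j, R j (v j) (v (j + 1)) := by
  induction δ with
  | zero => intro T R up _ a b h; exact seq_up R up a b h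
  | succ δ ih =>
    intro T R up down a b h
    obtain ⟨v, h1, h2, h3⟩ := ih (T := fun j => T (j + 1)) (fun j => R (j + 1))
      (fun j => up (j + 1)) (fun j hj => down (j + 1) (by omega)) a b h
    obtain ⟨c, hc⟩ := down 0 (by omega) _ _ (h3 0)
    refine ⟨fun j => Nat.casesOn j c v, h1, h2, fun j => ?_⟩
    cases j with
    | zero => exact hc
    | succ j => exact h3 j

end Seq

section Ck
variable {R : Type u} [CommRing R] {α β γ σ : Type} [Fintype α] [DecidableEq α] [Fintype β]
  [Fintype γ]

/-- cokernel of a matrix -/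
abbrev CkM (M : Matrix α β R) : Type u := (α → R) ⧸ LinearMap.range M.mulVecLin

/-- the standard generators of the cokernel -/
def eps (M : Matrix α β R) : α → CkM M := fun i => Submodule.Quotient.mk (Pi.single i 1)

lemma act_eps (M : Matrix α β R) (U : Matrix α σ R) (j : σ) :
    act U (eps M) j = Submodule.Quotient.mk (fun i => U i j) := by
  rw [act_apply]
  simp only [eps, ← Submodule.Quotient.mk_smul]
  rw [← Submodule.mkQ_apply]
  simp only [← Submodule.mkQ_apply]
  rw [← map_sum]
  congr 1
  ext i
  simp [Finset.sum_apply, Pi.single_apply]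

lemma eps_lift (M : Matrix α β R) (u : σ → CkM M) : ∃ U : Matrix α σ R, act U (eps M) = u := by
  choose U hU using fun j => Submodule.Quotient.mk_surjective _ (u j)
  exact ⟨Matrix.of fun i j => U j i, funext fun j =>
    (act_eps M (Matrix.of fun i j => U j i) j).trans (hU j)⟩

lemma eps_zero (M : Matrix α β R) (U : Matrix α σ R) :
    act U (eps M) = 0 ↔ ∃ V : Matrix β σ R, U = M * V := by
  constructor
  · intro h
    have : ∀ j, ∃ y, M.mulVecLin y = fun i => U i j := by
      intro j
      have := congrFun h j
      rw [act_eps] at this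
      exact (Submodule.Quotient.mk_eq_zero _).1 this
    choose V hV using this
    refine ⟨fun i j => V j i, ?_⟩
    ext i j
    rw [← congrFun (hV j) i]
    rfl
  · rintro ⟨V, rfl⟩
    funext j
    rw [act_eps]
    exact (Submodule.Quotient.mk_eq_zero _).2 ⟨fun i => V i j, rfl⟩

/-- map between cokernels -/
def ckMap {α' β' : Type} [Fintype α'] [DecidableEq α'] [Fintype β'] {M : Matrix α β R}
    {M' : Matrix α' β' R} (Φ : Matrix α' α R)
    (Φ1 : Matrix β' β R) (h : Φ * M = M' * Φ1) : CkM M →ₗ[R] CkM M' :=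
  Submodule.mapQ _ _ Φ.mulVecLin (by
    rintro _ ⟨y, rfl⟩
    refine ⟨Φ1.mulVec y, ?_⟩
    simp only [Matrix.mulVecLin_apply, Matrix.mulVec_mulVec]
    rw [h])

lemma ckMap_act {α' β' : Type} [Fintype α'] [DecidableEq α'] [Fintype β'] {M : Matrix α β R}
    {M' : Matrix α' β' R} (Φ : Matrix α' α R)
    (Φ1 : Matrix β' β R) (h : Φ * M = M' * Φ1) (U : Matrix α σ R) :
    (fun j => ckMap Φ Φ1 h (act U (eps M) j)) = act (Φ * U) (eps M') := by
  funext j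
  rw [act_eps, act_eps]
  rfl

lemma lift1 {D : Matrix α β R} {E : Matrix β γ R}
    (hex : ∀ x, D.mulVec x = 0 → ∃ y, x = E.mulVec y) (W : Matrix β σ R) (h : D * W = 0) :
    ∃ V : Matrix γ σ R, W = E * V := by
  have : ∀ j, ∃ y, (fun i => W i j) = E.mulVec y := by
    intro j
    apply hex
    ext i
    exact congrFun (congrFun h i) j
  choose V hV using this
  refine ⟨fun i j => V j i, ?_⟩
  ext i j
  exact congrFun (hV j) i

end Ck

/-- complexes of matrices -/
structure Cx (R : Type u) [CommRing R] where
  ι : ℕ → Type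
  [ft : ∀ n, Fintype (ι n)]
  [de : ∀ n, DecidableEq (ι n)]
  D : ∀ n, Matrix (ι n) (ι (n + 1)) R
  hD : ∀ n, D n * D (n + 1) = 0

attribute [instance] Cx.ft Cx.de

namespace Cx
variable {R : Type u} [CommRing R]

/-- exactness -/
def Ex (F : Cx R) : Prop :=
  ∀ n (x : F.ι (n + 1) → R), (F.D n).mulVec x = 0 → ∃ y, x = (F.D (n + 1)).mulVec y

/-- drop the first term -/
def sh (F : Cx R) : Cx R where
  ι n := F.ι (n + 1)
  D n := F.D (n + 1)
  hD n := F.hD (n + 1)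

/-- drop the first m terms -/
def shift (F : Cx R) (m : ℕ) : Cx R where
  ι n := F.ι (m + n)
  D n := F.D (m + n)
  hD n := F.hD (m + n)

lemma Ex.sh {F : Cx R} (h : F.Ex) : F.sh.Ex := fun n => h (n + 1)

lemma Ex.shift {F : Cx R} (h : F.Ex) (m : ℕ) : (F.shift m).Ex := fun n => h (m + n)

/-- chain maps -/
def CM (F E : Cx R) (v : ∀ j, Matrix (F.ι j) (E.ι j) R) : Prop :=
  ∀ j, F.D j * v (j + 1) = v j * E.D j

/-- cokernel -/
abbrev Ck (F : Cx R) : Type u := CkM (F.D 0)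

/-- generators -/
abbrev ep (F : Cx R) : F.ι 0 → F.Ck := eps (F.D 0)

lemma exists_lift {F E : Cx R} (hF : F.Ex) (v0 : Matrix (F.ι 0) (E.ι 0) R)
    (h : act (E.D 0) (act v0 F.ep) = 0) : ∃ v, CM F E v ∧ v 0 = v0 := by
  rw [← act_mul, eps_zero] at h
  obtain ⟨w, hw⟩ := h
  obtain ⟨v, h0, -, h2⟩ := seq_up (T := fun j => Matrix (F.ι j) (E.ι j) R)
    (fun j a b => F.D j * b = a * E.D j) (by
      intro j a b h
      obtain ⟨c, hc⟩ := lift1 (hF j) (b * E.D (j + 1)) (by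
        rw [← Matrix.mul_assoc, h, Matrix.mul_assoc, E.hD, Matrix.mul_zero])
      exact ⟨c, hc.symm⟩) v0 w hw.symm
  exact ⟨v, h2, h0⟩

lemma null_one {F E : Cx R} (hF : F.Ex) (v : ∀ j, Matrix (F.ι j) (E.ι (j + 1)) R)
    (hv : CM F E.sh v) (w : E.ι 0 → F.Ck) (h : act (v 0) F.ep = act (E.D 0) w) :
    ∃ k : ∀ j, Matrix (F.ι j) (E.ι j) R, ∀ j, v j = k j * E.D j + F.D j * k (j + 1) := by
  obtain ⟨k0, rfl⟩ := eps_lift _ w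
  rw [← act_mul, ← sub_eq_zero, ← act_sub, eps_zero] at h
  obtain ⟨k1, hk1⟩ := h
  obtain ⟨v, h0, -, h2⟩ := seq_up (T := fun j => Matrix (F.ι j) (E.ι j) R)
    (fun j a b => v j - a * E.D j = F.D j * b) (by
      intro j a b h
      obtain ⟨c, hc⟩ := lift1 (hF j) (v (j + 1) - b * E.D (j + 1)) (by
        have h1 : F.D j * v (j + 1) = v j * E.D (j + 1) := hv j
        rw [Matrix.mul_sub, h1, ← Matrix.mul_assoc, ← h, Matrix.sub_mul, Matrix.mul_assoc a, E.hD]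
        simp)
      exact ⟨c, hc⟩) k0 k1 hk1
  exact ⟨v, fun j => by rw [← h2 j]; abel⟩

lemma null_zero {F E : Cx R} (hF : F.Ex) (v : ∀ j, Matrix (F.ι j) (E.ι j) R)
    (hv : CM F E v) (h : act (v 0) F.ep = 0) :
    ∃ k : ∀ j, Matrix (F.ι (j + 1)) (E.ι j) R, v 0 = F.D 0 * k 0 ∧
      ∀ j, v (j + 1) = k j * E.D j + F.D (j + 1) * k (j + 1) := by
  rw [eps_zero] at h
  obtain ⟨k0, hk0⟩ := h
  obtain ⟨k1, hk1⟩ := lift1 (hF 0) (v 1 - k0 * E.D 0) (by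
    rw [Matrix.mul_sub, hv 0, ← Matrix.mul_assoc, ← hk0, sub_self])
  obtain ⟨v, h0, -, h2⟩ := seq_up (T := fun j => Matrix (F.ι (j + 1)) (E.ι j) R)
    (fun j a b => v (j + 1) - a * E.D j = F.D (j + 1) * b) (by
      intro j a b h
      obtain ⟨c, hc⟩ := lift1 (hF (j + 1)) (v (j + 2) - b * E.D (j + 1)) (by
        rw [Matrix.mul_sub, hv (j + 1), ← Matrix.mul_assoc, ← h, Matrix.sub_mul,
          Matrix.mul_assoc a, E.hD]
        simp)
      exact ⟨c, hc⟩) k0 k1 hk1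
  exact ⟨v, by rw [h0]; exact hk0, fun j => by rw [← h2 j]; abel⟩

end Cx

section Ops
open DirectSum
variable {B : Type u} [CommRing B] {c : ℕ} (pk : OpPkg B c)

/-- operators on a complex -/
def tT (E : Cx B) (i : Fin c) (n : ℕ) : Matrix (E.ι n) (E.ι (n + 2)) B := pk.τ i (E.D n) (E.D (n + 1))

lemma tT_comm (E : Cx B) (i : Fin c) (n : ℕ) :
    E.D n * tT pk E i (n + 1) = tT pk E i n * E.D (n + 2) :=
  pk.comm i _ _ _ (E.hD n) (E.hD (n + 1))

variable (E : Cx B) (Y : Type u) [AddCommGroup Y] [Module B Y]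

lemma tT_commutes (i : Fin c) : Commutes E.D Y (tT pk E i) := by
  intro n w
  rw [← act_mul, ← act_mul, tT_comm]

/-- operators on cohomology -/
def TT (i : Fin c) (n : ℕ) : Coh E.D Y n →ₗ[B] Coh E.D Y (n + 2) :=
  opT (tT pk E i) (tT_commutes pk E Y i) n

lemma TT_cls (i : Fin c) (n : ℕ) (u : E.ι n → Y) (hu : u ∈ Zc E.D Y n) :
    TT pk E Y i n (cls u hu) = cls (act (tT pk E i n) u) ((tT_commutes pk E Y i).mem hu) := rfl

lemma TT_opComm : OpComm (TT pk E Y) := by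
  intro i j n x
  obtain ⟨u, hu, rfl⟩ := cls_surj x
  rw [TT_cls, TT_cls, TT_cls, TT_cls, cls_eq]
  obtain ⟨k0, k1, hk⟩ := pk.nat i (E.D n) (E.D (n + 1)) (E.D (n + 2)) (E.D (n + 3))
    (tT pk E j n) (tT pk E j (n + 1)) (tT pk E j (n + 2)) (E.hD _) (E.hD _)
    (tT_comm pk E j n).symm (tT_comm pk E j (n + 1)).symm
  rw [← act_mul, ← act_mul, ← act_sub]
  refine ⟨act k0 u, ?_⟩
  have := congrArg (fun M => act M u) hk
  simp only [act_add, act_mul _ k1, mem_Zc.1 hu, map_zero, add_zero] at this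
  rw [← act_mul]
  exact this.symm

lemma TT_evGen (hE : E.Ex) [Module.Finite B Y] : EvGen (TT pk E Y) := by
  obtain ⟨n0, hn0⟩ := pk.fg E.ι E.D E.hD hE Y
  refine ⟨n0, fun n hn x => ?_⟩
  obtain ⟨u, hu, rfl⟩ := cls_surj x
  obtain ⟨v, hv, h⟩ := hn0 n hn u hu
  refine ⟨fun i => cls (v i) (hv i), ?_⟩
  simp only [TT_cls]
  rw [← cls_sum Finset.univ (fun i => act (tT pk E i n) (v i))
    (fun i => (tT_commutes pk E Y i).mem (hv i)), cls_eq]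
  exact h

/-- total cohomology -/
abbrev EP := ⨁ n, Coh E.D Y n

/-- the polynomial action -/
noncomputable abbrev rh : MvPolynomial (Fin c) B →ₐ[B] Module.End B (EP E Y) := rho (TT_opComm pk E Y)

lemma EP_noeth [IsNoetherianRing B] (hE : E.Ex) [Module.Finite B Y] :
    @IsNoetherian (MvPolynomial (Fin c) B) (EP E Y) _ _ (rhoModule (TT_opComm pk E Y)) :=
  noeth_of_evGen _ (TT_evGen pk E Y hE)

/-- generation by homogeneous polynomials -/
lemma EP_gen {H : ℕ → Type*} [∀ n, AddCommGroup (H n)]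
    [∀ n, Module B (H n)] {T : Fin c → ∀ n, H n →ₗ[B] H (n + 2)} (hT : OpComm T) (hg : EvGen T)
    (e : ℕ) : ∃ n0, ∀ n, n0 ≤ n → ∀ x : H (n + 2 * e), lof B ℕ H (n + 2 * e) x ∈
      Submodule.span B {z | ∃ (p : MvPolynomial (Fin c) B) (y : H n), p.IsHomogeneous e ∧
        z = rho hT p (lof B ℕ H n y)} := by
  obtain ⟨n0, hn0⟩ := hg
  refine ⟨n0, fun n hn => ?_⟩
  induction e with
  | zero =>
    intro x
    refine Submodule.subset_span ⟨1, x, MvPolynomial.isHomogeneous_one _ _, ?_⟩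
    rw [map_one]; rfl
  | succ e ih =>
    intro x
    obtain ⟨y, rfl⟩ := hn0 (n + 2 * e) (by omega) x
    rw [map_sum]
    refine Submodule.sum_mem _ fun i _ => ?_
    have : lof B ℕ H (n + 2 * (e + 1)) (T i (n + 2 * e) (y i)) =
        totOp T i (lof B ℕ H (n + 2 * e) (y i)) := (totOp_lof T i _ _).symm
    rw [this]
    have h2 := Submodule.mem_map_of_mem (f := totOp T i) (ih (y i))
    refine (Submodule.map_span_le _ _ _).2 ?_ h2
    rintro _ ⟨p, z, hp, rfl⟩
    refine Submodule.subset_span ⟨MvPolynomial.X i * p, z, ?_, ?_⟩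
    · rw [add_comm]; exact (MvPolynomial.isHomogeneous_X _ i).mul hp
    · rw [map_mul, rho_X]; rfl

/-- push forward along a linear map of coefficients -/
noncomputable def pushC {Y' : Type u} [AddCommGroup Y'] [Module B Y'] (f : Y →ₗ[B] Y') (n : ℕ) :
    Coh E.D Y n →ₗ[B] Coh E.D Y' n :=
  cohMap (LinearMap.compLeft f (E.ι n)) (by
    intro u hu
    rw [mem_Zc] at hu ⊢
    change act (E.D n) (fun i => f (u i)) = 0
    rw [act_map, hu]; ext; simp) (by
    intro u _ hu
    cases n with
    | zero =>
      have : u = 0 := hu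
      subst this; simp
    | succ n =>
      obtain ⟨w, rfl⟩ := hu
      exact ⟨fun i => f (w i), act_map f _ _⟩)

variable {E Y}

lemma pushC_cls {Y' : Type u} [AddCommGroup Y'] [Module B Y'] (f : Y →ₗ[B] Y') (n : ℕ)
    (u : E.ι n → Y) (hu : u ∈ Zc E.D Y n) (hu' : (fun i => f (u i)) ∈ Zc E.D Y' n) :
    pushC E Y f n (cls u hu) = cls (fun i => f (u i)) hu' := rfl

lemma pushC_comp {Y' Y'' : Type u} [AddCommGroup Y'] [Module B Y'] [AddCommGroup Y''] [Module B Y'']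
    (f : Y →ₗ[B] Y') (g : Y' →ₗ[B] Y'') (n : ℕ) (x : Coh E.D Y n) :
    pushC E Y (g.comp f) n x = pushC E Y' g n (pushC E Y f n x) := by
  obtain ⟨u, hu, rfl⟩ := cls_surj x
  rfl

/-- total push forward -/
noncomputable def push {Y' : Type u} [AddCommGroup Y'] [Module B Y'] (f : Y →ₗ[B] Y') :
    EP E Y →ₗ[B] EP E Y' :=
  DirectSum.toModule B ℕ _ (fun n => (lof B ℕ (fun n => Coh E.D Y' n) n).comp (pushC E Y f n))

lemma push_lof {Y' : Type u} [AddCommGroup Y'] [Module B Y'] (f : Y →ₗ[B] Y') (n : ℕ)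
    (x : Coh E.D Y n) : push f (lof B ℕ (fun n => Coh E.D Y n) n x) =
      lof B ℕ (fun n => Coh E.D Y' n) n (pushC E Y f n x) := by
  simp [push]

lemma push_rh {Y' : Type u} [AddCommGroup Y'] [Module B Y'] (f : Y →ₗ[B] Y')
    (p : MvPolynomial (Fin c) B) (x : EP E Y) : push f (rh pk E Y p x) = rh pk E Y' p (push f x) := by
  refine rho_comm_map _ _ (push f) ?_ p x
  intro i x
  induction x using DirectSum.induction_on with
  | zero => simp
  | add x y hx hy => simp only [map_add, hx, hy]
  | of n x =>
    change push f (totOp _ i (lof B ℕ (fun n => Coh E.D Y n) n x)) =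
      totOp _ i (push f (lof B ℕ (fun n => Coh E.D Y n) n x))
    rw [totOp_lof, push_lof, push_lof, totOp_lof]
    congr 1
    obtain ⟨u, hu, rfl⟩ := cls_surj x
    have h1 : (fun i => f (u i)) ∈ Zc E.D Y' n := by
      rw [mem_Zc] at hu ⊢
      rw [act_map, hu]; ext; simp
    rw [pushC_cls f n u hu h1, TT_cls, TT_cls]
    change cls _ _ = cls _ _
    congr 1
    exact (act_map f _ _).symm

/-- pull back along a chain map `v` of degree `m+1` -/
lemma pull_rh {F E : Cx B} {Y : Type u} [AddCommGroup Y] [Module B Y] (m : ℕ)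
    (v : ∀ j, Matrix (F.ι j) (E.ι (m + (j + 1))) B)
    (hv : Cx.CM F (E.shift m).sh v) (p : MvPolynomial (Fin c) B) (n k : ℕ)
    (u : F.ι n → Y) (hu : u ∈ Zc F.D Y n) (z : F.ι k → Y) (hz : z ∈ Zc F.D Y k)
    (h : rh pk F Y p (lof B ℕ (fun n => Coh F.D Y n) n (cls u hu)) =
      lof B ℕ (fun n => Coh F.D Y n) k (cls z hz)) :
    ∃ hu' hz', rh pk E Y p (lof B ℕ (fun n => Coh E.D Y n) (m + (n + 1)) (cls (act (v n) u) hu')) =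
      lof B ℕ (fun n => Coh E.D Y n) (m + (k + 1)) (cls (act (v k) z) hz') := by
  have hZ : ∀ n, ∀ u ∈ Zc F.D Y n, act (v n) u ∈ Zc E.D Y (m + (n + 1)) := by
    intro n u hu
    rw [mem_Zc] at hu ⊢
    have h1 : F.D n * v (n + 1) = v n * E.D (m + (n + 1)) := hv n
    rw [← act_mul, ← h1, act_mul, hu, map_zero]
  let Ψ : ∀ n, Coh F.D Y n →ₗ[B] Coh E.D Y (m + (n + 1)) := fun n =>
    cohMap (act (v n)) (hZ n) (by
      intro u _ hu
      cases n with
      | zero =>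
        have : u = 0 := hu
        subst this; simp
      | succ n =>
        obtain ⟨w, rfl⟩ := hu
        have h1 : F.D n * v (n + 1) = v n * E.D (m + (n + 1)) := hv n
        have h2 : act (E.D (m + (n + 1))) (act (v n) w) = act (v (n + 1)) (act (F.D n) w) := by
          rw [← act_mul, ← act_mul, h1]
        exact ⟨act (v n) w, h2⟩)
  let Φ : EP F Y →ₗ[B] EP E Y := DirectSum.toModule B ℕ _
    (fun n => (lof B ℕ (fun n => Coh E.D Y n) (m + (n + 1))).comp (Ψ n))
  have hΦ : ∀ n x, Φ (lof B ℕ (fun n => Coh F.D Y n) n x) =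
      lof B ℕ (fun n => Coh E.D Y n) (m + (n + 1)) (Ψ n x) := by
    intro n x; simp [Φ]
  have hc : ∀ x, Φ (rh pk F Y p x) = rh pk E Y p (Φ x) := by
    refine rho_comm_map _ _ Φ ?_ p
    intro i x
    induction x using DirectSum.induction_on with
    | zero => simp
    | add x y hx hy => simp only [map_add, hx, hy]
    | of n x =>
      change Φ (totOp _ i (lof B ℕ (fun n => Coh F.D Y n) n x)) =
        totOp _ i (Φ (lof B ℕ (fun n => Coh F.D Y n) n x))
      rw [totOp_lof, hΦ, hΦ, totOp_lof]
      change lof B ℕ (fun n => Coh E.D Y n) (m + (n + 1) + 2) _ = _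
      congr 1
      obtain ⟨u, hu, rfl⟩ := cls_surj x
      obtain ⟨k0, k1, hk⟩ := pk.nat i (F.D n) (F.D (n + 1)) (E.D (m + (n + 1)))
        (E.D (m + (n + 1) + 1)) (v n) (v (n + 1)) (v (n + 2)) (F.hD _) (E.hD _)
        (hv n).symm (hv (n + 1)).symm
      have h2 : act (E.D (m + (n + 1) + 1)) (- act k0 u) = act (v (n + 2)) (act (tT pk F i n) u) -
          act (tT pk E i (m + (n + 1))) (act (v n) u) := by
        have := congrArg (fun M => act M u) hk
        simp only [act_add, act_sub, act_mul, mem_Zc.1 hu, map_zero, add_zero] at this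
        rw [map_neg, ← this, neg_sub]
        exact congrArg₂ _ rfl (act_mul _ _ _)
      have h3 := hZ _ _ ((tT_commutes pk F Y i).mem hu)
      have h4 := (tT_commutes pk E Y i).mem (hZ _ _ hu)
      have h5 : cls (n := m + (n + 1) + 2) (D := E.D) (act (v (n + 2)) (act (tT pk F i n) u)) h3 =
        cls (act (tT pk E i (m + (n + 1))) (act (v n) u)) h4 := by
        refine cls_eq.2 ?_
        exact ⟨_, h2⟩
      exact h5
  refine ⟨hZ n u hu, hZ k z hz, ?_⟩
  have h2 := hc (lof B ℕ (fun n => Coh F.D Y n) n (cls u hu))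
  rw [h, hΦ, hΦ] at h2
  exact h2.symm

end Ops
end CxT
end Part8

section Part9
open CategoryTheory Opposite Filter IsLocalRing
namespace CxT

section MR
variable (A : Type u) [CommRing A] [IsLocalRing A]

/-- minimal exact complexes of free modules -/
structure MR where
  b : ℕ → ℕ
  D : ∀ n, Matrix (Fin (b n)) (Fin (b (n + 1))) A
  hD : ∀ n, D n * D (n + 1) = 0
  ex : ∀ n (x : Fin (b (n + 1)) → A), (D n).mulVec x = 0 → ∃ y, x = (D (n + 1)).mulVec y
  min : ∀ n i j, D n i j ∈ maximalIdeal A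

variable {A}

/-- underlying complex -/
abbrev MR.cx (F : MR A) : Cx A where
  ι n := Fin (F.b n)
  D := F.D
  hD := F.hD

lemma MR.cxEx (F : MR A) : F.cx.Ex := F.ex

/-- the growth condition -/
def Bd (b : ℕ → ℕ) (s : ℕ) : Prop :=
  ∃ a : ℝ, ∀ᶠ n in atTop, (b n : ℝ) ≤ a * (n : ℝ) ^ ((s : ℤ) - 1)

variable {M : Type u} [AddCommGroup M] [Module A M]

/-- to the frozen notion -/
noncomputable def MR.mfr (F : MR A) (e : F.cx.Ck ≃ₗ[A] M) : ComplexityTest.MinFreeRes A M where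
  b := F.b
  d n := (F.D n).mulVecLin
  aug := e.toLinearMap.comp (Submodule.mkQ _)
  aug_surjective := e.surjective.comp (Submodule.mkQ_surjective _)
  exact_zero := by
    intro x
    exact (e.map_eq_zero_iff).trans
      (Submodule.Quotient.mk_eq_zero (LinearMap.range (F.D 0).mulVecLin))
  exact_succ n := by
    intro x
    constructor
    · intro h
      obtain ⟨y, rfl⟩ := F.ex n x h
      exact ⟨y, rfl⟩
    · rintro ⟨y, rfl⟩
      simp [Matrix.mulVec_mulVec, F.hD]
  minimal n x i := by
    rw [Matrix.mulVecLin_apply, Matrix.mulVec, dotProduct]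
    exact Ideal.sum_mem _ fun j _ => Ideal.mul_mem_right _ _ (F.min n i j)

lemma MR.of (R : ComplexityTest.MinFreeRes A M) :
    ∃ F : MR A, F.b = R.b ∧ Nonempty (F.cx.Ck ≃ₗ[A] M) := by
  have key : ∀ n, (LinearMap.toMatrix' (R.d n)).mulVecLin = R.d n := fun n => by
    rw [← Matrix.toLin'_apply', Matrix.toLin'_toMatrix']
  have key2 : ∀ n x, (LinearMap.toMatrix' (R.d n)).mulVec x = R.d n x := fun n x => by
    rw [← Matrix.mulVecLin_apply, key]
  let F : MR A :=
    { b := R.b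
      D := fun n => LinearMap.toMatrix' (R.d n)
      hD := fun n => by
        rw [← LinearMap.toMatrix'_comp]
        have : (R.d n).comp (R.d (n + 1)) = 0 := by
          ext1 x
          exact LinearMap.ext fun y => (R.exact_succ n _).2 ⟨_, rfl⟩
        rw [this, map_zero]
      ex := fun n x h => by
        rw [key2] at h
        obtain ⟨y, rfl⟩ := (R.exact_succ n _).1 h
        exact ⟨y, (key2 _ _).symm⟩
      min := fun n i j => by
        rw [LinearMap.toMatrix'_apply]
        exact R.minimal n _ _ }
  refine ⟨F, rfl, ⟨?_⟩⟩
  have h : LinearMap.range (F.D 0).mulVecLin = LinearMap.ker R.aug := by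
    rw [LinearMap.exact_iff.1 R.exact_zero]
    exact congrArg LinearMap.range (key 0)
  exact (Submodule.quotEquivOfEq _ _ h).trans (LinearMap.quotKerEquivOfSurjective _ R.aug_surjective)

lemma hcl_iff (s : ℕ) : ComplexityTest.HasComplexityLE A M s ↔
    ∃ F : MR A, Nonempty (F.cx.Ck ≃ₗ[A] M) ∧ Bd F.b s := by
  constructor
  · rintro ⟨R, h⟩
    obtain ⟨F, hF, e⟩ := MR.of R
    exact ⟨F, e, by rw [hF]; exact h⟩
  · rintro ⟨F, ⟨e⟩, h⟩
    exact ⟨F.mfr e, h⟩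

lemma Bd.mono {b : ℕ → ℕ} {s t : ℕ} (h : Bd b s) (hst : s ≤ t) : Bd b t := by
  obtain ⟨a, ha⟩ := h
  refine ⟨|a|, ?_⟩
  filter_upwards [ha, eventually_ge_atTop 1] with n hn h1
  have h1' : (1 : ℝ) ≤ n := by exact_mod_cast h1
  refine hn.trans ?_
  have h3 : (n : ℝ) ^ ((s : ℤ) - 1) ≤ (n : ℝ) ^ ((t : ℤ) - 1) :=
    zpow_le_zpow_right₀ h1' (by omega)
  have h2 : (0 : ℝ) ≤ (n : ℝ) ^ ((s : ℤ) - 1) := by positivity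
  nlinarith [le_abs_self a, abs_nonneg a]

lemma complexity_eq {t : ℕ} (ht : 1 ≤ t) (h : ComplexityTest.HasComplexityLE A M t)
    (h' : ¬ ComplexityTest.HasComplexityLE A M (t - 1)) : ComplexityTest.complexity A M = t := by
  unfold ComplexityTest.complexity
  apply le_antisymm
  · exact sInf_le ⟨t, rfl, h⟩
  · refine le_sInf ?_
    rintro _ ⟨s, rfl, hs⟩
    by_contra hlt
    apply h'
    obtain ⟨R, hR⟩ := hs
    have hlt : s < t := by
      by_contra h0
      exact hlt (by exact_mod_cast not_lt.1 h0)
    exact ⟨R, Bd.mono (b := R.b) hR (by omega)⟩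

lemma complexity_lt {t : ℕ} (ht : 1 ≤ t) (h : ComplexityTest.HasComplexityLE A M (t - 1)) :
    ComplexityTest.complexity A M < t := by
  unfold ComplexityTest.complexity
  refine lt_of_le_of_lt (sInf_le ⟨t - 1, rfl, h⟩) ?_
  exact_mod_cast (by omega : t - 1 < t)

lemma exists_mingen (N : Type u) [AddCommGroup N] [Module A N] [Module.Finite A N] :
    ∃ (b : ℕ) (g : (Fin b → A) →ₗ[A] N), Function.Surjective g ∧
      ∀ x, g x = 0 → ∀ i, x i ∈ maximalIdeal A := by
  classical
  have hex : ∃ b : ℕ, ∃ g : (Fin b → A) →ₗ[A] N, Function.Surjective g :=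
    Module.Finite.exists_fin' A N
  obtain ⟨g, hg⟩ := Nat.find_spec hex
  refine ⟨Nat.find hex, g, hg, fun x hx i => ?_⟩
  by_contra hi
  have hu : IsUnit (x i) := by
    by_contra h0
    exact hi h0
  obtain ⟨b, hb⟩ : ∃ b, Nat.find hex = b + 1 := ⟨Nat.find hex - 1, by have := i.2; omega⟩
  refine Nat.find_min hex (m := b) (by omega) ?_
  generalize Nat.find hex = b' at *
  subst hb
  let s : (Fin b → A) →ₗ[A] (Fin (b + 1) → A) :=
    { toFun := fun y => i.insertNth 0 y
      map_add' := fun y z => by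
        ext j
        refine Fin.succAboveCases i ?_ (fun j => ?_) j <;> simp
      map_smul' := fun a z => by
        ext j
        refine Fin.succAboveCases i ?_ (fun j => ?_) j <;> simp }
  refine ⟨g.comp s, fun n => ?_⟩
  obtain ⟨y, rfl⟩ := hg n
  obtain ⟨r, hr⟩ := hu.exists_left_inv
  let z := y - (y i * r) • x
  have hz : z i = 0 := by simp [z, mul_assoc, hr]
  refine ⟨i.removeNth z, ?_⟩
  have h1 : s (i.removeNth z) = z := by
    ext j
    refine Fin.succAboveCases i ?_ (fun j => ?_) j
    · simp [s, hz]
    · simp [s, Fin.removeNth]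
  rw [LinearMap.comp_apply, h1]
  simp [z, hx]

lemma MR.exists [IsNoetherianRing A] [Module.Finite A M] :
    ∃ F : MR A, Nonempty (F.cx.Ck ≃ₗ[A] M) := by
  obtain ⟨b0, g0, hg0, hm0⟩ := exists_mingen (A := A) M
  let S := Σ b : ℕ, Submodule A (Fin b → A)
  have step : ∀ s : S, ∃ (b : ℕ) (g : (Fin b → A) →ₗ[A] (Fin s.1 → A)),
      LinearMap.range g = s.2 ∧ ∀ x, g x = 0 → ∀ i, x i ∈ maximalIdeal A := by
    rintro ⟨b, N⟩
    obtain ⟨b', g, hg, hm⟩ := exists_mingen (A := A) N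
    refine ⟨b', N.subtype.comp g, ?_, fun x hx => hm x (Subtype.ext hx)⟩
    rw [LinearMap.range_comp, LinearMap.range_eq_top.2 hg, Submodule.map_top, Submodule.range_subtype]
  choose nb ng hng hnm using step
  let st : ℕ → S := fun n => Nat.rec ⟨b0, LinearMap.ker g0⟩
    (fun _ s => ⟨nb s, LinearMap.ker (ng s)⟩) n
  have hker : ∀ n, ∀ x ∈ (st n).2, ∀ i, x i ∈ maximalIdeal A := by
    intro n
    cases n with
    | zero => exact hm0
    | succ n => exact hnm (st n)
  refine ⟨(MR.of (M := M)
    { b := fun n => (st n).1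
      d := fun n => ng (st n)
      aug := g0
      aug_surjective := hg0
      exact_zero := LinearMap.exact_iff.2 (hng (st 0)).symm
      exact_succ := fun n => LinearMap.exact_iff.2 (hng (st (n + 1))).symm
      minimal := fun n x i => hker n _ (by rw [← hng (st n)]; exact ⟨x, rfl⟩) i }).choose, ?_⟩
  exact (MR.of (M := M) _).choose_spec.2

end MR
end CxT
end Part9

section Part10
open CategoryTheory Opposite Filter IsLocalRing
namespace CxT

namespace Cx
variable {R : Type u} [CommRing R]

lemma act_D_ep (C : Cx R) : act (C.D 0) C.ep = 0 :=
  (eps_zero _ _).2 ⟨1, (Matrix.mul_one _).symm⟩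

lemma lift_map {C F : Cx R} (hF : F.Ex) (f : C.Ck →ₗ[R] F.Ck) :
    ∃ ψ, CM F C ψ ∧ act (ψ 0) F.ep = fun i => f (C.ep i) := by
  obtain ⟨ψ0, h0⟩ := eps_lift (F.D 0) (fun i => f (C.ep i))
  obtain ⟨ψ, h1, h2⟩ := exists_lift (E := C) hF ψ0 (by
    rw [h0, act_map, act_D_ep]; ext; simp)
  exact ⟨ψ, h1, by rw [h2]; exact h0⟩

lemma CM.mul {F C E : Cx R} {φ : ∀ j, Matrix (F.ι j) (C.ι j) R} {ψ : ∀ j, Matrix (C.ι j) (E.ι j) R}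
    (h : CM F C φ) (h' : CM C E ψ) : CM F E (fun j => φ j * ψ j) := by
  intro j
  rw [← Matrix.mul_assoc, h j, Matrix.mul_assoc, h' j, ← Matrix.mul_assoc]

lemma homotopy_equiv {C F : Cx R} (hC : C.Ex) (hF : F.Ex) (e : C.Ck ≃ₗ[R] F.Ck) :
    ∃ (ψ : ∀ j, Matrix (F.ι j) (C.ι j) R) (φ : ∀ j, Matrix (C.ι j) (F.ι j) R),
      CM F C ψ ∧ CM C F φ ∧ 
      (∃ k : ∀ j, Matrix (C.ι (j + 1)) (C.ι j) R, φ 0 * ψ 0 - 1 = C.D 0 * k 0 ∧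
        ∀ j, φ (j + 1) * ψ (j + 1) - 1 = k j * C.D j + C.D (j + 1) * k (j + 1)) ∧
      (∃ k : Matrix (F.ι 1) (F.ι 0) R, ψ 0 * φ 0 - 1 = F.D 0 * k) := by
  obtain ⟨ψ, h1, h2⟩ := lift_map hF e.toLinearMap
  obtain ⟨φ, h3, h4⟩ := lift_map hC e.symm.toLinearMap
  refine ⟨ψ, φ, h1, h3, ?_, ?_⟩
  · refine null_zero (E := C) hC (fun j => φ j * ψ j - 1) ?_ ?_
    · intro j
      rw [Matrix.mul_sub, Matrix.sub_mul, (h3.mul h1) j]; simp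
    · rw [act_sub, act_mul, h4, act_map, h2, act_one]
      ext i; simp
  · rw [← eps_zero, act_sub, act_mul, h2, act_map, h4, act_one]
    ext i; simp

/-- mapping cone -/
abbrev cone (F : Cx R) (δ : ℕ) (G : ∀ n, Matrix (F.ι n) (F.ι (δ + (n + 1))) R)
    (hG : CM F (F.shift δ).sh G) : Cx R where
  ι n := F.ι n ⊕ F.ι (δ + n)
  D n := Matrix.fromBlocks (F.D n) (G n) 0 (-F.D (δ + n))
  hD n := by
    have h : F.D n * G (n + 1) = G n * F.D (δ + (n + 1)) := hG n
    have h2 : F.D (δ + n) * F.D (δ + (n + 1)) = 0 := F.hD (δ + n)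
    refine (Matrix.fromBlocks_multiply _ _ _ _ _ _ _ _).trans ?_
    rw [F.hD, h, Matrix.mul_neg, Matrix.mul_neg, Matrix.neg_mul (F.D (δ + n)) (F.D (δ + (n + 1))), h2]
    simp

lemma cone_ex {F : Cx R} (hF : F.Ex) (δ : ℕ) (G : ∀ n, Matrix (F.ι n) (F.ι (δ + (n + 1))) R)
    (hG : CM F (F.shift δ).sh G) : (cone F δ G hG).Ex := by
  intro n x hx
  have hx := (Matrix.fromBlocks_mulVec _ _ _ _ _).symm.trans hx
  have h1 : (F.D n).mulVec (x ∘ Sum.inl) + (G n).mulVec (x ∘ Sum.inr) = 0 := by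
    ext i; exact congrFun hx (Sum.inl i)
  have h2 : (F.D (δ + n)).mulVec (x ∘ Sum.inr) = 0 := by
    ext i
    have := congrFun hx (Sum.inr i)
    simp only [Sum.elim_inr, Matrix.zero_mulVec, zero_add, Matrix.neg_mulVec, Pi.neg_apply] at this
    exact neg_eq_zero.1 this
  obtain ⟨y2, hy2⟩ := hF (δ + n) _ h2
  have h : F.D n * G (n + 1) = G n * F.D (δ + (n + 1)) := hG n
  obtain ⟨y1, hy1⟩ := hF n (x ∘ Sum.inl + (G (n + 1)).mulVec y2) (by
    rw [Matrix.mulVec_add, Matrix.mulVec_mulVec, h, ← Matrix.mulVec_mulVec]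
    rw [← h1, hy2]; rfl)
  refine ⟨Sum.elim y1 (-y2), ?_⟩
  refine Eq.trans ?_ (Matrix.fromBlocks_mulVec _ _ _ _ _).symm
  funext i
  cases i with
  | inl i =>
    have := congrFun hy1 i
    simp only [Sum.elim_inl, Pi.add_apply, Sum.elim_comp_inl, Sum.elim_comp_inr, Matrix.mulVec_neg,
      Pi.neg_apply, Function.comp_apply] at this ⊢
    rw [← this]; abel
  | inr i =>
    have := congrFun hy2 i
    simp only [Sum.elim_inr, Pi.add_apply, Sum.elim_comp_inl, Sum.elim_comp_inr, Matrix.mulVec_neg,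
      Pi.neg_apply, Function.comp_apply, Matrix.zero_mulVec, Pi.zero_apply, Matrix.neg_mulVec] at this ⊢
    rw [zero_add, neg_neg]; exact this

end Cx

lemma card_le_of_mod {A : Type u} [CommRing A] [IsLocalRing A] {α β γ : Type} [Fintype α]
    [DecidableEq α] [Fintype β] [Fintype γ] (X : Matrix α β A) (G : Matrix β α A)
    (Y : Matrix α γ A) (Ψ : Matrix γ α A)
    (h : ∀ i j, (1 - X * G - Y * Ψ : Matrix α α A) i j ∈ maximalIdeal A) :
    Fintype.card α ≤ Fintype.card β + Fintype.card γ := by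
  let r := residue A
  have h1 : (X.map r).fromCols (Y.map r) * (G.map r).fromRows (Ψ.map r) = 1 := by
    rw [Matrix.fromCols_mul_fromRows, ← Matrix.map_mul, ← Matrix.map_mul]
    ext i j
    have := (residue_eq_zero_iff _).2 (h i j)
    simp only [Matrix.sub_apply, map_sub] at this
    rw [sub_sub, sub_eq_zero] at this
    rw [Matrix.add_apply, Matrix.map_apply, Matrix.map_apply]
    refine this.symm.trans ?_
    by_cases hij : i = j <;> simp [Matrix.one_apply, hij]
  have h2 := Matrix.rank_mul_le_right ((X.map r).fromCols (Y.map r)) ((G.map r).fromRows (Ψ.map r))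
  rw [h1, Matrix.rank_one] at h2
  refine h2.trans ((Matrix.rank_le_card_height _).trans ?_)
  simp

lemma betti_le {A : Type u} [CommRing A] [IsLocalRing A] (F R : MR A) (δ : ℕ)
    (G : ∀ n, Matrix (F.cx.ι n) (F.cx.ι (δ + (n + 1))) A)
    (hG : Cx.CM F.cx (F.cx.shift δ).sh G) (e : (F.cx.cone δ G hG).Ck ≃ₗ[A] R.cx.Ck) (n : ℕ) :
    F.b (n + (δ + 1)) ≤ F.b n + R.b (n + 1) := by
  obtain ⟨ψ, φ, -, -, ⟨k, -, hk⟩, -⟩ := Cx.homotopy_equiv (Cx.cone_ex F.cxEx δ G hG) R.cxEx e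
  have := card_le_of_mod (A := A) (α := Fin (F.b (δ + (n + 1)))) (β := Fin (F.b n))
    (γ := Fin (R.b (n + 1)))
    (Matrix.of fun i a => - k n (Sum.inr i) (Sum.inl a)) (G n)
    (Matrix.of fun i a => φ (n + 1) (Sum.inr i) a) (Matrix.of fun a j => ψ (n + 1) a (Sum.inr j)) (by
    intro i j
    have h1 := congrFun (congrFun (hk n) (Sum.inr i)) (Sum.inr j)
    rw [Matrix.sub_apply, Matrix.add_apply, Matrix.mul_apply, Matrix.mul_apply, Matrix.mul_apply] at h1
    have h2 : ∑ l, k n (Sum.inr i) l * (F.cx.cone δ G hG).D n l (Sum.inr j) =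
      ∑ l, k n (Sum.inr i) (Sum.inl l) * G n l j +
      ∑ l, k n (Sum.inr i) (Sum.inr l) * (- F.D (δ + n) l j) := Fintype.sum_sum_type _
    have h3 : ∑ l, (F.cx.cone δ G hG).D (n + 1) (Sum.inr i) l * k (n + 1) l (Sum.inr j) =
      ∑ l, 0 * k (n + 1) (Sum.inl l) (Sum.inr j) +
      ∑ l, (- F.D (δ + (n + 1)) i l) * k (n + 1) (Sum.inr l) (Sum.inr j) := Fintype.sum_sum_type _
    rw [h2, h3] at h1
    have h4 : (1 : Matrix ((F.cx.cone δ G hG).ι (n + 1)) ((F.cx.cone δ G hG).ι (n + 1)) A)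
      (Sum.inr i) (Sum.inr j) = (1 : Matrix (Fin (F.b (δ + (n + 1)))) (Fin (F.b (δ + (n + 1)))) A) i j := by
      by_cases hij : i = j
      · subst hij; simp
      · rw [Matrix.one_apply_ne hij, Matrix.one_apply_ne (by simpa using hij)]
    rw [h4] at h1
    rw [Matrix.sub_apply, Matrix.sub_apply, Matrix.mul_apply, Matrix.mul_apply]
    simp only [Matrix.of_apply, neg_mul, Finset.sum_neg_distrib, zero_mul, Finset.sum_const_zero,
      zero_add, mul_neg] at h1 ⊢
    have h5 : ∑ l, k n (Sum.inr i) (Sum.inr l) * F.D (δ + n) l j ∈ maximalIdeal A :=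
      Ideal.sum_mem _ fun l _ => Ideal.mul_mem_left _ _ (F.min _ _ _)
    have h6 : ∑ l, F.D (δ + (n + 1)) i l * k (n + 1) (Sum.inr l) (Sum.inr j) ∈ maximalIdeal A :=
      Ideal.sum_mem _ fun l _ => Ideal.mul_mem_right _ _ (F.min _ _ _)
    convert add_mem h5 h6 using 1
    linear_combination -h1)
  simp only [Fintype.card_fin] at this
  rw [show n + (δ + 1) = δ + (n + 1) by omega]
  exact this

lemma growth (f : ℕ → ℝ) (g : ℕ → ℝ) (d n1 : ℕ) (hd : 1 ≤ d) (hf : ∀ n, 0 ≤ f n) (hg : ∀ n, 0 ≤ g n)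
    (h : ∀ n, n1 ≤ n → f (n + d) ≤ f n + (g (n + d) - g n)) :
    ∃ K : ℝ, 0 ≤ K ∧ ∀ n, n1 ≤ n → f n ≤ K + g n := by
  refine ⟨∑ j ∈ Finset.range (n1 + d), f j, Finset.sum_nonneg fun j _ => hf j, fun n => ?_⟩
  induction n using Nat.strong_induction_on with
  | _ n ih =>
    intro hn
    by_cases hlt : n < n1 + d
    · have := Finset.single_le_sum (f := f) (fun j _ => hf j) (Finset.mem_range.2 hlt)
      linarith [hg n]
    · obtain ⟨m, rfl⟩ : ∃ m, n = m + d := ⟨n - d, by omega⟩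
      have h1 := ih m (by omega) (by omega)
      have h2 := h m (by omega)
      linarith

lemma Bd_succ {f r : ℕ → ℕ} {d s : ℕ} (hd : 1 ≤ d) (h : ∀ n, f (n + d) ≤ f n + r (n + 1))
    (hr : Bd r s) : Bd f (s + 1) := by
  obtain ⟨a, ha⟩ := hr
  obtain ⟨n1, hn1⟩ := eventually_atTop.1 ha
  have key : ∃ (b : ℝ) (n2 : ℕ), 0 ≤ b ∧ ∀ n, n2 ≤ n →
      (r (n + 1) : ℝ) ≤ b * ((n + d : ℕ) : ℝ) ^ s - b * (n : ℝ) ^ s := by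
    cases s with
    | zero =>
      obtain ⟨n3, hn3⟩ := exists_nat_gt |a|
      refine ⟨0, max n1 n3, le_rfl, fun n hn => ?_⟩
      have h1 := hn1 (n + 1) (by have := le_max_left n1 n3; omega)
      have h2 : (n3 : ℝ) ≤ n := by exact_mod_cast (le_max_right n1 n3).trans hn
      have h3 : (r (n + 1) : ℝ) < 1 := by
        refine lt_of_le_of_lt h1 ?_
        have h5 : (0 : ℝ) < ((n + 1 : ℕ) : ℝ) := by positivity
        simp only [Nat.cast_zero, zero_sub, zpow_neg, zpow_one]
        rw [← div_eq_mul_inv, div_lt_one h5]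
        push_cast
        linarith [le_abs_self a]
      have h4 : r (n + 1) = 0 := by
        have : r (n + 1) < 1 := by exact_mod_cast h3
        omega
      simp [h4]
    | succ s =>
      refine ⟨|a|, n1, abs_nonneg a, fun n hn => ?_⟩
      refine (hn1 (n + 1) (by omega)).trans ?_
      have h1 : ((((s + 1 : ℕ) : ℤ)) - 1) = (s : ℤ) := by push_cast; ring
      rw [h1, zpow_natCast, ← mul_sub]
      have hd' : (1 : ℝ) ≤ d := by exact_mod_cast hd
      have hn0 : (0 : ℝ) ≤ n := by positivity
      have h2 : ((n + 1 : ℕ) : ℝ) ^ s ≤ ((n + d : ℕ) : ℝ) ^ s := by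
        gcongr
      have h3 : (n : ℝ) ^ s ≤ ((n + d : ℕ) : ℝ) ^ s := by
        gcongr; push_cast; linarith
      have h5 : (0 : ℝ) ≤ ((n + 1 : ℕ) : ℝ) ^ s := by positivity
      have h4 : ((n + 1 : ℕ) : ℝ) ^ s ≤ ((n + d : ℕ) : ℝ) ^ (s + 1) - (n : ℝ) ^ (s + 1) := by
        rw [pow_succ, pow_succ]
        push_cast at *
        nlinarith
      nlinarith [le_abs_self a, abs_nonneg a]
  obtain ⟨b, n2, hb, hr⟩ := key
  obtain ⟨K, hK, hf⟩ := growth (fun n => f n) (fun n => b * (n : ℝ) ^ s) d n2 hd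
    (fun n => by positivity) (fun n => by positivity) (fun n hn => by
      have h1 := hr n hn
      have h2 : (f (n + d) : ℝ) ≤ f n + r (n + 1) := by exact_mod_cast h n
      change (f (n + d) : ℝ) ≤ f n + (b * ((n + d : ℕ) : ℝ) ^ s - b * (n : ℝ) ^ s)
      linarith)
  refine ⟨K + b, ?_⟩
  filter_upwards [eventually_ge_atTop n2, eventually_ge_atTop 1] with n hn h1
  have h1' : (1 : ℝ) ≤ n := by exact_mod_cast h1
  have h2 := hf n hn
  have h3 : ((((s + 1 : ℕ) : ℤ)) - 1) = (s : ℤ) := by push_cast; ring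
  rw [h3, zpow_natCast]
  have h4 : (1 : ℝ) ≤ (n : ℝ) ^ s := one_le_pow₀ h1'
  nlinarith

end CxT
end Part10

section Part11
open CategoryTheory Opposite Filter IsLocalRing
namespace CxT

section BC
variable {A : Type u} [CommRing A] (B : Type u) [CommRing B] [Algebra A B]

/-- base change of matrices -/
abbrev mB {α β : Type} (M : Matrix α β A) : Matrix α β B := M.map (algebraMap A B)

lemma mB_mul {α β γ : Type} [Fintype β] (M : Matrix α β A) (N : Matrix β γ A) :
    mB B (M * N) = mB B M * mB B N := Matrix.map_mul

lemma flatKer [Module.Flat A B] {α β : Type} [Fintype α] [Fintype β] [DecidableEq β] (K : Matrix α β A) (x : β → B)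
    (h : (mB B K).mulVec x = 0) : ∃ (r : ℕ) (a : Fin r → β → A) (b : Fin r → B),
      (∀ l, K.mulVec (a l) = 0) ∧ ∀ j, x j = ∑ l, b l * algebraMap A B (a l j) := by
  classical
  let X : (β → A) →ₗ[A] B := Fintype.linearCombination A x
  have hX : X ∘ₗ K.transpose.mulVecLin = 0 := by
    refine LinearMap.ext fun y => ?_
    rw [LinearMap.comp_apply, Matrix.mulVecLin_apply, Fintype.linearCombination_apply]
    simp only [Matrix.mulVec, dotProduct, Matrix.transpose_apply, Finset.sum_smul]
    rw [Finset.sum_comm]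
    refine Finset.sum_eq_zero fun i _ => ?_
    have h1 := congrFun h i
    simp only [Matrix.mulVec, dotProduct, Matrix.map_apply, Pi.zero_apply] at h1
    have : ∑ j, (K i j * y i) • x j = y i • ∑ j, algebraMap A B (K i j) * x j := by
      rw [Finset.smul_sum]
      refine Finset.sum_congr rfl fun j _ => ?_
      simp only [Algebra.smul_def, map_mul]; ring
    rw [this, h1, smul_zero]
  obtain ⟨r, a, y, h1, h2⟩ := Module.Flat.exists_factorization_of_comp_eq_zero_of_free hX
  refine ⟨r, fun l j => a (Pi.single j 1) l, fun l => y (Finsupp.single l 1), fun l => ?_, fun j => ?_⟩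
  · ext i
    have h3 := LinearMap.congr_fun h2 (Pi.single i 1)
    have h4 := DFunLike.congr_fun h3 l
    rw [LinearMap.comp_apply, Matrix.mulVecLin_apply, Matrix.mulVec_single_one] at h4
    have h5 : K.transpose.col i = ∑ j, K i j • (Pi.single j 1 : β → A) := by
      ext j; simp [Finset.sum_apply, Pi.single_apply]
    rw [h5, map_sum] at h4
    simpa [Matrix.mulVec, dotProduct, Finsupp.finset_sum_apply] using h4
  · have h3 := LinearMap.congr_fun h1 (Pi.single j 1)
    have h4 : X (Pi.single j 1) = x j := by
      simp [X]
    rw [h4, LinearMap.comp_apply] at h3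
    rw [h3]
    conv_lhs => rw [← Finsupp.sum_single (a (Pi.single j 1))]
    rw [Finsupp.sum_fintype _ _ (by simp), map_sum]
    refine Finset.sum_congr rfl fun l _ => ?_
    rw [← Finsupp.smul_single_one, map_smul, Algebra.smul_def, mul_comm]

/-- base change of complexes -/
abbrev Cx.bc (F : Cx A) : Cx B where
  ι := F.ι
  D n := mB B (F.D n)
  hD n := by rw [← mB_mul, F.hD]; exact Matrix.map_zero _ (map_zero _)

lemma Cx.bc_ex [Module.Flat A B] {F : Cx A} (hF : F.Ex) : (F.bc B).Ex := by
  intro n x hx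
  obtain ⟨r, a, b, h1, h2⟩ := flatKer B (F.D n) x hx
  choose y hy using fun l => hF n _ (h1 l)
  refine ⟨fun j => ∑ l, b l * algebraMap A B (y l j), ?_⟩
  ext j
  rw [h2]
  simp only [Matrix.mulVec, dotProduct, Finset.mul_sum, Matrix.map_apply]
  rw [Finset.sum_comm]
  refine Finset.sum_congr rfl fun l _ => ?_
  rw [hy l]
  simp only [Matrix.mulVec, dotProduct, map_sum, map_mul, Finset.mul_sum]
  refine Finset.sum_congr rfl fun l _ => by ring

end BC

section Real
open DirectSum
variable {B : Type u} [CommRing B] {P : Cx B}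

lemma act_smul_one {α : Type} [Fintype α] [DecidableEq α] {Y : Type u} [AddCommGroup Y] [Module B Y]
    (a : B) (u : α → Y) : act (a • (1 : Matrix α α B)) u = a • u := by
  funext i
  rw [act_apply]
  simp [Matrix.one_apply, Finset.sum_ite_eq']

lemma kill_coh (hP : P.Ex) (a : B) (ha : ∀ y : P.Ck, a • y = 0) {Y : Type u} [AddCommGroup Y] [Module B Y]
    (n : ℕ) (u : P.ι (n + 1) → Y) (hu : u ∈ Zc P.D Y (n + 1)) : a • u ∈ Bc P.D Y (n + 1) := by
  obtain ⟨k, -, hk⟩ := Cx.null_zero (E := P) hP (fun j => a • 1) (by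
    intro j; simp) (by rw [act_smul_one]; funext i; exact ha _)
  refine ⟨act (k n) u, ?_⟩
  have h1 := congrArg (fun M => act M u) (hk n)
  simp only [act_add, act_mul, mem_Zc.1 hu, map_zero, add_zero] at h1
  rw [← h1, act_smul_one]

variable {A : Type u} [CommRing A] [Algebra A B] [Module.Flat A B] {c : ℕ} (pk : OpPkg B c)

lemma realize (hP : P.Ex) (J : Ideal B) (hJ : ∀ a ∈ J, ∀ y : P.Ck, a • y = 0)
    (hres : ∀ b : B, ∃ a : A, b - algebraMap A B a ∈ J) (F : Cx A)
    (e d : ℕ) (hd : d = 2 * e) (p : MvPolynomial (Fin c) B) (hp : p.IsHomogeneous e) :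
    ∃ (G0 : Matrix (F.ι 0) (F.ι d) A) (G1 : Matrix (F.ι 1) (F.ι (d + 1)) A),
      F.D 0 * G1 = G0 * F.D d ∧
      ∀ (m : ℕ) (v : ∀ j, Matrix (F.ι j) (P.ι (m + (j + 1))) B),
        Cx.CM (F.bc B) (P.shift m).sh v → ∃ hu hz,
        rh pk P (F.bc B).Ck p (lof B ℕ (fun n => Coh P.D (F.bc B).Ck n) (m + (0 + 1))
          (cls (act (v 0) (F.bc B).ep) hu)) =
        lof B ℕ (fun n => Coh P.D (F.bc B).Ck n) (m + (d + 1))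
          (cls (act (mB B G0 * v d) (F.bc B).ep) hz) := by
  classical
  let X := (F.bc B).Ck
  have hep : (F.bc B).ep ∈ Zc (F.bc B).D X 0 := by
    rw [mem_Zc]; exact Cx.act_D_ep _
  obtain ⟨y, hy⟩ : ∃ y : Coh (F.bc B).D X d, rh pk (F.bc B) X p
      (lof B ℕ (fun n => Coh (F.bc B).D X n) 0 (cls _ hep)) =
      lof B ℕ (fun n => Coh (F.bc B).D X n) d y := by
    have := rho_homog (TT_opComm pk (F.bc B) X) e p hp 0 (cls _ hep)
    rw [show 0 + 2 * e = d by omega] at this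
    exact this
  obtain ⟨z, hz, rfl⟩ := cls_surj y
  obtain ⟨U, rfl⟩ := eps_lift _ z
  have hz' := mem_Zc.1 hz
  rw [← act_mul, eps_zero] at hz'
  obtain ⟨V, hV⟩ := hz'
  -- the linear system
  let K : Matrix (F.ι 0 × F.ι (d + 1)) ((F.ι 0 × F.ι d) ⊕ (F.ι 1 × F.ι (d + 1))) A :=
    Matrix.of fun ij s => Sum.elim (fun q => if q.1 = ij.1 then F.D d q.2 ij.2 else 0)
      (fun q => if q.2 = ij.2 then - F.D 0 ij.1 q.1 else 0) s
  have hK : ∀ (x : ((F.ι 0 × F.ι d) ⊕ (F.ι 1 × F.ι (d + 1))) → A), K.mulVec x = 0 →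
      F.D 0 * Matrix.of (fun i j => x (Sum.inr (i, j))) =
        Matrix.of (fun i j => x (Sum.inl (i, j))) * F.D d := by
    intro x hx
    ext i j
    have := congrFun hx (i, j)
    simp only [Matrix.mulVec, dotProduct, K, Matrix.of_apply, Fintype.sum_sum_type, Sum.elim_inl,
      Sum.elim_inr, Fintype.sum_prod_type, ite_mul, zero_mul, Pi.zero_apply] at this
    rw [Finset.sum_comm' (t' := Finset.univ) (s' := fun _ => Finset.univ) (by simp)] at this
    simp only [Finset.sum_ite_eq', Finset.mem_univ, if_true, neg_mul, Finset.sum_neg_distrib] at this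
    rw [Matrix.mul_apply, Matrix.mul_apply]
    simp only [Matrix.of_apply]
    rw [add_neg_eq_zero] at this
    rw [← this]
    exact Finset.sum_congr rfl fun _ _ => mul_comm _ _
  obtain ⟨r, a, b, h1, h2⟩ := flatKer B K (Sum.elim (fun q => U q.1 q.2) (fun q => V q.1 q.2)) (by
    ext ⟨i, j⟩
    have := congrFun (congrFun hV i) j
    rw [Matrix.mul_apply, Matrix.mul_apply] at this
    simp only [Matrix.mulVec, dotProduct, K, Matrix.map_apply, Matrix.of_apply, Fintype.sum_sum_type, Sum.elim_inl,
      Sum.elim_inr, Fintype.sum_prod_type, Pi.zero_apply, apply_ite (algebraMap A B), map_neg, map_zero,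
      ite_mul, zero_mul]
    rw [Finset.sum_comm' (t' := Finset.univ) (s' := fun _ => Finset.univ) (by simp)]
    simp only [Finset.sum_ite_eq', Finset.mem_univ, if_true, neg_mul, Finset.sum_neg_distrib]
    rw [add_neg_eq_zero]
    refine Eq.trans ?_ this
    exact Finset.sum_congr rfl fun _ _ => mul_comm _ _)
  choose a' ha' using fun l => hres (b l)
  let Ul : Fin r → Matrix (F.ι 0) (F.ι d) A := fun l => Matrix.of fun i j => a l (Sum.inl (i, j))
  let Vl : Fin r → Matrix (F.ι 1) (F.ι (d + 1)) A := fun l => Matrix.of fun i j => a l (Sum.inr (i, j))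
  have hUV : ∀ l, F.D 0 * Vl l = Ul l * F.D d := fun l => hK _ (h1 l)
  have hU : U = mB B (∑ l, a' l • Ul l) + ∑ l, (b l - algebraMap A B (a' l)) • mB B (Ul l) := by
    ext i j
    have := h2 (Sum.inl (i, j))
    simp only [Sum.elim_inl] at this
    rw [this, Matrix.add_apply]
    change _ = algebraMap A B ((∑ l, a' l • Ul l) i j) + _
    rw [Matrix.sum_apply, Matrix.sum_apply, map_sum, ← Finset.sum_add_distrib]
    refine Finset.sum_congr rfl fun l _ => ?_
    simp only [Matrix.smul_apply, smul_eq_mul, map_mul, Matrix.map_apply, Ul, Matrix.of_apply]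
    ring
  refine ⟨∑ l, a' l • Ul l, ∑ l, a' l • Vl l, ?_, fun m v hv => ?_⟩
  · rw [Matrix.mul_sum, Matrix.sum_mul]
    refine Finset.sum_congr rfl fun l _ => ?_
    rw [Matrix.mul_smul, Matrix.smul_mul, hUV]
  · obtain ⟨hu', hz', h3⟩ := pull_rh pk m v hv p 0 d _ hep _ hz hy
    have hl : ∀ l, act (mB B (Ul l) * v d) (F.bc B).ep ∈ Zc P.D X (m + (d + 1)) := by
      intro l
      have h5 : mB B (F.D d) * v (d + 1) = v d * P.D (m + (d + 1)) := hv d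
      rw [mem_Zc, ← act_mul, Matrix.mul_assoc, ← h5, ← Matrix.mul_assoc, ← mB_mul, ← hUV, mB_mul,
        Matrix.mul_assoc]
      exact (eps_zero _ _).2 ⟨_, rfl⟩
    have hB : act (v d) (act U (F.bc B).ep) - act (mB B (∑ l, a' l • Ul l) * v d) (F.bc B).ep ∈
        Bc P.D X (m + (d + 1)) := by
      have h4 : act (v d) (act U (F.bc B).ep) - act (mB B (∑ l, a' l • Ul l) * v d) (F.bc B).ep =
          ∑ l, (b l - algebraMap A B (a' l)) • act (mB B (Ul l) * v d) (F.bc B).ep := by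
        rw [← act_mul, ← act_sub, ← Matrix.sub_mul]
        rw [show U - mB B (∑ l, a' l • Ul l) = _ from sub_eq_of_eq_add' hU, Matrix.sum_mul]
        funext j
        simp only [act_apply, Finset.sum_apply, Matrix.sum_apply, Finset.sum_smul, Pi.smul_apply,
          Finset.smul_sum, Matrix.smul_mul, Matrix.smul_apply, smul_assoc]
        rw [Finset.sum_comm]
      rw [h4]
      exact Submodule.sum_mem _ fun l _ => kill_coh hP _ (hJ _ (ha' l)) (m + d) _ (hl l)
    have hz'' : act (mB B (∑ l, a' l • Ul l) * v d) (F.bc B).ep ∈ Zc P.D X (m + (d + 1)) := by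
      have h6 : Bc P.D X (m + (d + 1)) ≤ Zc P.D X (m + (d + 1)) := by
        rintro _ ⟨w, rfl⟩
        rw [mem_Zc]
        have h7 : P.D (m + d) * P.D (m + (d + 1)) = 0 := P.hD (m + d)
        have h8 : act (P.D (m + (d + 1))) (act (P.D (m + d)) w) = 0 := by
          rw [← act_mul, h7]; exact act_zero_mat _
        exact h8
      have := sub_mem hz' (h6 hB)
      rwa [sub_sub_cancel] at this
    refine ⟨hu', hz'', h3.trans ?_⟩
    congr 1
    exact cls_eq.2 hB

end Real
end CxT
end Part11

section Part12
open CategoryTheory Opposite Filter IsLocalRing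
namespace CxT

section Gor
variable {B : Type u} [CommRing B] {c : ℕ}

lemma gor (pk : OpPkg B c) (P : Cx B) (hP : P.Ex) : ∃ n0, ∀ n, n0 ≤ n → ∀ {σ : Type} (W : Matrix σ (P.ι (n + 1)) B),
    W * P.D (n + 1) = 0 → ∃ W' : Matrix σ (P.ι n) B, W = W' * P.D n := by
  obtain ⟨n0, h0⟩ := pk.fg P.ι P.D P.hD hP B
  have hT : ∀ i n (u : P.ι n → B), u ∈ Zc P.D B n →
      act (pk.τ i (P.D n) (P.D (n + 1))) u ∈ Bc P.D B (n + 2) := by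
    intro i n u hu
    obtain ⟨k0, k1, hk⟩ := pk.nat i (α := Unit) (β := Empty) (γ := Empty) 0 0 (P.D n) (P.D (n + 1))
      (Matrix.of fun _ j => u j) 0 0 (by simp) (P.hD n) (by
        rw [Matrix.zero_mul]
        ext _ j
        have := congrFun (mem_Zc.1 hu) j
        rw [act_apply] at this
        simpa [Matrix.mul_apply, mul_comm] using this) (by ext x; exact x.elim)
    refine ⟨fun j => k0 () j, ?_⟩
    rw [Matrix.mul_zero, sub_zero, Matrix.zero_mul, add_zero] at hk
    funext j
    have := congrFun (congrFun hk ()) j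
    rw [Matrix.mul_apply, Matrix.mul_apply] at this
    rw [act_apply, act_apply]
    simp only [smul_eq_mul]
    simp only [Matrix.of_apply] at this
    simp only [mul_comm] at this ⊢
    exact this.symm
  have hz : ∀ n, n0 ≤ n → ∀ u ∈ Zc P.D B (n + 2), u ∈ Bc P.D B (n + 2) := by
    intro n hn u hu
    obtain ⟨v, hv, h⟩ := h0 n hn u hu
    have h1 : ∑ i, act (pk.τ i (P.D n) (P.D (n + 1))) (v i) ∈ Bc P.D B (n + 2) :=
      Submodule.sum_mem _ fun i _ => hT i n _ (hv i)
    have := add_mem h h1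
    rwa [sub_add_cancel] at this
  refine ⟨n0 + 1, fun n hn σ W hW => ?_⟩
  obtain ⟨m, rfl⟩ : ∃ m, n = m + 1 := ⟨n - 1, by omega⟩
  have : ∀ s, ∃ w : P.ι (m + 1) → B, act (P.D (m + 1)) w = fun j => W s j := by
    intro s
    obtain ⟨w, hw⟩ := hz m (by omega) (fun j => W s j) (by
      rw [mem_Zc]
      funext j
      rw [act_apply]
      have := congrFun (congrFun hW s) j
      rw [Matrix.mul_apply] at this
      simpa [mul_comm] using this)
    exact ⟨w, hw⟩
  choose W' hW' using this
  refine ⟨Matrix.of W', ?_⟩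
  ext s j
  rw [← congrFun (hW' s) j, act_apply, Matrix.mul_apply]
  simp [mul_comm]

end Gor

section Step
variable {B : Type u} [CommRing B] {P F : Cx B} {δ : ℕ} {G0 : Matrix (F.ι 0) (F.ι (δ + 1)) B}
  {M : Matrix (F.ι 0 ⊕ F.ι δ) (F.ι 1 ⊕ F.ι (δ + 1)) B}

lemma incl_comm (hM : M = Matrix.fromBlocks (F.D 0) G0 0 (-F.D δ)) :
    (Matrix.fromRows 1 0 : Matrix (F.ι 0 ⊕ F.ι δ) (F.ι 0) B) * F.D 0 =
      M * (Matrix.fromRows 1 0 : Matrix (F.ι 1 ⊕ F.ι (δ + 1)) (F.ι 1) B) := by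
  rw [hM, Matrix.fromRows_mul, Matrix.fromBlocks_mul_fromRows]
  simp

/-- the inclusion into the cokernel -/
noncomputable def incl (hM : M = Matrix.fromBlocks (F.D 0) G0 0 (-F.D δ)) : F.Ck →ₗ[B] CkM M :=
  ckMap _ _ (incl_comm hM)

lemma incl_act {σ : Type} (hM : M = Matrix.fromBlocks (F.D 0) G0 0 (-F.D δ)) (U : Matrix (F.ι 0) σ B) :
    (fun j => incl hM (act U F.ep j)) = act (Matrix.fromRows U 0) (eps M) := by
  have := ckMap_act _ _ (incl_comm hM) U
  rw [Matrix.fromRows_mul, Matrix.one_mul, Matrix.zero_mul] at this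
  exact this

lemma step_zero (hM : M = Matrix.fromBlocks (F.D 0) G0 0 (-F.D δ)) (m : ℕ)
    (v : ∀ j, Matrix (F.ι j) (P.ι (m + (j + 1))) B) (hv : Cx.CM F (P.shift m).sh v) :
    (fun j => incl hM (act (G0 * v (δ + 1)) F.ep j)) ∈ Bc P.D (CkM M) (m + (δ + 1 + 1)) := by
  have h1 : F.D δ * v (δ + 1) = v δ * P.D (m + (δ + 1)) := hv δ
  have h2 : act (P.D (m + (δ + 1))) (act (Matrix.fromRows 0 (v δ)) (eps M)) =
      fun j => incl hM (act (G0 * v (δ + 1)) F.ep j) := by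
    rw [incl_act, ← act_mul, ← sub_eq_zero, ← act_sub, eps_zero]
    refine ⟨-Matrix.fromRows 0 (v (δ + 1)), ?_⟩
    rw [hM, Matrix.mul_neg, Matrix.fromBlocks_mul_fromRows, Matrix.fromRows_mul, ← h1]
    ext (i | i) j <;> simp
  exact ⟨_, h2⟩

lemma step_surj (hP : P.Ex) (hF : F.Ex)
    (hgor : ∃ n0, ∀ n, n0 ≤ n → ∀ {σ : Type} (W : Matrix σ (P.ι (n + 1)) B),
      W * P.D (n + 1) = 0 → ∃ W' : Matrix σ (P.ι n) B, W = W' * P.D n)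
    (hM : M = Matrix.fromBlocks (F.D 0) G0 0 (-F.D δ)) (G1 : Matrix (F.ι 1) (F.ι (δ + 1 + 1)) B)
    (hG : F.D 0 * G1 = G0 * F.D (δ + 1))
    (hinj : ∃ n1, ∀ m, n1 ≤ m → ∀ v : ∀ j, Matrix (F.ι j) (P.ι (m + (j + 1))) B,
      Cx.CM F (P.shift m).sh v → act (G0 * v (δ + 1)) F.ep ∈ Bc P.D F.Ck (m + (δ + 1 + 1)) →
      act (v 0) F.ep ∈ Bc P.D F.Ck (m + (0 + 1))) :
    ∃ n2, ∀ n, n2 ≤ n → Function.Surjective (pushC P F.Ck (incl hM) n) := by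
  obtain ⟨n0, h0⟩ := hgor
  obtain ⟨n1, h1⟩ := hinj
  refine ⟨n0 + n1 + (δ + 1), fun n hn y => ?_⟩
  obtain ⟨m, rfl⟩ : ∃ m, n = m + (δ + 1) := ⟨n - (δ + 1), by omega⟩
  obtain ⟨y, hy, rfl⟩ := cls_surj y
  obtain ⟨U, rfl⟩ := eps_lift M y
  have hy' := mem_Zc.1 hy
  rw [← act_mul, eps_zero] at hy'
  obtain ⟨S, hS⟩ := hy'
  obtain ⟨a, w, rfl⟩ : ∃ (a : Matrix (F.ι 0) (P.ι (m + (δ + 1))) B)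
      (w : Matrix (F.ι δ) (P.ι (m + (δ + 1))) B), U = Matrix.fromRows a w :=
    ⟨U.toRows₁, U.toRows₂, (Matrix.fromRows_toRows U).symm⟩
  obtain ⟨s1, s, rfl⟩ : ∃ (a : Matrix (F.ι 1) (P.ι (m + (δ + 1) + 1)) B)
      (w : Matrix (F.ι (δ + 1)) (P.ι (m + (δ + 1) + 1)) B), S = Matrix.fromRows a w :=
    ⟨S.toRows₁, S.toRows₂, (Matrix.fromRows_toRows S).symm⟩
  rw [hM, Matrix.fromBlocks_mul_fromRows, Matrix.fromRows_mul] at hS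
  have hS := Matrix.fromRows_inj hS
  obtain ⟨hS1, hS2⟩ : a * P.D (m + (δ + 1)) = F.D 0 * s1 + G0 * s ∧
      w * P.D (m + (δ + 1)) = - F.D δ * s := by
    simpa using hS
  obtain ⟨v, hv1, hv2, hv⟩ := seq_mid δ (T := fun j => Matrix (F.ι j) (P.ι (m + (j + 1))) B)
    (fun j a b => F.D j * b = a * P.D (m + (j + 1)))
    (by
      intro j a b h
      have h3 : P.D (m + (j + 1)) * P.D (m + (j + 1 + 1)) = 0 := P.hD (m + (j + 1))
      obtain ⟨c, hc⟩ := lift1 (hF j) (b * P.D (m + (j + 1 + 1))) (by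
        rw [← Matrix.mul_assoc, h, Matrix.mul_assoc, h3, Matrix.mul_zero])
      exact ⟨c, hc.symm⟩)
    (by
      intro j hj a b h
      exact h0 (m + (j + 1)) (by omega) (F.D j * a) (by
        have h3 : F.D (j + 1) * b = a * P.D (m + (j + 1) + 1) := h
        rw [Matrix.mul_assoc, ← h3, ← Matrix.mul_assoc, F.hD, Matrix.zero_mul]))
    w (-s) (by rw [hS2]; simp)
  have hx := h1 m (by omega) v hv (by
    refine ⟨-act a F.ep, ?_⟩
    have h3 : act (P.D (m + (δ + 1))) (-act a F.ep) = act (G0 * v (δ + 1)) F.ep := by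
      rw [map_neg, ← act_mul, ← act_neg, ← sub_eq_zero, ← act_sub, eps_zero]
      refine ⟨-s1, ?_⟩
      rw [hv2, hS1]
      simp only [Matrix.mul_neg]
      abel
    exact h3)
  obtain ⟨w', hw'⟩ := hx
  obtain ⟨k, hk⟩ : ∃ k : ∀ j, Matrix (F.ι j) (P.ι (m + j)) B, ∀ j, v j = k j * P.D (m + j) + F.D j * k (j + 1) :=
    Cx.null_one (E := P.shift m) hF v hv w' hw'.symm
  have hk1 : w = k δ * P.D (m + δ) + F.D δ * k (δ + 1) := by rw [← hv1]; exact hk δ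
  have hk2 : -s = k (δ + 1) * P.D (m + (δ + 1)) + F.D (δ + 1) * k (δ + 1 + 1) := by
    rw [← hv2]; exact hk (δ + 1)
  have hk3 : G0 * (k (δ + 1) * P.D (m + (δ + 1))) = - (G0 * s) - F.D 0 * (G1 * k (δ + 1 + 1)) := by
    rw [← sub_eq_of_eq_add hk2, Matrix.mul_sub, Matrix.mul_neg, ← Matrix.mul_assoc (F.D 0), hG,
      ← Matrix.mul_assoc G0]
  have hc : act (a + G0 * k (δ + 1)) F.ep ∈ Zc P.D F.Ck (m + (δ + 1)) := by
    rw [mem_Zc, ← act_mul, Matrix.add_mul, hS1]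
    refine (eps_zero _ _).2 ⟨s1 - G1 * k (δ + 1 + 1), ?_⟩
    rw [Matrix.mul_sub, Matrix.mul_assoc G0]
    refine (congrArg (fun z => F.D 0 * s1 + G0 * s + z) hk3).trans ?_
    abel
  have hc' : (fun i => incl hM (act (a + G0 * k (δ + 1)) F.ep i)) ∈ Zc P.D (CkM M) (m + (δ + 1)) := by
    rw [mem_Zc] at hc ⊢
    rw [act_map, hc]; ext; simp
  refine ⟨cls _ hc, (pushC_cls _ _ _ hc hc').trans (cls_eq.2 ?_)⟩
  have h5 : act (P.D (m + δ)) (- act (Matrix.fromRows 0 (k δ)) (eps M)) =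
      (fun i => incl hM (act (a + G0 * k (δ + 1)) F.ep i)) - act (Matrix.fromRows a w) (eps M) := by
    rw [incl_act, map_neg, ← act_mul, ← act_neg, ← act_sub, ← sub_eq_zero, ← act_sub, eps_zero]
    refine ⟨-Matrix.fromRows 0 (k (δ + 1)), ?_⟩
    rw [Matrix.mul_neg]
    conv_rhs => rw [hM]
    rw [Matrix.fromBlocks_mul_fromRows, Matrix.fromRows_mul, hk1]
    ext (i | i) j
    · simp
    · simp [Matrix.neg_mul]
  exact ⟨_, h5⟩

end Step
end CxT
end Part12

section Part13
open CategoryTheory Opposite Filter IsLocalRing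
namespace CxT

section Z
variable {B : Type u} [CommRing B] [IsLocalRing B]

lemma act_max {α β : Type} [Fintype α] (D : Matrix α β B) (h : ∀ i j, D i j ∈ maximalIdeal B)
    (w : α → ResidueField B) : act D w = 0 := by
  funext j
  rw [act_apply]
  refine Finset.sum_eq_zero fun i _ => ?_
  rw [Algebra.smul_def]
  have : algebraMap B (ResidueField B) (D i j) = 0 := (residue_eq_zero_iff _).2 (h i j)
  rw [this, zero_mul]

/-- all maps to the residue field come from chain maps -/
def QQ (F E : Cx B) : Prop := ∃ n0, ∀ n, n0 ≤ n → ∀ u : E.ι n → ResidueField B,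
  u ∈ Submodule.span B {z | ∃ (V : ∀ j, Matrix (F.ι j) (E.ι j) B) (w : F.ι n → ResidueField B),
    Cx.CM F E V ∧ z = act (V n) w}

lemma QQ_step {c : ℕ} (pk : OpPkg B c) (F E : Cx B) (hE : E.Ex)
    (hm : ∀ n i j, E.D n i j ∈ maximalIdeal B) (h : QQ F E) : QQ F E.sh.sh := by
  obtain ⟨n0, h0⟩ := h
  obtain ⟨n1, h1⟩ := pk.fg E.ι E.D E.hD hE (ResidueField B)
  refine ⟨n0 + n1, fun n hn u => ?_⟩
  obtain ⟨v, -, hv⟩ := h1 n (by omega) u (mem_Zc.2 (act_max (E.D (n + 2)) (hm _) u))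
  have hu : u = ∑ i, act (pk.τ i (E.D n) (E.D (n + 1))) (v i) := by
    obtain ⟨w, hw⟩ := hv
    have : act (E.D (n + 1)) w = 0 := act_max _ (hm _) w
    exact sub_eq_zero.1 (hw.symm.trans this)
  rw [hu]
  refine Submodule.sum_mem _ fun i _ => ?_
  have h2 := Submodule.mem_map_of_mem (f := act (pk.τ i (E.D n) (E.D (n + 1)))) (h0 n (by omega) (v i))
  rw [Submodule.map_span] at h2
  refine Submodule.span_mono ?_ h2
  rintro _ ⟨_, ⟨V, w, hV, rfl⟩, rfl⟩
  refine ⟨fun j => V j * tT pk E i j, w, ?_, (act_mul _ _ _).symm⟩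
  intro j
  have h3 : F.D j * (V (j + 1) * tT pk E i (j + 1)) = V j * tT pk E i j * E.D (j + 2) := by
    rw [← Matrix.mul_assoc, hV j, Matrix.mul_assoc, tT_comm, ← Matrix.mul_assoc]
  exact h3

lemma V_zero (F : Cx B) (hF : F.Ex) (hFm : ∀ n i j, F.D n i j ∈ maximalIdeal B) (E : Cx B)
    (hm : ∀ n i j, E.D n i j ∈ maximalIdeal B)
    (hH : ∀ n, 2 * 0 ≤ n → Zc E.D F.Ck (n + 1) ≤ Bc E.D F.Ck (n + 1))
    (V : ∀ j, Matrix (F.ι j) (E.ι (j + 1 + 1)) B) (hV : Cx.CM F E.sh.sh V) (n : ℕ)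
    (w : F.ι n → ResidueField B) : act (V n) w = 0 := by
  have h4 : F.D 0 * V (0 + 1) = V 0 * E.D (0 + 1 + 1) := hV 0
  have h3 : act (V 0) F.ep ∈ Zc E.D F.Ck (0 + 1 + 1) := by
    rw [mem_Zc, ← act_mul, ← h4]
    exact (eps_zero _ _).2 ⟨_, rfl⟩
  obtain ⟨w', hw'⟩ := hH (0 + 1) (by omega) h3
  obtain ⟨k, hk⟩ : ∃ k : ∀ j, Matrix (F.ι j) (E.ι (j + 1)) B, ∀ j,
      V j = k j * E.D (j + 1) + F.D j * k (j + 1) :=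
    Cx.null_one (E := E.sh) hF V hV w' hw'.symm
  refine act_max _ (fun i j => ?_) w
  rw [hk n, Matrix.add_apply, Matrix.mul_apply, Matrix.mul_apply]
  refine add_mem (Submodule.sum_mem _ fun x _ => Ideal.mul_mem_left _ _ ?_)
    (Submodule.sum_mem _ fun x _ => Ideal.mul_mem_right _ _ ?_)
  · exact hm (n + 1) _ _
  · exact hFm _ _ _

lemma Z_aux {c : ℕ} (pk : OpPkg B c) (F : Cx B) (hF : F.Ex)
    (hFm : ∀ n i j, F.D n i j ∈ maximalIdeal B) (e : ℕ) : ∀ (E : Cx B), E.Ex →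
    (∀ n i j, E.D n i j ∈ maximalIdeal B) → QQ F E →
    (∀ n, 2 * e ≤ n → Zc E.D F.Ck (n + 1) ≤ Bc E.D F.Ck (n + 1)) →
    ∃ n1, ∀ n, n1 ≤ n → IsEmpty (E.ι n) := by
  induction e with
  | zero =>
    intro E hE hm hQ hH
    obtain ⟨n0, h0⟩ := QQ_step pk F E hE hm hQ
    refine ⟨n0 + 2, fun n hn => ?_⟩
    obtain ⟨n, rfl⟩ : ∃ m, n = m + 2 := ⟨n - 2, by omega⟩
    constructor
    intro i
    have h1 := h0 n (by omega) (fun _ => 1)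
    have h2 : Submodule.span B {z | ∃ (V : ∀ j, Matrix (F.ι j) (E.sh.sh.ι j) B)
        (w : F.ι n → ResidueField B), Cx.CM F E.sh.sh V ∧ z = act (V n) w} ≤ ⊥ := by
      rw [Submodule.span_le]
      rintro _ ⟨V, w, hV, rfl⟩
      exact V_zero F hF hFm E hm hH V hV n w
    have h3 := congrFun ((Submodule.mem_bot B).1 (h2 h1)) i
    exact one_ne_zero h3
  | succ e ih =>
    intro E hE hm hQ hH
    obtain ⟨n1, h1⟩ := ih E.sh.sh hE.sh.sh (fun n => hm (n + 2)) (QQ_step pk F E hE hm hQ)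
      (fun n hn => hH (n + 2) (by omega))
    refine ⟨n1 + 2, fun n hn => ?_⟩
    obtain ⟨n, rfl⟩ : ∃ m, n = m + 2 := ⟨n - 2, by omega⟩
    exact h1 n (by omega)

lemma Z_thm [IsNoetherianRing B] {c : ℕ} (pk : OpPkg B c) (F : Cx B) (hF : F.Ex)
    (hFm : ∀ n i j, F.D n i j ∈ maximalIdeal B) (P : Cx B) (hP : P.Ex)
    (eP : P.Ck ≃ₗ[B] ResidueField B)
    (h : ∃ n0, ∀ n, n0 ≤ n → ∀ x : Coh P.D F.Ck n, x = 0) :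
    ∃ n1, ∀ n, n1 ≤ n → IsEmpty (F.ι n) := by
  obtain ⟨n0, h0⟩ := h
  have h1 : ∀ n > n0, EV B (ResidueField B) F.Ck n := by
    intro n hn
    obtain ⟨n, rfl⟩ : ∃ m, n = m + 1 := ⟨n - 1, by omega⟩
    refine (bridge P.D P.hD hP (eP.toLinearMap ∘ₗ Submodule.mkQ _) ?_ ?_ F.Ck n).2 ?_
    · exact eP.surjective.comp (Submodule.mkQ_surjective _)
    · rw [LinearMap.exact_iff, LinearMap.ker_comp]
      have : eP.toLinearMap.ker = ⊥ := LinearEquiv.ker eP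
      rw [this]
      exact Submodule.ker_mkQ _
    · intro u hu
      exact cls_eq_zero.1 (h0 (n + 1) (by omega) (cls u hu))
  have h2 := zOne n0 h1
  refine Z_aux pk F hF hFm n0 F hF hFm ⟨0, fun n _ u => Submodule.subset_span
    ⟨fun j => 1, u, fun j => by rw [Matrix.one_mul, Matrix.mul_one], (act_one u).symm⟩⟩ ?_
  intro n hn
  exact coh_zero_of_ev F.D F.hD hF F.Ck n (h2 _ (n + 1) (by omega))

end Z
end CxT
end Part13

section Part14
open CategoryTheory Opposite Filter IsLocalRing DirectSum
namespace CxT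

section
variable {B : Type u} [CommRing B]

lemma lift_coh {F P : Cx B} (hF : F.Ex) (m : ℕ) (x : Coh P.D F.Ck (m + (0 + 1))) :
    ∃ v : ∀ j, Matrix (F.ι j) (P.ι (m + (j + 1))) B, Cx.CM F (P.shift m).sh v ∧
      ∃ hu : act (v 0) F.ep ∈ Zc P.D F.Ck (m + (0 + 1)), x = cls (act (v 0) F.ep) hu := by
  obtain ⟨u, hu, rfl⟩ := cls_surj x
  obtain ⟨U, rfl⟩ := eps_lift (F.D 0) u
  obtain ⟨v, hv, rfl⟩ := Cx.exists_lift (E := (P.shift m).sh) hF U (mem_Zc.1 hu)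
  exact ⟨v, hv, hu, rfl⟩

lemma ck_ext {F : Cx B} {Y : Type u} [AddCommGroup Y] [Module B Y] (f g : F.Ck →ₗ[B] Y)
    (h : (fun i => f (F.ep i)) = fun i => g (F.ep i)) : f = g := by
  ext i
  exact congrFun h i

lemma ckMap_ep {α β : Type} [Fintype α] [DecidableEq α] [Fintype β]
    {α' β' : Type} [Fintype α'] [DecidableEq α'] [Fintype β'] {M : Matrix α β B}
    {M' : Matrix α' β' B} (Φ : Matrix α' α B)
    (Φ1 : Matrix β' β B) (h : Φ * M = M' * Φ1) :
    (fun j => ckMap Φ Φ1 h (eps M j)) = act Φ (eps M') := by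
  have := ckMap_act Φ Φ1 h (1 : Matrix α α B)
  rwa [act_one, Matrix.mul_one] at this

lemma pushC_id {E : Cx B} {Y : Type u} [AddCommGroup Y] [Module B Y] (n : ℕ) (x : Coh E.D Y n) :
    pushC E Y LinearMap.id n x = x := by
  obtain ⟨u, hu, rfl⟩ := cls_surj x
  rfl

end

section
variable {A : Type u} [CommRing A] (B : Type u) [CommRing B] [Algebra A B]

/-- maps given by a matrix over `A` -/
def IsA (F K : Cx A) (g : (F.bc B).Ck →ₗ[B] (K.bc B).Ck) : Prop :=
  ∃ (Φ : Matrix (K.ι 0) (F.ι 0) A) (Φ1 : Matrix (K.ι 1) (F.ι 1) A), Φ * F.D 0 = K.D 0 * Φ1 ∧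
    (fun i => g ((F.bc B).ep i)) = act (mB B Φ) (K.bc B).ep

variable {B}

lemma mB_one {α : Type} [DecidableEq α] : mB B (1 : Matrix α α A) = 1 :=
  Matrix.map_one _ (map_zero _) (map_one _)

lemma mB_sub {α β : Type} (M N : Matrix α β A) : mB B (M - N) = mB B M - mB B N :=
  Matrix.map_sub _ (map_sub _) M N

lemma IsA.act_eq {F K : Cx A} {g : (F.bc B).Ck →ₗ[B] (K.bc B).Ck} {Φ : Matrix (K.ι 0) (F.ι 0) A}
    (h : (fun i => g ((F.bc B).ep i)) = act (mB B Φ) (K.bc B).ep) {σ : Type} [Fintype σ]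
    (U : Matrix (F.ι 0) σ B) :
    (fun j => g (act U (F.bc B).ep j)) = act (mB B Φ * U) (K.bc B).ep := by
  rw [act_mul, ← h, act_map]

lemma IsA.comp {F K L : Cx A} {g : (F.bc B).Ck →ₗ[B] (K.bc B).Ck}
    {h : (K.bc B).Ck →ₗ[B] (L.bc B).Ck} (hg : IsA B F K g) (hh : IsA B K L h) :
    IsA B F L (h ∘ₗ g) := by
  obtain ⟨Φ, Φ1, h1, h2⟩ := hg
  obtain ⟨Ψ, Ψ1, h3, h4⟩ := hh
  refine ⟨Ψ * Φ, Ψ1 * Φ1, ?_, ?_⟩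
  · rw [Matrix.mul_assoc, h1, ← Matrix.mul_assoc, h3, Matrix.mul_assoc]
  · rw [mB_mul]
    rw [← IsA.act_eq h4, ← h2]
    rfl

lemma bcComm {F K : Cx A} (Φ : Matrix (K.ι 0) (F.ι 0) A) (Φ1 : Matrix (K.ι 1) (F.ι 1) A)
    (h : Φ * F.D 0 = K.D 0 * Φ1) : mB B Φ * (F.bc B).D 0 = (K.bc B).D 0 * mB B Φ1 := by
  have := congrArg (mB B) h
  rwa [mB_mul, mB_mul] at this

lemma isA_ckMap {F K : Cx A} (Φ : Matrix (K.ι 0) (F.ι 0) A) (Φ1 : Matrix (K.ι 1) (F.ι 1) A)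
    (h : Φ * F.D 0 = K.D 0 * Φ1) : IsA B F K (ckMap _ _ (bcComm Φ Φ1 h)) :=
  ⟨Φ, Φ1, h, ckMap_ep _ _ _⟩

/-- comparison between two resolutions -/
lemma compare {C K : Cx A} (hC : C.Ex) (hK : K.Ex) (e : C.Ck ≃ₗ[A] K.Ck) :
    ∃ (a : (C.bc B).Ck →ₗ[B] (K.bc B).Ck) (b : (K.bc B).Ck →ₗ[B] (C.bc B).Ck),
      IsA B C K a ∧ a ∘ₗ b = LinearMap.id := by
  obtain ⟨ψ, φ, hψ, hφ, -, k, hk⟩ := Cx.homotopy_equiv hC hK e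
  refine ⟨_, ckMap _ _ (bcComm (φ 0) (φ 1) (hφ 0).symm),
    isA_ckMap (ψ 0) (ψ 1) (hψ 0).symm, ?_⟩
  refine ck_ext _ _ ?_
  have h1 := ckMap_ep _ _ (bcComm (B := B) (φ 0) (φ 1) (hφ 0).symm)
  have h2 := ckMap_act _ _ (bcComm (B := B) (ψ 0) (ψ 1) (hψ 0).symm) (mB B (φ 0))
  rw [← h1] at h2
  refine h2.trans ?_
  have h3 : act (mB B (ψ 0) * mB B (φ 0) - 1) (K.bc B).ep = 0 := by
    refine (eps_zero _ _).2 ⟨mB B k, ?_⟩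
    rw [← mB_mul, ← mB_mul, ← hk, mB_sub, mB_one]
  rw [act_sub, sub_eq_zero, act_one] at h3
  exact h3

end

section
variable {A : Type u} [CommRing A] [IsLocalRing A] [IsNoetherianRing A] {B : Type u} [CommRing B]
  [Algebra A B] [Module.Flat A B] [IsNoetherianRing B] {P : Cx B} {c : ℕ} (pk : OpPkg B c)

theorem step (hP : P.Ex) (J : Ideal B) (hJ : ∀ a ∈ J, ∀ y : P.Ck, a • y = 0)
    (hres : ∀ b : B, ∃ a, b - algebraMap A B a ∈ J) (X : MR A) :
    ∃ (δ : ℕ) (θ : MvPolynomial (Fin c) B) (K : MR A) (g : (X.cx.bc B).Ck →ₗ[B] (K.cx.bc B).Ck),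
      IsA B X.cx K.cx g ∧ (∃ n2, ∀ n, n2 ≤ n → Function.Surjective (pushC P _ g n)) ∧
      (∀ m (x : Coh P.D (X.cx.bc B).Ck (m + (0 + 1))),
        push g (rh pk P _ θ (lof B ℕ (fun n => Coh P.D (X.cx.bc B).Ck n) (m + (0 + 1)) x)) = 0) ∧
      (∃ n0, ∀ n, n0 ≤ n → ∀ x : Coh P.D (X.cx.bc B).Ck n,
        rh pk P _ θ (lof B ℕ (fun n => Coh P.D (X.cx.bc B).Ck n) n x) = 0 → x = 0) ∧
      ∀ R : MR A, Nonempty (R.cx.Ck ≃ₗ[A] K.cx.Ck) → ∀ n, X.b (n + (δ + 1)) ≤ X.b n + R.b (n + 1) := by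
  have hX := X.cxEx
  have hXB : (X.cx.bc B).Ex := Cx.bc_ex B hX
  obtain ⟨e, θ, n0, he, hθ, hreg⟩ := exists_filterRegular (TT_opComm pk P (X.cx.bc B).Ck)
    (EP_noeth pk P (X.cx.bc B).Ck hP)
  obtain ⟨e, rfl⟩ : ∃ e', e = e' + 1 := ⟨e - 1, by omega⟩
  obtain ⟨δ, hδ⟩ : ∃ δ, δ + 1 = 2 * (e + 1) := ⟨2 * e + 1, by ring⟩
  obtain ⟨G0, G1, hG, hr⟩ := realize pk hP J hJ hres X.cx (e + 1) (δ + 1) hδ θ hθ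
  have hGB : (X.cx.bc B).D 0 * mB B G1 = mB B G0 * (X.cx.bc B).D (δ + 1) := by
    have := congrArg (mB B) hG
    rwa [mB_mul, mB_mul] at this
  obtain ⟨G, hGc, rfl⟩ : ∃ G : ∀ j, Matrix (X.cx.ι j) (X.cx.ι (δ + (j + 1))) A,
      X.cx.CM (X.cx.shift δ).sh G ∧ G 0 = G0 := Cx.exists_lift (E := (X.cx.shift δ).sh) hX G0 (by
    have h1 : act (G0 * X.cx.D (δ + 1)) X.cx.ep = 0 := by
      rw [← hG]; exact (eps_zero _ _).2 ⟨_, rfl⟩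
    rw [act_mul] at h1
    exact h1)
  have hCex := Cx.cone_ex hX δ G hGc
  obtain ⟨K, ⟨eK⟩⟩ := MR.exists (A := A) (M := (X.cx.cone δ G hGc).Ck)
  obtain ⟨a, b, ha, hab⟩ := compare (B := B) hCex K.cxEx eK.symm
  have hM : ((X.cx.cone δ G hGc).bc B).D 0 =
      Matrix.fromBlocks ((X.cx.bc B).D 0) (mB B (G 0)) 0 (-(X.cx.bc B).D δ) := by
    refine (Matrix.fromBlocks_map _ _ _ _ _).trans ?_
    congr 1
    · exact Matrix.map_zero _ (map_zero _)
    · ext i j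
      exact map_neg (algebraMap A B) _
  have hincl : IsA B X.cx (X.cx.cone δ G hGc) (incl hM) := by
    refine ⟨Matrix.fromRows 1 0, Matrix.fromRows 1 0, incl_comm rfl, ?_⟩
    have := incl_act (F := X.cx.bc B) hM (1 : Matrix (X.cx.ι 0) (X.cx.ι 0) B)
    rw [act_one] at this
    refine this.trans ?_
    congr 2
    refine (Eq.trans ?_ (Matrix.fromRows_map _ _ _).symm)
    rw [Matrix.map_zero _ (map_zero _)]
    exact congrArg (fun z => Matrix.fromRows z 0) mB_one.symm
  refine ⟨δ, θ, K, a ∘ₗ incl hM, hincl.comp ha, ?_, ?_, ⟨n0, hreg⟩, ?_⟩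
  · obtain ⟨n2, h2⟩ := step_surj hP hXB (gor pk P hP) hM (mB B G1) hGB ⟨n0, fun m hm v hv hb => by
        obtain ⟨hu, hz, h⟩ := hr m v hv
        have h3 := cls_eq_zero (hu := hz).2 hb
        rw [h3, map_zero] at h
        exact cls_eq_zero.1 (hreg _ (by omega) _ h)⟩
    refine ⟨n2, fun n hn y => ?_⟩
    obtain ⟨x, hx⟩ := h2 n hn (pushC P _ b n y)
    refine ⟨x, ?_⟩
    rw [pushC_comp]
    refine (congrArg _ hx).trans ?_
    rw [← pushC_comp, hab, pushC_id]
  · intro m x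
    obtain ⟨v, hv, hu, rfl⟩ := lift_coh hXB m x
    obtain ⟨hu, hz, h⟩ := hr m v hv
    have h4 := step_zero hM m v hv
    have h5 : pushC P _ (incl hM) _ (cls _ hz) = 0 := cls_eq_zero.2 h4
    rw [h, push_lof, pushC_comp]
    refine (congrArg _ ((congrArg _ h5).trans (map_zero _))).trans (map_zero _)
  · rintro R ⟨eR⟩ n
    exact betti_le X R δ G hGc ((eR.trans eK).symm) n

end
end CxT
end Part14

section Part15
open CategoryTheory Opposite Filter IsLocalRing DirectSum
namespace CxT

section
variable {A : Type u} [CommRing A] [IsLocalRing A] {B : Type u} [CommRing B] [IsLocalRing B]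
  [Algebra A B] [Module.Flat A B] [IsNoetherianRing B] {P : Cx B} {c : ℕ}

lemma zMR (pk : OpPkg B c) (hP : P.Ex) (eP : P.Ck ≃ₗ[B] ResidueField B)
    (hloc : ∀ a ∈ maximalIdeal A, algebraMap A B a ∈ maximalIdeal B) (X : MR A) (s : ℕ)
    (h : ∃ n0, ∀ n, n0 ≤ n → ∀ x : Coh P.D (X.cx.bc B).Ck n, x = 0) :
    ComplexityTest.HasComplexityLE A X.cx.Ck s := by
  obtain ⟨n1, h1⟩ := Z_thm pk (X.cx.bc B) (Cx.bc_ex B X.cxEx)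
    (fun n i j => hloc _ (X.min n i j)) P hP eP h
  refine (hcl_iff s).2 ⟨X, ⟨LinearEquiv.refl _ _⟩, 0, ?_⟩
  filter_upwards [eventually_ge_atTop n1] with n hn
  have : X.b n = 0 := by
    by_contra hb
    exact (h1 n hn).false (⟨0, Nat.pos_of_ne_zero hb⟩ : Fin (X.b n))
  rw [this]; simp

/-- kernel of push forward as a submodule over the operators -/
def kerS (pk : OpPkg B c) {Y Y' : Type u} [AddCommGroup Y] [Module B Y] [AddCommGroup Y'] [Module B Y']
    (f : Y →ₗ[B] Y') :
    letI := rhoModule (TT_opComm pk P Y)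
    Submodule (MvPolynomial (Fin c) B) (EP P Y) :=
  letI := rhoModule (TT_opComm pk P Y)
  { carrier := {x | push (E := P) f x = 0}
    add_mem' := by
      intro a b (ha : push f a = 0) (hb : push f b = 0)
      change push f (a + b) = 0
      rw [map_add, ha, hb, add_zero]
    zero_mem' := map_zero _
    smul_mem' := by
      intro p x (hx : push f x = 0)
      change push f (rh pk P Y p x) = 0
      rw [push_rh, hx, map_zero] }

lemma push_comp {Y Y' Y'' : Type u} [AddCommGroup Y] [Module B Y] [AddCommGroup Y'] [Module B Y']
    [AddCommGroup Y''] [Module B Y'']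
    (f : Y →ₗ[B] Y') (g : Y' →ₗ[B] Y'') (x : EP P Y) : push (g.comp f) x = push g (push f x) := by
  have : push (E := P) (g.comp f) = (push g).comp (push f) := by
    refine DirectSum.linearMap_ext _ fun n => LinearMap.ext fun x => ?_
    simp only [LinearMap.comp_apply]
    rw [push_lof, push_lof, push_lof, pushC_comp]
  rw [this]; rfl

lemma lof_zero {H : ℕ → Type u} [∀ n, AddCommGroup (H n)] [∀ n, Module B (H n)] (n : ℕ) (x : H n)
    (h : lof B ℕ H n x = 0) : x = 0 :=
  DirectSum.of_injective (β := H) n (by rw [map_zero]; exact h)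

variable [IsNoetherianRing A]

theorem tower (pk : OpPkg B c) (hP : P.Ex) (eP : P.Ck ≃ₗ[B] ResidueField B)
    (hloc : ∀ a ∈ maximalIdeal A, algebraMap A B a ∈ maximalIdeal B)
    (hJ : ∀ a ∈ maximalIdeal B, ∀ y : P.Ck, a • y = 0)
    (hres : ∀ b : B, ∃ a, b - algebraMap A B a ∈ maximalIdeal B) (F : MR A) (t : ℕ) (ht : 1 ≤ t)
    (hF : ¬ ComplexityTest.HasComplexityLE A F.cx.Ck (t - 1)) :
    ∃ (X : MR A) (f : (F.cx.bc B).Ck →ₗ[B] (X.cx.bc B).Ck), IsA B F.cx X.cx f ∧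
      (∃ n2, ∀ n, n2 ≤ n → Function.Surjective (pushC P _ f n)) ∧
      ComplexityTest.HasComplexityLE A X.cx.Ck t ∧
      ¬ ComplexityTest.HasComplexityLE A X.cx.Ck (t - 1) := by
  letI := rhoModule (TT_opComm pk P (F.cx.bc B).Ck)
  have hN : IsNoetherian (MvPolynomial (Fin c) B) (EP P (F.cx.bc B).Ck) := EP_noeth pk P _ hP
  suffices H : ∀ (L : Submodule (MvPolynomial (Fin c) B) (EP P (F.cx.bc B).Ck)) (X : MR A)
      (f : (F.cx.bc B).Ck →ₗ[B] (X.cx.bc B).Ck), IsA B F.cx X.cx f →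
      (∃ n2, ∀ n, n2 ≤ n → Function.Surjective (pushC P _ f n)) → L = kerS pk f →
      ¬ ComplexityTest.HasComplexityLE A X.cx.Ck (t - 1) →
      ∃ (X : MR A) (f : (F.cx.bc B).Ck →ₗ[B] (X.cx.bc B).Ck), IsA B F.cx X.cx f ∧
      (∃ n2, ∀ n, n2 ≤ n → Function.Surjective (pushC P _ f n)) ∧
      ComplexityTest.HasComplexityLE A X.cx.Ck t ∧
      ¬ ComplexityTest.HasComplexityLE A X.cx.Ck (t - 1) by
    refine H _ F LinearMap.id ⟨1, 1, by rw [Matrix.one_mul, Matrix.mul_one], ?_⟩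
      ⟨0, fun n _ y => ⟨y, pushC_id _ _⟩⟩ rfl hF
    rw [mB_one, act_one]; rfl
  intro L
  induction L using WellFoundedGT.induction with
  | ind L ih =>
  rintro X f hf ⟨n2, hs⟩ rfl hX
  obtain ⟨δ, θ, K, g, hg, ⟨n3, hs'⟩, hz, ⟨n0, hreg⟩, hb⟩ := step pk hP _ hJ hres X
  by_cases hK : ComplexityTest.HasComplexityLE A K.cx.Ck (t - 1)
  · obtain ⟨R, hR, hbd⟩ := (hcl_iff _).1 hK
    refine ⟨X, f, hf, ⟨n2, hs⟩, (hcl_iff _).2 ⟨X, ⟨LinearEquiv.refl _ _⟩, ?_⟩, hX⟩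
    have := Bd_succ (d := δ + 1) (by omega) (hb R hR) hbd
    rwa [Nat.sub_add_cancel ht] at this
  · refine ih _ (lt_of_le_of_ne ?_ ?_) K (g ∘ₗ f) (hf.comp hg) ⟨n2 + n3, fun n hn y => ?_⟩ rfl hK
    · intro x (hx : push f x = 0)
      change push (g ∘ₗ f) x = 0
      rw [push_comp, hx, map_zero]
    · intro heq
      refine hX (zMR pk hP eP hloc X _ ⟨n0 + n2 + 1, fun n hn x => ?_⟩)
      obtain ⟨m, rfl⟩ : ∃ m, n = m + (0 + 1) := ⟨n - 1, by omega⟩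
      refine hreg _ (by omega) x ?_
      obtain ⟨y, rfl⟩ := hs _ (by omega) x
      rw [← push_lof, ← push_rh]
      have h1 : rh pk P _ θ (lof B ℕ (fun n => Coh P.D (F.cx.bc B).Ck n) (m + (0 + 1)) y) ∈
          kerS (P := P) pk (g ∘ₗ f) := by
        change push (g ∘ₗ f) _ = 0
        rw [push_comp, push_rh, push_lof]
        exact hz _ _
      rw [← heq] at h1
      exact h1
    · obtain ⟨z, rfl⟩ := hs' n (by omega) y
      obtain ⟨w, rfl⟩ := hs n (by omega) z
      exact ⟨w, pushC_comp _ _ _ _⟩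

end

section
variable {A : Type u} [CommRing A] {B : Type u} [CommRing B]
  [Algebra A B] {P : Cx B}

lemma final_zero (F X : Cx A) (d : ℕ) (Φ : Matrix (X.ι 0) (F.ι 0) A) (Φ1 : Matrix (X.ι 1) (F.ι 1) A)
    (hΦ : Φ * F.D 0 = X.D 0 * Φ1) (hZ : Zc F.D X.Ck d ≤ Bc F.D X.Ck d)
    (G0 : Matrix (F.ι 0) (F.ι d) A) (G1 : Matrix (F.ι 1) (F.ι (d + 1)) A)
    (hG : F.D 0 * G1 = G0 * F.D d) (m : ℕ)
    (v : ∀ j, Matrix (F.ι j) (P.ι (m + (j + 1))) B) (hv : Cx.CM (F.bc B) (P.shift m).sh v) :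
    act (mB B Φ * (mB B G0 * v d)) (X.bc B).ep ∈ Bc P.D (X.bc B).Ck (m + (d + 1)) := by
  have h1 : act (Φ * G0) X.ep ∈ Zc F.D X.Ck d := by
    rw [mem_Zc, ← act_mul, Matrix.mul_assoc, ← hG, ← Matrix.mul_assoc, hΦ, Matrix.mul_assoc]
    exact (eps_zero _ _).2 ⟨_, rfl⟩
  have h2 := hZ h1
  rw [← Matrix.mul_assoc, ← mB_mul]
  cases d with
  | zero =>
    have h3 : act (Φ * G0) X.ep = 0 := h2
    obtain ⟨W, hW⟩ := (eps_zero _ _).1 h3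
    have h4 : act (mB B (Φ * G0) * v 0) (X.bc B).ep = 0 := by
      refine (eps_zero _ _).2 ⟨mB B W * v 0, ?_⟩
      rw [hW, mB_mul, Matrix.mul_assoc]
    rw [h4]; exact zero_mem _
  | succ d =>
    obtain ⟨w, hw⟩ := h2
    obtain ⟨H, rfl⟩ := eps_lift (X.D 0) w
    have hw' : act (Φ * G0 - H * F.D d) X.ep = 0 := by
      rw [act_sub, sub_eq_zero, act_mul H]; exact hw.symm
    obtain ⟨W, hW⟩ := (eps_zero _ _).1 hw'
    have h5 : mB B (F.D d) * v (d + 1) = v d * P.D (m + (d + 1)) := hv d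
    have h4 : act (P.D (m + (d + 1))) (act (mB B H * v d) (X.bc B).ep) =
        act (mB B (Φ * G0) * v (d + 1)) (X.bc B).ep := by
      rw [← act_mul, ← sub_eq_zero, ← act_sub]
      refine (eps_zero _ _).2 ⟨-(mB B W * v (d + 1)), ?_⟩
      rw [sub_eq_iff_eq_add.1 hW, Matrix.mul_assoc, ← h5, Matrix.mul_neg, ← Matrix.mul_assoc,
        ← mB_mul, ← Matrix.mul_assoc, ← mB_mul, ← Matrix.sub_mul, ← Matrix.neg_mul, ← mB_sub]
      congr 1
      ext i j
      simp
      exact congrFun (congrFun (mB_mul B (X.D 0) W) i) j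
    exact ⟨_, h4⟩

end

section
variable {A : Type u} [CommRing A] [IsLocalRing A] {B : Type u} [CommRing B] [IsLocalRing B]
  [Algebra A B] [Module.Flat A B] [IsNoetherianRing B] {c : ℕ} [IsNoetherianRing A]

theorem core (pk : OpPkg B c)
    (hloc : ∀ a ∈ maximalIdeal A, algebraMap A B a ∈ maximalIdeal B)
    (hres : ∀ b : B, ∃ a, b - algebraMap A B a ∈ maximalIdeal B)
    (M : Type u) [AddCommGroup M] [Module A M] [Module.Finite A M] (t : ℕ) (ht : 1 ≤ t)
    (h : ∀ (N : Type u) [AddCommGroup N] [Module A N] [Module.Finite A N],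
      ComplexityTest.complexity A N = t → ∃ n : ℕ, Even n ∧ ComplexityTest.extVanish A M n N) :
    ComplexityTest.complexity A M < (t : ℕ∞) := by
  refine complexity_lt ht ?_
  by_contra hM
  obtain ⟨F, ⟨eF⟩⟩ := MR.exists (A := A) (M := M)
  obtain ⟨P0, ⟨eP⟩⟩ := MR.exists (A := B) (M := ResidueField B)
  have hP := P0.cxEx
  have hJ : ∀ a ∈ maximalIdeal B, ∀ y : P0.cx.Ck, a • y = 0 := by
    intro a ha y
    apply eP.injective
    rw [map_smul, map_zero, Algebra.smul_def]
    have : algebraMap B (ResidueField B) a = 0 := (residue_eq_zero_iff _).2 ha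
    rw [this, zero_mul]
  have hF : ¬ ComplexityTest.HasComplexityLE A F.cx.Ck (t - 1) := by
    intro hh
    obtain ⟨R, ⟨e⟩, hb⟩ := (hcl_iff _).1 hh
    exact hM ((hcl_iff _).2 ⟨R, ⟨e.trans eF⟩, hb⟩)
  obtain ⟨X, f, ⟨Φ, Φ1, hΦ, hfΦ⟩, ⟨n2, hs⟩, hXt, hX⟩ := tower pk hP eP hloc hJ hres F t ht hF
  obtain ⟨n, ⟨e, he⟩, hv⟩ := h X.cx.Ck (complexity_eq ht hXt hX)
  have hZ : Zc F.cx.D X.cx.Ck n ≤ Bc F.cx.D X.cx.Ck n := by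
    refine bridge0 F.cx.D F.cx.hD F.cxEx (eF.toLinearMap ∘ₗ Submodule.mkQ _) ?_ ?_ _ n hv
    · exact eF.surjective.comp (Submodule.mkQ_surjective _)
    · rw [LinearMap.exact_iff, LinearMap.ker_comp]
      have : eF.toLinearMap.ker = ⊥ := LinearEquiv.ker eF
      rw [this]
      exact Submodule.ker_mkQ _
  have key : ∀ p : MvPolynomial (Fin c) B, p.IsHomogeneous e → ∀ m
      (x : Coh P0.cx.D (F.cx.bc B).Ck (m + (0 + 1))),
      push f (rh pk P0.cx _ p (lof B ℕ (fun n => Coh P0.cx.D (F.cx.bc B).Ck n) (m + (0 + 1)) x)) = 0 := by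
    intro p hp m x
    obtain ⟨G0, G1, hG, hr⟩ := realize pk hP _ hJ hres F.cx e n (by omega) p hp
    obtain ⟨v, hv, hu, rfl⟩ := lift_coh (Cx.bc_ex B F.cxEx) m x
    obtain ⟨hu, hz, h⟩ := hr m v hv
    rw [h, push_lof]
    have h5 : pushC P0.cx _ f _ (cls _ hz) = 0 := by
      refine cls_eq_zero.2 ?_
      have := final_zero F.cx X.cx n Φ Φ1 hΦ hZ G0 G1 hG m v hv
      rw [← IsA.act_eq hfΦ] at this
      exact this
    exact (congrArg _ h5).trans (map_zero _)
  obtain ⟨n0, h0⟩ := EP_gen (TT_opComm pk P0.cx (X.cx.bc B).Ck) (TT_evGen pk P0.cx _ hP) e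
  refine hX (zMR pk hP eP hloc X _ ⟨n0 + n2 + 1 + 2 * e, fun k hk x => ?_⟩)
  obtain ⟨k, rfl⟩ : ∃ m, k = m + 2 * e := ⟨k - 2 * e, by omega⟩
  have h1 := h0 k (by omega) x
  refine lof_zero _ _ ((Submodule.mem_bot B).1 ((Submodule.span_le.2 ?_ :
    Submodule.span B _ ≤ ⊥) h1))
  rintro _ ⟨p, y, hp, rfl⟩
  obtain ⟨m, rfl⟩ : ∃ m, k = m + (0 + 1) := ⟨k - 1, by omega⟩
  obtain ⟨y, rfl⟩ := hs _ (by omega) y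
  have := key p hp m y
  rw [push_rh, push_lof] at this
  exact this

end
end CxT
end Part15

section Part16
open CategoryTheory Opposite Filter IsLocalRing
namespace CxT

theorem main (A : Type u) [CommRing A] [IsLocalRing A] [IsNoetherianRing A]
    (hA : ComplexityTest.IsCompleteIntersection A)
    (M : Type u) [AddCommGroup M] [Module A M] [Module.Finite A M] (t : ℕ) (ht : 1 ≤ t)
    (h : ∀ (N : Type u) [AddCommGroup N] [Module A N] [Module.Finite A N],
      ComplexityTest.complexity A N = t → ∃ n : ℕ, Even n ∧ ComplexityTest.extVanish A M n N) :
    ComplexityTest.complexity A M < (t : ℕ∞) := by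
  obtain ⟨c, ⟨pk⟩⟩ := ci_pkg A hA
  obtain ⟨Q, _, _, hQ, g, hg, -⟩ := hA
  haveI : IsNoetherianRing Q := hQ.1
  haveI : IsNoetherianRing (ComplexityTest.Completion A) := isNoetherianRing_of_surjective _ _ g hg
  refine core pk ?_ ?_ M t ht h
  · intro a ha
    rw [AdicCompletion.maximalIdeal_eq_map]
    exact Ideal.mem_map_of_mem _ ha
  · intro b
    obtain ⟨x, hx⟩ := (AdicCompletion.residueField_map_bijective A).2 (residue _ b)
    obtain ⟨a, rfl⟩ := residue_surjective x
    refine ⟨a, ?_⟩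
    rw [IsLocalRing.ResidueField.map_residue] at hx
    rw [← residue_eq_zero_iff, map_sub, hx, sub_self]

end CxT
end Part16

/-- **Theorem (complexity testing over complete intersections)**: let `A` be a local
complete intersection of codimension `c`, `M` a finitely generated `A`-module and
`t ∈ {1, …, c}`. If for every `A`-module `N` of complexity `t` there are an odd number
`q` and an even number `n > dim A - depth M` with
`Ext^n_A(M,N) = Ext^{n+q}_A(M,N) = ⋯ = Ext^{n+(c-t)q}_A(M,N) = 0`, then `cx M < t`. -/
theorem complexity_lt_of_gap_extVanish_of_completeIntersection
    (A : Type u) [CommRing A] [IsLocalRing A] [IsNoetherianRing A]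
    (c : ℕ) (hA : IsCompleteIntersection A) (hcodim : HasCodim A c)
    (M : Type u) [AddCommGroup M] [Module A M] [Module.Finite A M]
    (t : ℕ) (ht : 1 ≤ t) (htc : t ≤ c)
    (h : ∀ (N : Type u) [AddCommGroup N] [Module A N] [Module.Finite A N],
      complexity A N = t →
        ∃ q n : ℕ, Odd q ∧ Even n ∧
          ringKrullDim A < (n : WithBot ℕ∞) + (depth A M : WithBot ℕ∞) ∧
          ∀ j : ℕ, j ≤ c - t → extVanish A M (n + j * q) N) :
    complexity A M < (t : ℕ∞) := by
  exact CxT.main A hA M t ht (fun N _ _ _ hN => by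
    obtain ⟨q, n, -, hn, -, hj⟩ := h N hN
    exact ⟨n, hn, by simpa using hj 0 (Nat.zero_le _)⟩)
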